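/- Let n ≥ 2 and let Γ ⊂ ℝⁿ satisfy condition (C) with λ* = (1,−1,…,−1) ∉ ∂Γ. Then every continuous viscosity solution v of λ(A[v]) ∈ ∂Γ in ℝⁿ∖{0} is radially symmetric and non-increasing in the radial direction, i.e. v(x) ≥ v(y) for all x, y ∈ ℝⁿ∖{0} with |x| ≤ |y|. -/

import Mathlib

open Filter Topology MeasureTheory Metric Set
open scoped BigOperators ENNReal NNReal

noncomputable section

/-- `ℝⁿ` with the Euclidean norm. -/
abbrev Euc (n : ℕ) := EuclideanSpace ℝ (Fin n)

/-- The positive cone `Γₙ = {λ : λᵢ > 0 ∀ i}`. -/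
def GammaN (n : ℕ) : Set (Fin n → ℝ) := {lam | ∀ i, 0 < lam i}

/-- Condition (C): `Γ ⊊ ℝⁿ` is a nonempty open symmetric cone with vertex at the origin
satisfying `Γ + Γₙ ⊆ Γ`. -/
def CondC {n : ℕ} (Γ : Set (Fin n → ℝ)) : Prop :=
  Γ.Nonempty ∧ Γ ≠ Set.univ ∧ IsOpen Γ ∧
    (∀ σ : Equiv.Perm (Fin n), ∀ lam ∈ Γ, lam ∘ σ ∈ Γ) ∧
    (∀ lam ∈ Γ, ∀ t : ℝ, 0 < t → t • lam ∈ Γ) ∧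
    (∀ lam ∈ Γ, ∀ mu ∈ GammaN n, lam + mu ∈ Γ)

/-- `λ* = (1, -1, …, -1)`. -/
def lamStar (n : ℕ) : Fin n → ℝ := fun i => if i.val = 0 then 1 else -1

/-- Partial derivative `∂ᵢ v (x)`. -/
def pgrad {n : ℕ} (v : Euc n → ℝ) (x : Euc n) (i : Fin n) : ℝ :=
  fderiv ℝ v x (EuclideanSpace.single i 1)

/-- Second partial derivative `∂ᵢ∂ⱼ v (x)`. -/
def phess {n : ℕ} (v : Euc n → ℝ) (x : Euc n) (i j : Fin n) : ℝ :=
  fderiv ℝ (fun y => fderiv ℝ v y (EuclideanSpace.single j 1)) x (EuclideanSpace.single i 1)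

/-- The Möbius Hessian
`A[v](x) = e^{-2v(x)} (-∇²v + ∇v ⊗ ∇v - ½ |∇v|² I)` as a matrix. -/
def mobius {n : ℕ} (v : Euc n → ℝ) (x : Euc n) : Matrix (Fin n) (Fin n) ℝ :=
  Real.exp (-2 * v x) • Matrix.of fun i j =>
    - phess v x i j + pgrad v x i * pgrad v x j
      - (1 / 2) * (∑ k, (pgrad v x k) ^ 2) * (if i = j then (1 : ℝ) else 0)

/-- The (unordered, permutation-invariant) eigenvalue tuple of the symmetric matrix `M`
belongs to the (permutation-invariant) set `S`. -/
def EigIn {n : ℕ} (M : Matrix (Fin n) (Fin n) ℝ) (S : Set (Fin n → ℝ)) : Prop :=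
  ∃ hM : M.IsHermitian, hM.eigenvalues ∈ S

/-- Viscosity supersolution of `λ(A[v]) ∈ ∂Γ` in `Ω`, i.e. `λ(A[v]) ∈ closure Γ`
in the viscosity sense (for a real-valued `v`). -/
def Supersol {n : ℕ} (Γ : Set (Fin n → ℝ)) (Ω : Set (Euc n)) (v : Euc n → ℝ) : Prop :=
  ∀ x₀ ∈ Ω, ∀ φ : Euc n → ℝ, ContDiff ℝ 2 φ → φ x₀ = v x₀ →
    (∀ᶠ x in 𝓝[Ω] x₀, φ x ≤ v x) → EigIn (mobius φ x₀) (closure Γ)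

/-- Viscosity subsolution of `λ(A[v]) ∈ ∂Γ` in `Ω`, i.e. `λ(A[v]) ∈ ℝⁿ ∖ Γ`
in the viscosity sense (for a real-valued `v`). -/
def Subsol {n : ℕ} (Γ : Set (Fin n → ℝ)) (Ω : Set (Euc n)) (v : Euc n → ℝ) : Prop :=
  ∀ x₀ ∈ Ω, ∀ φ : Euc n → ℝ, ContDiff ℝ 2 φ → φ x₀ = v x₀ →
    (∀ᶠ x in 𝓝[Ω] x₀, v x ≤ φ x) → EigIn (mobius φ x₀) Γᶜ


/-- Diagonal quadratic form in an orthonormal basis. -/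
def dform {n : ℕ} (b : OrthonormalBasis (Fin n) ℝ (Euc n)) (lam : Fin n → ℝ) (h : Euc n) : ℝ :=
  ∑ j, lam j * (inner ℝ (b j) h) ^ 2

/-- Quadratic forms dominating a diagonal form with eigenvalues in the cone. -/
def GG {n : ℕ} (Γ : Set (Fin n → ℝ)) (q : Euc n → ℝ) : Prop :=
  ∃ b : OrthonormalBasis (Fin n) ℝ (Euc n), ∃ lam ∈ Γ, ∀ h, dform b lam h ≤ q h

lemma sum_inner_sq {n : ℕ} (b : OrthonormalBasis (Fin n) ℝ (Euc n)) (h : Euc n) :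
    ∑ j, (inner ℝ (b j) h) ^ 2 = ‖h‖ ^ 2 := by
  have := b.sum_sq_norm_inner_right h
  simpa using this

/-- Weyl monotonicity for increasingly ordered diagonal forms. -/
lemma weyl_mono {n : ℕ} (b b' : OrthonormalBasis (Fin n) ℝ (Euc n)) (lam mu : Fin n → ℝ)
    (hl : Monotone lam) (hm : Monotone mu) (hle : ∀ h, dform b lam h ≤ dform b' mu h) (i : Fin n) :
    lam i ≤ mu i := by
  classical
  by_contra hlt
  push Not at hlt
  -- coefficients on `b j`, `i ≤ j`; equations orthogonal to `b' j`, `i < j`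
  let F : ({j : Fin n // i ≤ j} → ℝ) →ₗ[ℝ] ({j : Fin n // i < j} → ℝ) :=
    { toFun := fun a k => inner ℝ (b' k) (∑ j : {j : Fin n // i ≤ j}, a j • b j)
      map_add' := by
        intro x y; ext k
        simp [add_smul, Finset.sum_add_distrib, inner_add_right]
      map_smul' := by
        intro c x; ext k
        simp only [Pi.smul_apply, smul_eq_mul, mul_smul, ← Finset.smul_sum, inner_smul_right,
          RingHom.id_apply] }
  have hcard : Module.finrank ℝ ({j : Fin n // i < j} → ℝ) <
      Module.finrank ℝ ({j : Fin n // i ≤ j} → ℝ) := by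
    rw [Module.finrank_fintype_fun_eq_card, Module.finrank_fintype_fun_eq_card]
    apply Fintype.card_lt_of_injective_of_notMem
      (fun x : {j : Fin n // i < j} => (⟨x.1, x.2.le⟩ : {j : Fin n // i ≤ j}))
      (b := ⟨i, le_refl i⟩)
    · intro x y hxy
      simpa [Subtype.ext_iff] using hxy
    · rintro ⟨x, hx⟩
      have : x.1 = i := by simpa using hx
      exact absurd x.2 (by rw [this]; exact lt_irrefl _)
  have hker := LinearMap.ker_ne_bot_of_finrank_lt (f := F) hcard
  obtain ⟨a, ha, ha0⟩ := (Submodule.ne_bot_iff _).1 hker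
  set x : Euc n := ∑ j : {j : Fin n // i ≤ j}, a j • b j with hx
  have hb' : ∀ k, i < k → inner ℝ (b' k) x = 0 := by
    intro k hk
    have := congrFun (LinearMap.mem_ker.1 ha) ⟨k, hk⟩
    simpa [F] using this
  have hb1 : ∀ k (hk : i ≤ k), inner ℝ (b k) x = a ⟨k, hk⟩ := by
    intro k hk
    rw [hx, inner_sum]
    rw [Finset.sum_eq_single (⟨k, hk⟩ : {j : Fin n // i ≤ j})]
    · simp [inner_smul_right]
    · intro j _ hj
      rw [inner_smul_right, b.inner_eq_ite, if_neg, mul_zero]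
      intro h; apply hj; ext; simp [h]
    · simp
  have hb2 : ∀ k, ¬ i ≤ k → inner ℝ (b k) x = 0 := by
    intro k hk
    rw [hx, inner_sum]
    apply Finset.sum_eq_zero
    intro j _
    rw [inner_smul_right, b.inner_eq_ite, if_neg, mul_zero]
    intro h; apply hk; rw [h]; exact j.2
  have hx0 : 0 < ‖x‖ ^ 2 := by
    have : x ≠ 0 := by
      intro h0
      apply ha0
      ext ⟨k, hk⟩
      rw [← hb1 k hk, h0]; simp
    positivity
  have h1 : lam i * ‖x‖ ^ 2 ≤ dform b lam x := by
    rw [← sum_inner_sq b x, Finset.mul_sum]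
    apply Finset.sum_le_sum
    intro j _
    by_cases hj : i ≤ j
    · exact mul_le_mul_of_nonneg_right (hl hj) (sq_nonneg _)
    · rw [hb2 j hj]; simp
  have h2 : dform b' mu x ≤ mu i * ‖x‖ ^ 2 := by
    rw [← sum_inner_sq b' x, Finset.mul_sum]
    apply Finset.sum_le_sum
    intro j _
    by_cases hj : j ≤ i
    · exact mul_le_mul_of_nonneg_right (hm hj) (sq_nonneg _)
    · rw [hb' j (not_le.1 hj)]; simp
  have := hle x
  nlinarith

lemma dform_perm {n : ℕ} (b : OrthonormalBasis (Fin n) ℝ (Euc n)) (lam : Fin n → ℝ)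
    (σ : Equiv.Perm (Fin n)) (h : Euc n) :
    dform (b.reindex σ.symm) (lam ∘ σ) h = dform b lam h := by
  simp only [dform, OrthonormalBasis.reindex_apply, Equiv.symm_symm, Function.comp]
  exact Equiv.sum_comp σ (fun j => lam j * (inner ℝ (b j) h) ^ 2)

lemma gamma_add_nonneg {n : ℕ} {Γ : Set (Fin n → ℝ)} (hΓ : CondC Γ) {lam mu : Fin n → ℝ}
    (hl : lam ∈ Γ) (hle : ∀ i, lam i ≤ mu i) : mu ∈ Γ := by
  obtain ⟨-, -, ho, -, -, hadd⟩ := hΓ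
  obtain ⟨ε, hε, hb⟩ := Metric.isOpen_iff.1 ho lam hl
  have h1 : lam - (fun _ => ε / 2) ∈ Γ := by
    apply hb
    rw [mem_ball, dist_eq_norm]
    have : ‖lam - (fun _ => ε / 2) - lam‖ ≤ ε / 2 := by
      rw [pi_norm_le_iff_of_nonneg (by positivity)]
      intro i
      simp [abs_of_pos hε]
    linarith
  have h2 := hadd _ h1 (mu - lam + fun _ => ε / 2) (by
    intro i
    have := hle i
    simp only [Pi.add_apply, Pi.sub_apply]
    linarith)
  convert h2 using 1
  ext i; simp

/-- If a diagonal form is in `GG`, its eigenvalues are in the cone. -/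
lemma GG_dform {n : ℕ} {Γ : Set (Fin n → ℝ)} (hΓ : CondC Γ)
    (b : OrthonormalBasis (Fin n) ℝ (Euc n)) (mu : Fin n → ℝ) (h : GG Γ (dform b mu)) : mu ∈ Γ := by
  obtain ⟨b', lam, hlam, hle⟩ := h
  have hsym := hΓ.2.2.2.1
  have key := weyl_mono (b'.reindex (Tuple.sort lam).symm) (b.reindex (Tuple.sort mu).symm)
    (lam ∘ Tuple.sort lam) (mu ∘ Tuple.sort mu) (Tuple.monotone_sort lam) (Tuple.monotone_sort mu)
    (by intro h; rw [dform_perm, dform_perm]; exact hle h)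
  have h1 : mu ∘ Tuple.sort mu ∈ Γ := gamma_add_nonneg hΓ (hsym (Tuple.sort lam) lam hlam) key
  have h2 := hsym (Tuple.sort mu).symm _ h1
  convert h2 using 1
  ext i; simp

/-- The abstract ellipticity structure. -/
structure Ell {n : ℕ} (G : (Euc n → ℝ) → Prop) : Prop where
  mono : ∀ q q' : Euc n → ℝ, G q → (∀ h, q h ≤ q' h) → G q'
  smul : ∀ (q : Euc n → ℝ) (t : ℝ), 0 < t → G q → G (fun h => t * q h)
  iso : ∀ (q : Euc n → ℝ) (R : Euc n ≃ₗᵢ[ℝ] Euc n), G q → G (fun h => q (R h))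
  opn : ∀ q : Euc n → ℝ, G q → ∃ ε > 0, G (fun h => q h - ε * ‖h‖ ^ 2)
  zero : ¬ G (fun _ => 0)

lemma dform_zero {n : ℕ} (b : OrthonormalBasis (Fin n) ℝ (Euc n)) : dform b 0 = fun _ => 0 := by
  ext h; simp [dform]

lemma zero_notMem {n : ℕ} {Γ : Set (Fin n → ℝ)} (hΓ : CondC Γ) : (0 : Fin n → ℝ) ∉ Γ := by
  intro h0
  obtain ⟨-, hne, ho, -, hc, -⟩ := hΓ
  apply hne
  obtain ⟨ε, hε, hb⟩ := Metric.isOpen_iff.1 ho 0 h0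
  ext x
  simp only [mem_univ, iff_true]
  have hp : 0 < 1 + ‖x‖ := by positivity
  have h1 : (ε / (1 + ‖x‖)) • x ∈ Γ := by
    apply hb
    rw [mem_ball, dist_zero_right, norm_smul, Real.norm_of_nonneg (by positivity)]
    rw [div_mul_eq_mul_div, div_lt_iff₀ hp]
    nlinarith [norm_nonneg x]
  have h2 := hc _ h1 ((1 + ‖x‖) / ε) (by positivity)
  rw [smul_smul] at h2
  convert h2 using 1
  have : (1 + ‖x‖) / ε * (ε / (1 + ‖x‖)) = 1 := by field_simp
  rw [this, one_smul]

lemma GG_ell {n : ℕ} {Γ : Set (Fin n → ℝ)} (hΓ : CondC Γ) : Ell (GG Γ) where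
  mono := by
    rintro q q' ⟨b, lam, hl, h⟩ hle
    exact ⟨b, lam, hl, fun x => (h x).trans (hle x)⟩
  smul := by
    rintro q t ht ⟨b, lam, hl, h⟩
    refine ⟨b, t • lam, hΓ.2.2.2.2.1 lam hl t ht, fun x => ?_⟩
    have : dform b (t • lam) x = t * dform b lam x := by
      simp [dform, Finset.mul_sum, mul_assoc]
    rw [this]
    exact mul_le_mul_of_nonneg_left (h x) ht.le
  iso := by
    rintro q R ⟨b, lam, hl, h⟩
    refine ⟨b.map R.symm, lam, hl, fun x => ?_⟩
    have : dform (b.map R.symm) lam x = dform b lam (R x) := by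
      simp only [dform, OrthonormalBasis.map_apply]
      refine Finset.sum_congr rfl fun j _ => ?_
      congr 2
      rw [← R.inner_map_map, R.apply_symm_apply]
    rw [this]; exact h _
  opn := by
    rintro q ⟨b, lam, hl, h⟩
    obtain ⟨ε, hε, hb⟩ := Metric.isOpen_iff.1 hΓ.2.2.1 lam hl
    refine ⟨ε / 2, by positivity, b, lam - (fun _ => ε / 2), ?_, fun x => ?_⟩
    · apply hb
      rw [mem_ball, dist_eq_norm]
      have : ‖lam - (fun _ => ε / 2) - lam‖ ≤ ε / 2 := by
        rw [pi_norm_le_iff_of_nonneg (by positivity)]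
        intro i
        simp [abs_of_pos hε]
      linarith
    · have : dform b (lam - (fun _ => ε / 2)) x = dform b lam x - ε / 2 * ‖x‖ ^ 2 := by
        rw [← sum_inner_sq b x, Finset.mul_sum]
        simp only [dform, Pi.sub_apply, sub_mul, Finset.sum_sub_distrib]
      rw [this]
      linarith [h x]
  zero := by
    intro h
    have b : OrthonormalBasis (Fin n) ℝ (Euc n) := EuclideanSpace.basisFun (Fin n) ℝ
    rw [← dform_zero b] at h
    exact zero_notMem hΓ (GG_dform hΓ b 0 h)

/-- Continuous quadratic forms. -/
def QF {n : ℕ} (q : Euc n → ℝ) : Prop :=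
  ∃ B : Euc n →L[ℝ] Euc n →L[ℝ] ℝ, ∀ h, q h = B h h

/-- The Möbius Hessian form of the jet `(p, q)` (without the conformal factor). -/
def Aq {n : ℕ} (p : Euc n) (q : Euc n → ℝ) (h : Euc n) : ℝ :=
  - q h + (inner ℝ p h) ^ 2 - 1 / 2 * ‖p‖ ^ 2 * ‖h‖ ^ 2

/-- Upper second order jets. -/
def UpJet {n : ℕ} (v : Euc n → ℝ) (x p : Euc n) (q : Euc n → ℝ) : Prop :=
  ∀ ε > 0, ∀ᶠ h in 𝓝 (0 : Euc n), v (x + h) ≤ v x + inner ℝ p h + 1 / 2 * q h + ε * ‖h‖ ^ 2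

/-- Lower second order jets. -/
def LowJet {n : ℕ} (v : Euc n → ℝ) (x p : Euc n) (q : Euc n → ℝ) : Prop :=
  ∀ ε > 0, ∀ᶠ h in 𝓝 (0 : Euc n), v x + inner ℝ p h + 1 / 2 * q h - ε * ‖h‖ ^ 2 ≤ v (x + h)

/-- Jet subsolutions. -/
def SubJ {n : ℕ} (G : (Euc n → ℝ) → Prop) (Ω : Set (Euc n)) (v : Euc n → ℝ) : Prop :=
  ∀ x ∈ Ω, ∀ p q, QF q → UpJet v x p q → ¬ G (Aq p q)

/-- Jet supersolutions. -/
def SupJ {n : ℕ} (G : (Euc n → ℝ) → Prop) (Ω : Set (Euc n)) (v : Euc n → ℝ) : Prop :=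
  ∀ x ∈ Ω, ∀ p q, QF q → LowJet v x p q → ∀ ε > 0, G (fun h => Aq p q h + ε * ‖h‖ ^ 2)

lemma QF.add {n : ℕ} {q q' : Euc n → ℝ} (h : QF q) (h' : QF q') : QF (fun x => q x + q' x) := by
  obtain ⟨B, hB⟩ := h
  obtain ⟨B', hB'⟩ := h'
  exact ⟨B + B', fun x => by simp [hB, hB']⟩

lemma QF.smul {n : ℕ} {q : Euc n → ℝ} (c : ℝ) (h : QF q) : QF (fun x => c * q x) := by
  obtain ⟨B, hB⟩ := h
  exact ⟨c • B, fun x => by simp [hB]⟩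

lemma QF.inner_mul {n : ℕ} (a b : Euc n) : QF (fun x => inner ℝ a x * inner ℝ b x) := by
  refine ⟨(ContinuousLinearMap.smulRightL ℝ (Euc n) (Euc n →L[ℝ] ℝ) (innerSL ℝ a)) (innerSL ℝ b), fun x => ?_⟩
  simp

lemma QF.norm_sq {n : ℕ} : QF (fun x : Euc n => ‖x‖ ^ 2) :=
  ⟨innerSL ℝ, fun x => (real_inner_self_eq_norm_sq x).symm⟩

lemma QF.comp {n : ℕ} {q : Euc n → ℝ} (h : QF q) (R : Euc n →L[ℝ] Euc n) : QF (fun x => q (R x)) := by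
  obtain ⟨B, hB⟩ := h
  exact ⟨B.bilinearComp R R, fun x => by simp [hB]⟩

lemma QF.congr {n : ℕ} {q q' : Euc n → ℝ} (h : QF q) (h' : ∀ x, q' x = q x) : QF q' := by
  have : q' = q := funext h'
  rwa [this]

lemma QF.zero {n : ℕ} : QF (fun _ : Euc n => 0) := ⟨0, fun x => by simp⟩

/-- The quadratic form of a matrix. -/
def mform {n : ℕ} (M : Matrix (Fin n) (Fin n) ℝ) (h : Euc n) : ℝ :=
  ∑ i, ∑ j, M i j * h i * h j

lemma mform_eq {n : ℕ} (M : Matrix (Fin n) (Fin n) ℝ) (hM : M.IsHermitian) (h : Euc n) :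
    mform M h = dform hM.eigenvectorBasis hM.eigenvalues h := by
  have e1 : mform M h = inner ℝ h (WithLp.toLp 2 (M.mulVec h)) := by
    simp only [mform, PiLp.inner_apply, Matrix.mulVec, dotProduct]
    refine Finset.sum_congr rfl fun i _ => ?_
    simp [Finset.sum_mul]
    refine Finset.sum_congr rfl fun j _ => ?_
    ring
  have e2 : ∀ j, inner ℝ (hM.eigenvectorBasis j) (WithLp.toLp 2 (M.mulVec h)) =
      hM.eigenvalues j * inner ℝ (hM.eigenvectorBasis j) h := by
    intro j
    have h1 := hM.mulVec_eigenvectorBasis j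
    have h2 : inner ℝ (hM.eigenvectorBasis j) (WithLp.toLp 2 (M.mulVec h)) =
      (M.mulVec h) ⬝ᵥ (hM.eigenvectorBasis j).ofLp := by
      simp [EuclideanSpace.inner_eq_star_dotProduct]
    have h3 : inner ℝ (hM.eigenvectorBasis j) h = h.ofLp ⬝ᵥ (hM.eigenvectorBasis j).ofLp := by
      simp [EuclideanSpace.inner_eq_star_dotProduct]
    rw [h2, h3, dotProduct_comm, Matrix.dotProduct_mulVec, ← Matrix.mulVec_transpose]
    have h4 : M.transpose = M := by
      have := hM
      rwa [Matrix.IsHermitian, Matrix.conjTranspose_eq_transpose_of_trivial] at this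
    rw [h4, h1, smul_dotProduct, dotProduct_comm, smul_eq_mul]
  rw [e1, ← hM.eigenvectorBasis.sum_inner_mul_inner, dform]
  refine Finset.sum_congr rfl fun j _ => ?_
  rw [e2, real_inner_comm]; ring

lemma GG_add_closure {n : ℕ} {Γ : Set (Fin n → ℝ)} (hΓ : CondC Γ) {lam mu : Fin n → ℝ}
    (hl : lam ∈ closure Γ) (hm : ∀ i, lam i < mu i) : mu ∈ Γ := by
  have ho : IsOpen {x : Fin n → ℝ | ∀ i, x i < mu i} := by
    simp only [Set.ofPred_forall]
    exact isOpen_iInter_of_finite fun i => isOpen_lt (continuous_apply i) continuous_const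
  obtain ⟨y, hy, hy'⟩ := mem_closure_iff.1 hl _ ho hm
  exact gamma_add_nonneg hΓ hy' fun i => (hy i).le

lemma dform_add_norm {n : ℕ} (b : OrthonormalBasis (Fin n) ℝ (Euc n)) (lam : Fin n → ℝ) (c : ℝ)
    (h : Euc n) : dform b (fun i => lam i + c) h = dform b lam h + c * ‖h‖ ^ 2 := by
  rw [dform, dform, ← sum_inner_sq b h, Finset.mul_sum, ← Finset.sum_add_distrib]
  refine Finset.sum_congr rfl fun j _ => ?_
  ring

lemma GG_pos {n : ℕ} {Γ : Set (Fin n → ℝ)} (hΓ : CondC Γ) (ε : ℝ) (hε : 0 < ε) :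
    GG Γ (fun h => ε * ‖h‖ ^ 2) := by
  obtain ⟨lam, hl⟩ := hΓ.1
  have hc : (0 : Fin n → ℝ) ∈ closure Γ := by
    have ht : Tendsto (fun t : ℝ => t • lam) (𝓝[>] 0) (𝓝 0) := by
      have : Tendsto (fun t : ℝ => t • lam) (𝓝 0) (𝓝 ((0 : ℝ) • lam)) :=
        (continuous_id.smul continuous_const).tendsto 0
      rw [zero_smul] at this
      exact this.mono_left nhdsWithin_le_nhds
    refine mem_closure_of_tendsto ht ?_
    filter_upwards [self_mem_nhdsWithin] with t ht
    exact hΓ.2.2.2.2.1 lam hl t ht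
  refine ⟨EuclideanSpace.basisFun _ _, fun _ => 0 + ε, GG_add_closure hΓ hc (fun i => by simpa using hε), fun h => ?_⟩
  rw [dform_add_norm]
  simp [dform]

/-- quadratic test function -/
def qtest {n : ℕ} (a : ℝ) (x p : Euc n) (B : Euc n →L[ℝ] Euc n →L[ℝ] ℝ) (y : Euc n) : ℝ :=
  a + inner ℝ p (y - x) + 1 / 2 * B (y - x) (y - x)

lemma qtest_contDiff {n : ℕ} (a : ℝ) (x p : Euc n) (B : Euc n →L[ℝ] Euc n →L[ℝ] ℝ) :
    ContDiff ℝ 2 (qtest a x p B) := by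
  unfold qtest
  have h1 : ContDiff ℝ 2 (fun y : Euc n => y - x) := contDiff_id.sub contDiff_const
  have h2 : ContDiff ℝ 2 (fun y : Euc n => B (y - x)) := B.contDiff.comp h1
  exact (contDiff_const.add (contDiff_const.inner ℝ h1)).add (contDiff_const.mul (h2.clm_apply h1))

lemma qtest_fderiv {n : ℕ} (a : ℝ) (x p : Euc n) (B : Euc n →L[ℝ] Euc n →L[ℝ] ℝ) (y w : Euc n) :
    fderiv ℝ (qtest a x p B) y w = inner ℝ p w + 1 / 2 * (B w (y - x) + B (y - x) w) := by
  have h1 : HasFDerivAt (fun y : Euc n => y - x) (ContinuousLinearMap.id ℝ (Euc n)) y :=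
    (hasFDerivAt_id y).sub_const x
  have h2 := (B.hasFDerivAt (x := y - x)).comp y h1
  have h3 := ((innerSL ℝ p).hasFDerivAt (x := y - x)).comp y h1
  have h4 := h2.clm_apply h1
  have h5 : HasFDerivAt (qtest a x p B) _ y := (h3.const_add a).add (h4.const_mul (1/2))
  rw [h5.fderiv]
  simp
  ring

lemma qtest_phess {n : ℕ} (a : ℝ) (x p : Euc n) (B : Euc n →L[ℝ] Euc n →L[ℝ] ℝ) (y : Euc n)
    (i j : Fin n) :
    phess (qtest a x p B) y i j = 1 / 2 * (B (EuclideanSpace.single j 1) (EuclideanSpace.single i 1)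
      + B (EuclideanSpace.single i 1) (EuclideanSpace.single j 1)) := by
  unfold phess
  simp only [qtest_fderiv]
  set w : Euc n := EuclideanSpace.single j 1
  set u : Euc n := EuclideanSpace.single i 1
  have h1 : HasFDerivAt (fun y : Euc n => y - x) (ContinuousLinearMap.id ℝ (Euc n)) y :=
    (hasFDerivAt_id y).sub_const x
  have h2 := ((B w).hasFDerivAt (x := y - x)).comp y h1
  have h3 := ((B.flip w).hasFDerivAt (x := y - x)).comp y h1
  have h4 : HasFDerivAt (fun y => inner ℝ p w + 1 / 2 * (B w (y - x) + B (y - x) w)) _ y :=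
    ((h2.add h3).const_mul (1/2)).const_add (inner ℝ p w)
  rw [h4.fderiv]
  simp
  ring

lemma bil_expand {n : ℕ} (B : Euc n →L[ℝ] Euc n →L[ℝ] ℝ) (h : Euc n) :
    B h h = ∑ i, ∑ j, B (EuclideanSpace.single i 1) (EuclideanSpace.single j 1) * h i * h j := by
  have hh : h = ∑ i, h i • EuclideanSpace.single i (1:ℝ) := by
    have := (EuclideanSpace.basisFun (Fin n) ℝ).sum_repr h
    simpa using this.symm
  conv_lhs => rw [hh]
  simp only [map_sum, map_smul, sum_apply, smul_apply,
    smul_eq_mul]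
  rw [Finset.sum_comm]
  simp only [Finset.mul_sum]
  refine Finset.sum_congr rfl fun i _ => Finset.sum_congr rfl fun j _ => ?_
  ring

lemma qtest_mform {n : ℕ} (a : ℝ) (x p : Euc n) (B : Euc n →L[ℝ] Euc n →L[ℝ] ℝ) (h : Euc n) :
    mform (mobius (qtest a x p B) x) h = Real.exp (-2 * a) * Aq p (fun h => B h h) h := by
  have ha : qtest a x p B x = a := by simp [qtest]
  have hp : ∀ i, pgrad (qtest a x p B) x i = p i := by
    intro i
    simp [pgrad, qtest_fderiv, EuclideanSpace.inner_single_right]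
  have hpn : ∑ k, (p k) ^ 2 = ‖p‖ ^ 2 := by
    rw [EuclideanSpace.norm_sq_eq]; simp
  have hhn : ∑ k, (h k) ^ 2 = ‖h‖ ^ 2 := by
    rw [EuclideanSpace.norm_sq_eq]; simp
  have hin : inner ℝ p h = ∑ i, p i * h i := by
    rw [PiLp.inner_apply]; simp [mul_comm]
  simp only [mform, mobius, ha, Matrix.smul_apply, Matrix.of_apply, hp, qtest_phess, smul_eq_mul, hpn]
  have key : ∀ i j, Real.exp (-2 * a) *
        (-(1 / 2 * (B (EuclideanSpace.single j 1) (EuclideanSpace.single i 1)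
      + B (EuclideanSpace.single i 1) (EuclideanSpace.single j 1))) + p i * p j -
            1 / 2 * ‖p‖ ^ 2 * (if i = j then (1:ℝ) else 0)) * h i * h j =
      Real.exp (-2 * a) * (-(1/2) * (B (EuclideanSpace.single j 1) (EuclideanSpace.single i 1) * h j * h i)
       - (1/2) * (B (EuclideanSpace.single i 1) (EuclideanSpace.single j 1) * h i * h j)
       + (p i * h i) * (p j * h j) - 1 / 2 * ‖p‖ ^ 2 * (if i = j then (h i) ^ 2 else 0)) := by
    intro i j
    split_ifs with hij
    · subst hij; ring
    · ring
  simp only [key, ← Finset.mul_sum, Finset.sum_sub_distrib, Finset.sum_add_distrib, Finset.sum_ite_eq, Finset.mem_univ, if_true]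
  rw [← bil_expand, Finset.sum_comm (f := fun x i => B (EuclideanSpace.single i 1) (EuclideanSpace.single x 1) * h i * h x), ← bil_expand, hhn, Aq, hin, sq (∑ i, p i * h i), Finset.sum_mul_sum]
  simp only [Finset.mul_sum]
  ring

lemma ev_trans {n : ℕ} {P : Euc n → Prop} (x : Euc n) (h : ∀ᶠ h in 𝓝 (0 : Euc n), P (x + h)) :
    ∀ᶠ y in 𝓝 x, P y := by
  have ht : Tendsto (fun y : Euc n => y - x) (𝓝 x) (𝓝 0) := by
    have : Tendsto (fun y : Euc n => y - x) (𝓝 x) (𝓝 (x - x)) :=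
      (continuous_id.sub continuous_const).tendsto x
    rwa [sub_self] at this
  filter_upwards [ht.eventually h] with y hy
  simpa using hy

lemma supJ_of_supersol {n : ℕ} {Γ : Set (Fin n → ℝ)} (hΓ : CondC Γ) {Ω : Set (Euc n)}
    {v : Euc n → ℝ} (hv : Supersol Γ Ω v) : SupJ (GG Γ) Ω v := by
  intro x hx p q hq hj ε hε
  obtain ⟨B, hB⟩ := (hq.add (QF.norm_sq.smul (-(ε/2))) : QF (fun h => q h + (-(ε/2)) * ‖h‖ ^ 2))
  have h1 := hv x hx (qtest (v x) x p B) (qtest_contDiff _ _ _ _) (by simp [qtest]) (by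
    apply Filter.Eventually.filter_mono nhdsWithin_le_nhds
    refine ev_trans x ?_
    filter_upwards [hj (ε/4) (by positivity)] with h hh
    have : qtest (v x) x p B (x + h) = v x + inner ℝ p h + 1 / 2 * (q h + (-(ε/2)) * ‖h‖ ^ 2) := by
      simp only [qtest, add_sub_cancel_left, ← hB h]
    rw [this]; linarith)
  obtain ⟨hM, hE⟩ := h1
  have hc : 0 < Real.exp (-2 * v x) := Real.exp_pos _
  have h2 : GG Γ (fun h => Real.exp (-2 * v x) * (Aq p (fun h => B h h) h) +
     (Real.exp (-2 * v x) / 2 * ε) * ‖h‖ ^ 2) := by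
    refine ⟨hM.eigenvectorBasis, fun i => hM.eigenvalues i + (Real.exp (-2 * v x) / 2 * ε),
      GG_add_closure hΓ hE (fun i => by linarith [show 0 < Real.exp (-2 * v x) / 2 * ε by positivity]), fun h => ?_⟩
    rw [dform_add_norm, ← mform_eq, qtest_mform]
  have h3 := (GG_ell hΓ).smul _ (Real.exp (-2 * v x))⁻¹ (by positivity) h2
  refine (GG_ell hΓ).mono _ _ h3 fun h => ?_
  have : Aq p (fun h => B h h) h = Aq p q h + ε / 2 * ‖h‖ ^ 2 := by
    simp only [Aq, ← hB]; ring
  rw [this]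
  apply le_of_eq
  field_simp
  ring

lemma subJ_of_subsol {n : ℕ} {Γ : Set (Fin n → ℝ)} (hΓ : CondC Γ) {Ω : Set (Euc n)}
    {v : Euc n → ℝ} (hv : Subsol Γ Ω v) : SubJ (GG Γ) Ω v := by
  intro x hx p q hq hj hG
  obtain ⟨ε, hε, hG⟩ := (GG_ell hΓ).opn _ hG
  obtain ⟨B, hB⟩ := (hq.add (QF.norm_sq.smul (ε)) : QF (fun h => q h + (ε) * ‖h‖ ^ 2))
  have h1 := hv x hx (qtest (v x) x p B) (qtest_contDiff _ _ _ _) (by simp [qtest]) (by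
    apply Filter.Eventually.filter_mono nhdsWithin_le_nhds
    refine ev_trans x ?_
    filter_upwards [hj (ε/2) (by positivity)] with h hh
    have : qtest (v x) x p B (x + h) = v x + inner ℝ p h + 1 / 2 * (q h + (ε) * ‖h‖ ^ 2) := by
      simp only [qtest, add_sub_cancel_left, ← hB h]
    rw [this]; linarith)
  obtain ⟨hM, hE⟩ := h1
  apply hE
  apply GG_dform hΓ hM.eigenvectorBasis
  refine (GG_ell hΓ).mono _ _ ((GG_ell hΓ).smul _ (Real.exp (-2 * v x)) (Real.exp_pos _) hG) fun h => ?_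
  rw [← mform_eq, qtest_mform]
  apply le_of_eq
  simp only [Aq, ← hB]; ring

lemma exists_iso {n : ℕ} (e e' : Euc n) (h : ‖e‖ = ‖e'‖) :
    ∃ R : Euc n ≃ₗᵢ[ℝ] Euc n, ∀ x, inner ℝ e (R x) = inner ℝ e' x := by
  refine ⟨(Submodule.span ℝ {e' - e})ᗮ.reflection, fun x => ?_⟩
  have := Submodule.reflection_sub h.symm
  have h2 : (Submodule.span ℝ {e' - e})ᗮ.reflection e = e' := by
    have h3 := congrArg (Submodule.span ℝ {e' - e})ᗮ.reflection this
    rw [Submodule.reflection_reflection] at h3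
    exact h3.symm
  conv_lhs => rw [← LinearIsometryEquiv.inner_map_map ((Submodule.span ℝ {e' - e})ᗮ.reflection) e]
  rw [Submodule.reflection_reflection, h2]

/-- Case 1 of the hypothesis on `λ*`. -/
def Case1 {n : ℕ} (G : (Euc n → ℝ) → Prop) (δ : ℝ) : Prop :=
  0 < δ ∧ δ ≤ 1 ∧ ∀ e : Euc n, ‖e‖ = 1 → G (fun h => -‖h‖ ^ 2 + (2 - δ) * (inner ℝ e h) ^ 2)

/-- Case 2 of the hypothesis on `λ*`. -/
def Case2 {n : ℕ} (G : (Euc n → ℝ) → Prop) (δ : ℝ) : Prop :=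
  0 < δ ∧ δ ≤ 1 ∧ ∀ e : Euc n, ‖e‖ = 1 →
    ¬ G (fun h => -‖h‖ ^ 2 + 2 * (inner ℝ e h) ^ 2 + δ * ‖h‖ ^ 2)

lemma star_form {n : ℕ} (hn : 2 ≤ n) (h : Euc n) :
    dform (EuclideanSpace.basisFun (Fin n) ℝ) (lamStar n) h =
      -‖h‖ ^ 2 + 2 * (inner ℝ (EuclideanSpace.single (⟨0, by omega⟩ : Fin n) (1:ℝ)) h) ^ 2 := by
  rw [← sum_inner_sq (EuclideanSpace.basisFun (Fin n) ℝ) h, dform, ← Finset.sum_neg_distrib]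
  have h2 : inner ℝ (EuclideanSpace.single (⟨0, by omega⟩ : Fin n) (1:ℝ)) h ^ 2 =
      ∑ x : Fin n, if x = ⟨0, by omega⟩ then inner ℝ (EuclideanSpace.basisFun (Fin n) ℝ x) h ^ 2 else 0 := by
    simp
  rw [h2, Finset.mul_sum, ← Finset.sum_add_distrib]
  refine Finset.sum_congr rfl fun x _ => ?_
  by_cases hx : x = ⟨0, by omega⟩
  · simp [hx, lamStar]; ring
  · have h1 : x.val ≠ 0 := fun h0 => hx (Fin.ext h0)
    simp [hx, h1, lamStar]

lemma star_cases {n : ℕ} (hn : 2 ≤ n) {Γ : Set (Fin n → ℝ)} (hΓ : CondC Γ)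
    (hstar : lamStar n ∉ frontier Γ) : (∃ δ, Case1 (GG Γ) δ) ∨ (∃ δ, Case2 (GG Γ) δ) := by
  have hell := GG_ell hΓ
  set e0 : Euc n := EuclideanSpace.single (⟨0, by omega⟩ : Fin n) (1:ℝ) with he0
  have hn0 : ‖e0‖ = 1 := by simp [he0]
  by_cases hin : lamStar n ∈ Γ
  · left
    have h1 : GG Γ (fun h => -‖h‖ ^ 2 + 2 * (inner ℝ e0 h) ^ 2) :=
      ⟨_, _, hin, fun h => (star_form hn h).le⟩
    obtain ⟨ε, hε, h2⟩ := hell.opn _ h1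
    have h3 := hell.smul _ (1 + ε)⁻¹ (by positivity) h2
    refine ⟨min 1 (2 - 2 / (1 + ε)), ?_, min_le_left _ _, ?_⟩
    · apply lt_min one_pos
      have : 2 / (1 + ε) < 2 := by
        rw [div_lt_iff₀ (by positivity)]; linarith
      linarith
    · intro e he
      obtain ⟨R, hR⟩ := exists_iso e0 e (by rw [hn0, he])
      refine hell.mono _ _ (hell.iso _ R h3) fun h => ?_
      rw [hR, R.norm_map]
      have h4 : (1 + ε)⁻¹ * (-‖h‖ ^ 2 + 2 * inner ℝ e h ^ 2 - ε * ‖h‖ ^ 2) =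
        -‖h‖ ^ 2 + (2 / (1 + ε)) * (inner ℝ e h) ^ 2 := by
        field_simp; ring
      rw [h4]
      have h5 : 2 / (1 + ε) ≤ 2 - min 1 (2 - 2 / (1 + ε)) := by
        linarith [min_le_right 1 (2 - 2 / (1 + ε))]
      nlinarith [sq_nonneg (inner ℝ e h)]
  · right
    have hcl : lamStar n ∉ closure Γ := by
      intro hc
      apply hstar
      rw [hΓ.2.2.1.frontier_eq]
      exact ⟨hc, hin⟩
    have : ∃ δ : ℝ, 0 < δ ∧ δ ≤ 1 ∧ (fun i => lamStar n i + δ) ∉ Γ := by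
      by_contra hcon
      push Not at hcon
      apply hcl
      have ht : Tendsto (fun t : ℝ => (fun i => lamStar n i + t)) (𝓝[>] 0) (𝓝 (lamStar n)) := by
        have : Continuous (fun t : ℝ => (fun i => lamStar n i + t)) := by fun_prop
        have := this.tendsto 0
        simp only [add_zero] at this
        exact this.mono_left nhdsWithin_le_nhds
      refine mem_closure_of_tendsto ht ?_
      filter_upwards [Ioc_mem_nhdsGT (zero_lt_one' ℝ)] with t ht
      exact hcon t ht.1 ht.2
    obtain ⟨δ, h0, h1, hδ⟩ := this
    refine ⟨δ, h0, h1, fun e he hG => hδ ?_⟩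
    apply GG_dform hΓ (EuclideanSpace.basisFun (Fin n) ℝ)
    obtain ⟨R, hR⟩ := exists_iso e e0 (by rw [hn0, he])
    refine hell.mono _ _ (hell.iso _ R hG) fun h => ?_
    rw [hR, R.norm_map, dform_add_norm, star_form hn]

/-- Two-sided second order jets. -/
def Jet {n : ℕ} (f : Euc n → ℝ) (x p : Euc n) (q : Euc n → ℝ) : Prop :=
  QF q ∧ (fun h => f (x + h) - f x - inner ℝ p h - 1 / 2 * q h) =o[𝓝 (0 : Euc n)] fun h => ‖h‖ ^ 2

/-- One-dimensional second order Peano expansions. -/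
def Peano (g : ℝ → ℝ) (a g1 g2 : ℝ) : Prop :=
  (fun t => g (a + t) - g a - g1 * t - 1 / 2 * g2 * t ^ 2) =o[𝓝 (0 : ℝ)] fun t => t ^ 2

lemma peano_of_deriv {g g' : ℝ → ℝ} {a g2 : ℝ} (h1 : ∀ᶠ s in 𝓝 a, HasDerivAt g (g' s) s)
    (h2 : HasDerivAt g' g2 a) : Peano g a (g' a) g2 := by
  rw [Peano, Asymptotics.isLittleO_iff]
  intro ε hε
  have h3 := (hasDerivAt_iff_isLittleO_nhds_zero.1 h2)
  rw [Asymptotics.isLittleO_iff] at h3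
  have h4 := h3 hε
  have ht : Tendsto (fun t : ℝ => a + t) (𝓝 0) (𝓝 a) := by
    have : Continuous (fun t : ℝ => a + t) := by fun_prop
    simpa using this.tendsto 0
  obtain ⟨r, hr, h5⟩ := Metric.eventually_nhds_iff_ball.1 (h4.and (ht.eventually h1))
  filter_upwards [Metric.ball_mem_nhds (0:ℝ) hr] with t ht
  have key := Convex.norm_image_sub_le_of_norm_hasDerivWithin_le (𝕜 := ℝ) (s := Set.uIcc 0 t)
    (f := fun s => g (a + s) - g a - g' a * s - 1 / 2 * g2 * s ^ 2)
    (f' := fun s => g' (a + s) - g' a - s * g2) (C := ε * |t|) (x := 0) (y := t)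
    (by
      intro s hs
      have hsr : s ∈ ball (0:ℝ) r := by
        rw [mem_ball_zero_iff] at ht ⊢
        have := Set.abs_sub_left_of_mem_uIcc hs
        simp at this
        simpa using this.trans_lt ht
      have h6 := (h5 s hsr).2
      have h7 : HasDerivAt (fun s => g (a + s)) (g' (a + s)) s := by
        simpa using HasDerivAt.comp_const_add a s h6
      have h8 := ((h7.sub_const (g a)).sub ((hasDerivAt_id s).const_mul (g' a))).sub
        ((hasDerivAt_pow 2 s).const_mul (1/2 * g2))
      refine (h8.congr_deriv ?_).hasDerivWithinAt
      simp; ring)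
    (by
      intro s hs
      have hst : |s| ≤ |t| := by
        have := Set.abs_sub_left_of_mem_uIcc hs
        simpa using this
      have hsr : s ∈ ball (0:ℝ) r := by
        rw [mem_ball_zero_iff] at ht ⊢
        exact lt_of_le_of_lt hst ht
      have := (h5 s hsr).1
      simp only [smul_eq_mul, Real.norm_eq_abs] at this ⊢
      exact this.trans (by gcongr))
    (convex_uIcc 0 t) Set.left_mem_uIcc Set.right_mem_uIcc
  simp only [add_zero, sub_zero, mul_zero, Real.norm_eq_abs] at key
  simp only [Real.norm_eq_abs]
  have e : |t ^ 2| = |t| * |t| := by rw [sq, abs_mul]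
  rw [e, ← mul_assoc]
  convert key using 2
  ring

section A4
variable {n : ℕ}

lemma QF.bound {q : Euc n → ℝ} (h : QF q) : ∃ C, 0 ≤ C ∧ ∀ x, |q x| ≤ C * ‖x‖ ^ 2 := by
  obtain ⟨B, hB⟩ := h
  refine ⟨‖B‖, B.opNorm_nonneg, fun x => ?_⟩
  rw [hB, sq, ← mul_assoc]
  exact B.le_opNorm₂ x x

lemma QF.isBigO {q : Euc n → ℝ} (h : QF q) : q =O[𝓝 0] fun h => ‖h‖ ^ 2 := by
  obtain ⟨C, _, hC⟩ := h.bound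
  refine Asymptotics.IsBigO.of_bound C (Eventually.of_forall fun x => ?_)
  simpa using hC x

lemma inner_isBigO (p : Euc n) : (fun h => inner ℝ p h) =O[𝓝 (0 : Euc n)] fun h => ‖h‖ := by
  refine Asymptotics.IsBigO.of_bound ‖p‖ (Eventually.of_forall fun x => ?_)
  simpa using abs_real_inner_le_norm p x

lemma norm_sq_isLittleO : (fun h : Euc n => ‖h‖ ^ 2) =o[𝓝 0] fun h => ‖h‖ :=
  (Asymptotics.isLittleO_pow_id (one_lt_two)).comp_tendsto (tendsto_norm_zero)

lemma Jet.add {f g : Euc n → ℝ} {x p p' : Euc n} {q q' : Euc n → ℝ} (hf : Jet f x p q)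
    (hg : Jet g x p' q') : Jet (fun y => f y + g y) x (p + p') (fun h => q h + q' h) := by
  refine ⟨hf.1.add hg.1, (hf.2.add hg.2).congr_left fun h => ?_⟩
  rw [inner_add_left]; ring

lemma Jet.smul {f : Euc n → ℝ} {x p : Euc n} {q : Euc n → ℝ} (c : ℝ) (hf : Jet f x p q) :
    Jet (fun y => c * f y) x (c • p) (fun h => c * q h) := by
  refine ⟨hf.1.smul c, (hf.2.const_mul_left c).congr_left fun h => ?_⟩
  rw [real_inner_smul_left]; ring

lemma Jet.const (c : ℝ) (x : Euc n) : Jet (fun _ => c) x 0 (fun _ => 0) := by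
  refine ⟨QF.zero, ?_⟩
  simp

lemma Jet.congr {f : Euc n → ℝ} {x p p' : Euc n} {q q' : Euc n → ℝ} (hf : Jet f x p q)
    (hp : p' = p) (hq : ∀ h, q' h = q h) : Jet f x p' q' := by
  have : q' = q := funext hq
  subst this; subst hp; exact hf

lemma Jet.congr_fun {f g : Euc n → ℝ} {x p : Euc n} {q : Euc n → ℝ} (hf : Jet f x p q)
    (hg : ∀ᶠ y in 𝓝 x, g y = f y) : Jet g x p q := by
  refine ⟨hf.1, hf.2.congr' ?_ EventuallyEq.rfl⟩
  have ht : Tendsto (fun t : Euc n => x + t) (𝓝 0) (𝓝 x) := by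
    have : Continuous (fun t : Euc n => x + t) := by fun_prop
    simpa using this.tendsto 0
  filter_upwards [ht.eventually hg] with h hh
  rw [hh, hg.self_of_nhds]

lemma Jet.diff_isBigO {f : Euc n → ℝ} {x p : Euc n} {q : Euc n → ℝ} (hf : Jet f x p q) :
    (fun h => f (x + h) - f x) =O[𝓝 0] fun h => ‖h‖ := by
  have h1 := (hf.2.isBigO.add (hf.1.isBigO.const_mul_left (1/2))).trans norm_sq_isLittleO.isBigO
  refine (h1.add (inner_isBigO p)).congr_left fun h => ?_
  ring

lemma Jet.comp {f : Euc n → ℝ} {x p : Euc n} {q : Euc n → ℝ} (hf : Jet f x p q) {g : ℝ → ℝ}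
    {g1 g2 : ℝ} (hg : Peano g (f x) g1 g2) :
    Jet (fun y => g (f y)) x (g1 • p) (fun h => g1 * q h + g2 * (inner ℝ p h) ^ 2) := by
  have hτ := hf.diff_isBigO
  have hτ0 : Tendsto (fun h => f (x + h) - f x) (𝓝 0) (𝓝 0) :=
    hτ.trans_tendsto tendsto_norm_zero
  have e1 := (hg.comp_tendsto hτ0).trans_isBigO (hτ.pow 2)
  have hb : (fun h => f (x + h) - f x - inner ℝ p h) =O[𝓝 0] fun h => ‖h‖ ^ 2 := by
    refine (hf.2.isBigO.add (hf.1.isBigO.const_mul_left (1/2))).congr_left fun h => ?_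
    ring
  have e2 : (fun h => (f (x + h) - f x - inner ℝ p h) * (f (x + h) - f x + inner ℝ p h)) =o[𝓝 0]
      fun h => ‖h‖ ^ 2 := by
    have h1 := (hb.trans_isLittleO norm_sq_isLittleO).mul_isBigO (hτ.add (inner_isBigO p))
    refine h1.congr_right fun h => ?_
    ring
  refine ⟨(hf.1.smul g1).add (((QF.inner_mul p p).smul g2).congr fun h => by ring), ?_⟩
  refine ((e1.add (e2.const_mul_left (1/2*g2))).add (hf.2.const_mul_left g1)).congr_left fun h => ?_
  simp only [Function.comp, add_sub_cancel, real_inner_smul_left]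
  ring

lemma peano_sq (a : ℝ) : Peano (fun t => t ^ 2) a (2 * a) 2 := by
  have : (fun t => (a + t) ^ 2 - a ^ 2 - 2 * a * t - 1 / 2 * 2 * t ^ 2) = fun _ => (0 : ℝ) := by
    funext t; ring
  rw [Peano, this]
  exact Asymptotics.isLittleO_zero _ _

lemma Jet.mul {f g : Euc n → ℝ} {x p p' : Euc n} {q q' : Euc n → ℝ} (hf : Jet f x p q)
    (hg : Jet g x p' q') : Jet (fun y => f y * g y) x (f x • p' + g x • p)
      (fun h => f x * q' h + g x * q h + 2 * inner ℝ p h * inner ℝ p' h) := by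
  have h1 := ((hf.add hg).comp (peano_sq _)).smul (1/4)
  have h2 := ((hf.add (hg.smul (-1))).comp (peano_sq _)).smul (-1/4)
  have h3 := ((h1.add h2).congr_fun (g := fun y => f y * g y) (Eventually.of_forall fun y => by ring))
  refine h3.congr ?_ fun h => ?_
  · module
  · simp only [inner_add_left, real_inner_smul_left]; ring

lemma Jet.normSq (x z : Euc n) : Jet (fun y => ‖y - z‖ ^ 2) x ((2 : ℝ) • (x - z)) (fun h => 2 * ‖h‖ ^ 2) := by
  refine ⟨QF.norm_sq.smul 2, ?_⟩
  have : (fun h => ‖x + h - z‖ ^ 2 - ‖x - z‖ ^ 2 - inner ℝ ((2 : ℝ) • (x - z)) h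
      - 1 / 2 * (2 * ‖h‖ ^ 2)) = fun _ => (0 : ℝ) := by
    funext h
    rw [show x + h - z = (x - z) + h by abel, norm_add_sq_real, real_inner_smul_left]; ring
  rw [this]
  exact Asymptotics.isLittleO_zero _ _

lemma Jet.qtest (a : ℝ) (x p : Euc n) (q : Euc n → ℝ) (hq : QF q) :
    Jet (fun y => a + inner ℝ p (y - x) + 1 / 2 * q (y - x)) x p q := by
  refine ⟨hq, ?_⟩
  have h0 : q 0 = 0 := by obtain ⟨B, hB⟩ := hq; simp [hB]
  have : (fun h => (a + inner ℝ p (x + h - x) + 1 / 2 * q (x + h - x)) - (a + inner ℝ p (x - x) + 1 / 2 * q (x - x)) - inner ℝ p h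
      - 1 / 2 * q h) = fun _ => (0 : ℝ) := by
    funext h
    simp [h0]
    ring
  rw [this]
  exact Asymptotics.isLittleO_zero _ _

lemma Jet.affine (p z x : Euc n) : Jet (fun y => inner ℝ p (y - z)) x p (fun _ => 0) := by
  refine ⟨QF.zero, ?_⟩
  have : (fun h => inner ℝ p (x + h - z) - inner ℝ p (x - z) - inner ℝ p h
      - 1 / 2 * 0) = fun _ => (0 : ℝ) := by
    funext h
    simp only [inner_sub_right, inner_add_right]; ring
  rw [this]
  exact Asymptotics.isLittleO_zero _ _

lemma UpJet.of_touch {v φ : Euc n → ℝ} {x p : Euc n} {q : Euc n → ℝ} (hφ : Jet φ x p q)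
    (h0 : φ x = v x) (hle : ∀ᶠ y in 𝓝 x, v y ≤ φ y) : UpJet v x p q := by
  intro ε hε
  have ht : Tendsto (fun t : Euc n => x + t) (𝓝 0) (𝓝 x) := by
    have : Continuous (fun t : Euc n => x + t) := by fun_prop
    simpa using this.tendsto 0
  filter_upwards [(Asymptotics.isLittleO_iff.1 hφ.2) hε, ht.eventually hle] with h h1 h2
  simp only [Real.norm_eq_abs, abs_of_nonneg (sq_nonneg ‖h‖)] at h1
  have := (abs_le.1 h1).2
  rw [h0] at this
  linarith

lemma LowJet.of_touch {v φ : Euc n → ℝ} {x p : Euc n} {q : Euc n → ℝ} (hφ : Jet φ x p q)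
    (h0 : φ x = v x) (hle : ∀ᶠ y in 𝓝 x, φ y ≤ v y) : LowJet v x p q := by
  intro ε hε
  have ht : Tendsto (fun t : Euc n => x + t) (𝓝 0) (𝓝 x) := by
    have : Continuous (fun t : Euc n => x + t) := by fun_prop
    simpa using this.tendsto 0
  filter_upwards [(Asymptotics.isLittleO_iff.1 hφ.2) hε, ht.eventually hle] with h h1 h2
  simp only [Real.norm_eq_abs, abs_of_nonneg (sq_nonneg ‖h‖)] at h1
  have := (abs_le.1 h1).1
  rw [h0] at this
  linarith

lemma UpJet.test {v : Euc n → ℝ} {x p : Euc n} {q : Euc n → ℝ} (h : UpJet v x p q) (ε : ℝ)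
    (hε : 0 < ε) : ∀ᶠ y in 𝓝 x, v y ≤ v x + inner ℝ p (y - x) + 1 / 2 * (q (y - x) + ε * ‖y - x‖ ^ 2) := by
  apply ev_trans x
  filter_upwards [h (ε/2) (by positivity)] with k hk
  simp only [add_sub_cancel_left]
  linarith

lemma LowJet.test {v : Euc n → ℝ} {x p : Euc n} {q : Euc n → ℝ} (h : LowJet v x p q) (ε : ℝ)
    (hε : 0 < ε) : ∀ᶠ y in 𝓝 x, v x + inner ℝ p (y - x) + 1 / 2 * (q (y - x) + (-ε) * ‖y - x‖ ^ 2) ≤ v y := by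
  apply ev_trans x
  filter_upwards [h (ε/2) (by positivity)] with k hk
  simp only [add_sub_cancel_left]
  linarith

lemma peano_log {a : ℝ} (ha : 0 < a) : Peano Real.log a a⁻¹ (-(a ^ 2)⁻¹) := by
  refine peano_of_deriv (g' := fun s => s⁻¹) ?_ (hasDerivAt_inv ha.ne')
  filter_upwards [lt_mem_nhds ha] with s hs
  exact Real.hasDerivAt_log hs.ne'

lemma peano_inv {a : ℝ} (ha : 0 < a) : Peano (fun s => s⁻¹) a (-(a ^ 2)⁻¹) (2 / a ^ 3) := by
  refine peano_of_deriv (g' := fun s => -(s ^ 2)⁻¹) ?_ ?_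
  · filter_upwards [lt_mem_nhds ha] with s hs
    exact hasDerivAt_inv hs.ne'
  · have := ((hasDerivAt_pow 2 a).inv (by positivity)).neg
    refine this.congr_deriv ?_
    field_simp
    norm_num
    ring

lemma peano_exp (c a : ℝ) : Peano (fun s => Real.exp (c * s)) a (c * Real.exp (c * a)) (c ^ 2 * Real.exp (c * a)) := by
  have h1 : ∀ s, HasDerivAt (fun s => Real.exp (c * s)) (c * Real.exp (c * s)) s := by
    intro s
    have := ((hasDerivAt_id s).const_mul c).exp
    refine this.congr_deriv ?_
    simp; ring
  refine peano_of_deriv (g' := fun s => c * Real.exp (c * s)) (Eventually.of_forall h1) ?_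
  refine ((h1 a).const_mul c).congr_deriv ?_
  ring

end A4

section A5
variable {n : ℕ}

lemma Jet.log_norm {x z : Euc n} (hx : x ≠ z) :
    Jet (fun y => Real.log ‖y - z‖) x ((‖x - z‖ ^ 2)⁻¹ • (x - z))
      (fun h => (‖x - z‖ ^ 2)⁻¹ * ‖h‖ ^ 2 - 2 * (‖x - z‖ ^ 4)⁻¹ * (inner ℝ (x - z) h) ^ 2) := by
  have hr : 0 < ‖x - z‖ := norm_pos_iff.2 (sub_ne_zero.2 hx)
  have h1 := ((Jet.normSq x z).comp (peano_log (a := ‖x - z‖ ^ 2) (by positivity))).smul (1/2)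
  refine (h1.congr_fun (g := fun y => Real.log ‖y - z‖) (Eventually.of_forall fun y => ?_)).congr ?_ fun h => ?_
  · rw [Real.log_pow]; push_cast; ring
  · module
  · simp only [real_inner_smul_left]
    field_simp
    ring

lemma radial_jet {f : ℝ → ℝ} {x z : Euc n} (hx : x ≠ z) {f1 f2 : ℝ}
    (hf : Peano f (Real.log ‖x - z‖) f1 f2) :
    Jet (fun y => f (Real.log ‖y - z‖)) x (f1 • ((‖x - z‖ ^ 2)⁻¹ • (x - z)))
      (fun h => f1 * ((‖x - z‖ ^ 2)⁻¹ * ‖h‖ ^ 2 - 2 * (‖x - z‖ ^ 4)⁻¹ * (inner ℝ (x - z) h) ^ 2) +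
        f2 * (inner ℝ ((‖x - z‖ ^ 2)⁻¹ • (x - z)) h) ^ 2) :=
  (Jet.log_norm hx).comp hf

lemma radial_Aq {f : ℝ → ℝ} {x z : Euc n} (hx : x ≠ z) {f1 f2 : ℝ}
    (hf : Peano f (Real.log ‖x - z‖) f1 f2) :
    ∃ p q, Jet (fun y => f (Real.log ‖y - z‖)) x p q ∧ ∀ h, Aq p q h =
      (‖x - z‖ ^ 2)⁻¹ * (-(f1 + f1 ^ 2 / 2) * ‖h‖ ^ 2 +
        (2 * (f1 + f1 ^ 2 / 2) - f2) * (inner ℝ (‖x - z‖⁻¹ • (x - z)) h) ^ 2) := by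
  refine ⟨_, _, radial_jet hx hf, fun h => ?_⟩
  have hr : 0 < ‖x - z‖ := norm_pos_iff.2 (sub_ne_zero.2 hx)
  simp only [Aq, real_inner_smul_left, norm_smul, Real.norm_eq_abs, mul_pow, sq_abs]
  field_simp
  ring

lemma case1_strict {G : (Euc n → ℝ) → Prop} (hG : Ell G) {δ : ℝ} (hc : Case1 G δ) {Q f2 c : ℝ}
    (hQ : 0 < Q) (hf : f2 ≤ δ * Q) (hcp : 0 < c) {e : Euc n} (he : ‖e‖ = 1) :
    G (fun h => c * (-Q * ‖h‖ ^ 2 + (2 * Q - f2) * (inner ℝ e h) ^ 2)) := by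
  refine hG.smul _ c hcp ?_
  refine hG.mono _ _ (hG.smul _ Q hQ (hc.2.2 e he)) fun h => ?_
  nlinarith [sq_nonneg (inner ℝ e h)]

lemma case2_strict {G : (Euc n → ℝ) → Prop} (hG : Ell G) {δ : ℝ} (hc : Case2 G δ) {Q f2 c : ℝ}
    (hQ : 0 < Q) (hf : -(δ / 2 * Q) ≤ f2) (hcp : 0 < c) {e : Euc n} (he : ‖e‖ = 1) :
    ∃ ε > 0, ¬ G (fun h => c * (-Q * ‖h‖ ^ 2 + (2 * Q - f2) * (inner ℝ e h) ^ 2) + ε * ‖h‖ ^ 2) := by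
  have hδ := hc.1
  refine ⟨c * Q * (δ / 2), by positivity, fun h => hc.2.2 e he ?_⟩
  refine hG.mono _ _ (hG.smul _ (c * Q)⁻¹ (by positivity) h) fun h => ?_
  have h1 : (inner ℝ e h) ^ 2 ≤ ‖h‖ ^ 2 := by
    have := abs_real_inner_le_norm e h
    rw [he, one_mul] at this
    exact sq_le_sq' (by linarith [neg_abs_le (inner ℝ e h)]) ((le_abs_self _).trans this)
  have h2 : (c * Q)⁻¹ * (c * (-Q * ‖h‖ ^ 2 + (2 * Q - f2) * inner ℝ e h ^ 2) + c * Q * (δ / 2) * ‖h‖ ^ 2)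
     = -‖h‖ ^ 2 + 2 * inner ℝ e h ^ 2 + (- f2 / Q) * inner ℝ e h ^ 2 + δ / 2 * ‖h‖ ^ 2 := by
    field_simp; ring
  rw [h2]
  have h3 : - f2 / Q ≤ δ / 2 := by
    rw [div_le_iff₀ hQ]; linarith
  nlinarith [mul_le_mul_of_nonneg_right h3 (sq_nonneg (inner ℝ e h))]

lemma unit_dir {x z : Euc n} (hx : x ≠ z) : ‖(‖x - z‖⁻¹ • (x - z))‖ = 1 := by
  have hr : ‖x - z‖ ≠ 0 := norm_ne_zero_iff.2 (sub_ne_zero.2 hx)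
  rw [norm_smul, norm_inv, norm_norm, inv_mul_cancel₀ hr]

lemma cmp_sub {G : (Euc n → ℝ) → Prop} {K Ω : Set (Euc n)} {v φ : Euc n → ℝ} (hK : IsCompact K)
    (hv : ContinuousOn v K) (hφ : ContinuousOn φ K) (hsub : SubJ G Ω v)
    (h : ∀ x ∈ K, v x ≤ φ x ∨ (K ∈ 𝓝 x ∧ x ∈ Ω ∧ ∃ p q, Jet φ x p q ∧ G (Aq p q))) :
    ∀ x ∈ K, v x ≤ φ x := by
  intro x hx
  obtain ⟨y, hy, hmax⟩ := hK.exists_isMaxOn ⟨x, hx⟩ (hv.sub hφ)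
  have hmax' : ∀ z ∈ K, v z - φ z ≤ v y - φ y := fun z hz => hmax hz
  rcases h y hy with h1 | ⟨hn, hΩ, p, q, hj, hG⟩
  · linarith [hmax' x hx]
  · exfalso
    have hj2 := (hj.add (Jet.const (v y - φ y) y))
    refine hsub y hΩ p q hj.1 ?_ hG
    refine UpJet.of_touch (hj2.congr (add_zero p).symm (fun h => (add_zero _).symm)) (by ring) ?_
    filter_upwards [hn] with z hz
    linarith [hmax' z hz]

lemma cmp_super {G : (Euc n → ℝ) → Prop} {K Ω : Set (Euc n)} {v φ : Euc n → ℝ} (hK : IsCompact K)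
    (hv : ContinuousOn v K) (hφ : ContinuousOn φ K) (hsup : SupJ G Ω v)
    (h : ∀ x ∈ K, φ x ≤ v x ∨ (K ∈ 𝓝 x ∧ x ∈ Ω ∧ ∃ p q, Jet φ x p q ∧
      ∃ ε > 0, ¬ G (fun h => Aq p q h + ε * ‖h‖ ^ 2))) :
    ∀ x ∈ K, φ x ≤ v x := by
  intro x hx
  obtain ⟨y, hy, hmax⟩ := hK.exists_isMinOn ⟨x, hx⟩ (hv.sub hφ)
  have hmax' : ∀ z ∈ K, v y - φ y ≤ v z - φ z := fun z hz => hmax hz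
  rcases h y hy with h1 | ⟨hn, hΩ, p, q, hj, ε, hε, hG⟩
  · linarith [hmax' x hx]
  · exfalso
    have hj2 := (hj.add (Jet.const (v y - φ y) y))
    refine hG (hsup y hΩ p q hj.1 ?_ ε hε)
    refine LowJet.of_touch (hj2.congr (add_zero p).symm (fun h => (add_zero _).symm)) (by ring) ?_
    filter_upwards [hn] with z hz
    linarith [hmax' z hz]

/-- Peano expansion of the logarithmic barrier. -/
lemma peano_logbar (k C a t : ℝ) (hs : C * Real.exp (a * t) < 1) :
    Peano (fun t => k * Real.log (1 - C * Real.exp (a * t))) t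
      (-(k * a) * (C * Real.exp (a * t)) / (1 - C * Real.exp (a * t)))
      (-(k * a ^ 2) * (C * Real.exp (a * t)) / (1 - C * Real.exp (a * t)) ^ 2) := by
  have hE : ∀ s, HasDerivAt (fun s => C * Real.exp (a * s)) (a * (C * Real.exp (a * s))) s := by
    intro s
    have := (((hasDerivAt_id s).const_mul a).exp).const_mul C
    refine this.congr_deriv ?_
    simp; ring
  have hcont : Continuous (fun s => C * Real.exp (a * s)) := by fun_prop
  refine peano_of_deriv (g' := fun t => -(k * a) * (C * Real.exp (a * t)) / (1 - C * Real.exp (a * t))) ?_ ?_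
  · filter_upwards [hcont.continuousAt.eventually_lt continuousAt_const hs] with s hs
    have h1 : 1 - C * Real.exp (a * s) ≠ 0 := by linarith
    have := (((hE s).const_sub 1).log h1).const_mul k
    refine this.congr_deriv ?_
    field_simp
  · have h1 : 1 - C * Real.exp (a * t) ≠ 0 := by linarith
    have := ((hE t).const_mul (-(k * a))).div ((hE t).const_sub 1) h1
    refine this.congr_deriv ?_
    field_simp
    ring

end A5

section A6
variable {n : ℕ}
open EuclideanGeometry

/-- Conformal transform of `v` under an inversion. -/
def Kel (c : Euc n) (l : ℝ) (v : Euc n → ℝ) (y : Euc n) : ℝ :=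
  v (inversion c l y) + 2 * (Real.log l - Real.log ‖y - c‖)

lemma QF.homog {q : Euc n → ℝ} (hq : QF q) (a : ℝ) (h : Euc n) : q (a • h) = a ^ 2 * q h := by
  obtain ⟨B, hB⟩ := hq
  simp [hB]; ring

lemma Jet.quad_comp {q : Euc n → ℝ} (hq : QF q) {T : Euc n → Euc n} {x : Euc n}
    {D : Euc n →L[ℝ] Euc n} (hT : HasFDerivAt T D x) :
    Jet (fun y => q (T y - T x)) x 0 (fun h => 2 * q (D h)) := by
  refine ⟨(hq.comp D).smul 2, ?_⟩
  have h0 : q 0 = 0 := by obtain ⟨B, hB⟩ := hq; simp [hB]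
  obtain ⟨B, hB⟩ := hq
  have h1 := hasFDerivAt_iff_isLittleO_nhds_zero.1 hT
  set e : Euc n → Euc n := fun h => T (x + h) - T x - D h with he
  have h1' : e =o[𝓝 0] fun h => ‖h‖ := h1.norm_right
  have hD : (fun h => D h) =O[𝓝 (0 : Euc n)] fun h => ‖h‖ :=
    (D.isBigO_id (𝓝 0)).norm_right
  have hB2 : ∀ (f g : Euc n → Euc n), f =O[𝓝 0] (fun h => ‖h‖) → g =o[𝓝 0] (fun h => ‖h‖) →
      (fun h => B (f h) (g h)) =o[𝓝 0] fun h => ‖h‖ ^ 2 := by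
    intro f g hf hg
    have : (fun h => B (f h) (g h)) =O[𝓝 0] fun h => ‖f h‖ * ‖g h‖ := by
      refine Asymptotics.IsBigO.of_bound ‖B‖ (Eventually.of_forall fun h => ?_)
      have := B.le_opNorm₂ (f h) (g h)
      simpa [mul_assoc] using this
    refine this.trans_isLittleO ?_
    refine (hf.norm_left.mul_isLittleO hg.norm_left).congr_right fun h => ?_
    ring
  have hB3 : ∀ (f g : Euc n → Euc n), f =o[𝓝 0] (fun h => ‖h‖) → g =O[𝓝 0] (fun h => ‖h‖) →
      (fun h => B (f h) (g h)) =o[𝓝 0] fun h => ‖h‖ ^ 2 := by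
    intro f g hf hg
    have : (fun h => B (f h) (g h)) =O[𝓝 0] fun h => ‖f h‖ * ‖g h‖ := by
      refine Asymptotics.IsBigO.of_bound ‖B‖ (Eventually.of_forall fun h => ?_)
      have := B.le_opNorm₂ (f h) (g h)
      simpa [mul_assoc] using this
    refine this.trans_isLittleO ?_
    refine (hf.norm_left.mul_isBigO hg.norm_left).congr_right fun h => ?_
    ring
  refine (((hB2 _ _ hD h1').add (hB3 _ _ h1' hD)).add (hB2 _ _ h1'.isBigO h1')).congr_left fun h => ?_
  have hTe : T (x + h) - T x = D h + e h := by simp [he]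
  change _ = q (T (x + h) - T x) - q (T x - T x) - inner ℝ (0 : Euc n) h - 1 / 2 * (2 * q (D h))
  rw [hTe, sub_self, h0]
  simp [hB, map_add]
  ring

lemma refl_apply (z h : Euc n) : (Submodule.span ℝ {z})ᗮ.reflection h =
    h - (2 * inner ℝ z h / ‖z‖ ^ 2) • z := by
  rw [Submodule.reflection_orthogonal_apply, Submodule.reflection_singleton_apply]
  simp
  module

lemma kel_jet {c x : Euc n} (hx : x ≠ c) {l : ℝ} (hl : 0 < l) (a : ℝ) (p : Euc n)
    {q : Euc n → ℝ} (hq : QF q) :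
    ∃ P Q, Jet (Kel c l (fun y => a + inner ℝ p (y - inversion c l x) + 1 / 2 * q (y - inversion c l x)))
      x P Q ∧ ∀ h, Aq P Q h = (l / ‖x - c‖) ^ 4 * Aq p q ((Submodule.span ℝ {x - c})ᗮ.reflection h) := by
  have hr : 0 < ‖x - c‖ := norm_pos_iff.2 (sub_ne_zero.2 hx)
  have hT := hasFDerivAt_inversion (R := l) hx
  have j1 := (Jet.quad_comp hq hT).smul (1/2)
  have j2 := ((Jet.affine p c x).mul ((Jet.normSq x c).comp (peano_inv (a := ‖x - c‖ ^ 2) (by positivity)))).smul (l ^ 2)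
  have j3 := (Jet.log_norm hx).smul (-2)
  have j4 := Jet.const (a + inner ℝ p (c - inversion c l x) + 2 * Real.log l) x
  have j5 := ((j4.add j3).add j2).add j1
  refine ⟨_, _, j5.congr_fun ?_, ?_⟩
  · refine Eventually.of_forall fun y => ?_
    have : inversion c l y = (l / ‖y - c‖) ^ 2 • (y - c) + c := by
      simp [inversion, dist_eq_norm]
    simp only [Kel]
    rw [show inversion c l y - inversion c l x = (l / ‖y - c‖) ^ 2 • (y - c) + (c - inversion c l x) by
      rw [this]; abel]
    rw [inner_add_right, inner_smul_right]
    ring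
  · intro h
    set z := x - c with hz
    simp only [refl_apply, Aq, smul_apply]
    have e0 : ((((Submodule.span ℝ {z})ᗮ.reflection : Euc n ≃L[ℝ] Euc n) : Euc n →L[ℝ] Euc n) h) = h - (2 * inner ℝ z h / ‖z‖ ^ 2) • z := refl_apply z h
    rw [e0, hq.homog, dist_eq_norm, ← hz]
    have e1 : ‖h - (2 * inner ℝ z h / ‖z‖ ^ 2) • z‖ ^ 2 = ‖h‖ ^ 2 := by
      rw [← refl_apply, LinearIsometryEquiv.norm_map]
    rw [e1]
    rw [← real_inner_self_eq_norm_sq (0 + _ + _ + _ : Euc n)]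
    simp only [inner_add_left, inner_add_right, inner_sub_right, inner_sub_left, real_inner_smul_left, inner_smul_right, inner_zero_left, inner_zero_right, real_inner_self_eq_norm_sq, smul_eq_mul, smul_zero]
    rw [real_inner_comm p z]
    field_simp
    ring

lemma kel_kel {c : Euc n} {l : ℝ} (hl : 0 < l) (v : Euc n → ℝ) {y : Euc n} (hy : y ≠ c) :
    Kel c l (Kel c l v) y = v y := by
  have hr : 0 < ‖y - c‖ := norm_pos_iff.2 (sub_ne_zero.2 hy)
  simp only [Kel]
  rw [inversion_inversion c hl.ne', ← dist_eq_norm (inversion c l y) c, dist_inversion_center, dist_eq_norm,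
    Real.log_div (by positivity) (by positivity), Real.log_pow]
  push_cast; ring

lemma inversion_ne {c x : Euc n} (hx : x ≠ c) {l : ℝ} (hl : 0 < l) : inversion c l x ≠ c := by
  rw [Ne, inversion_eq_center hl.ne']; exact hx

lemma inversion_tendsto {c x : Euc n} (hx : x ≠ c) {l : ℝ} :
    Tendsto (inversion c l) (𝓝 x) (𝓝 (inversion c l x)) :=
  (hasFDerivAt_inversion (R := l) hx).continuousAt

lemma kel_sup {G : (Euc n → ℝ) → Prop} (hG : Ell G) {Ω : Set (Euc n)} {v : Euc n → ℝ}
    (hv : SupJ G Ω v) (c : Euc n) {l : ℝ} (hl : 0 < l) :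
    SupJ G {y | y ≠ c ∧ inversion c l y ∈ Ω} (Kel c l v) := by
  rintro y ⟨hy, hΩ⟩ p q hq hj ε hε
  have hx : inversion c l y ≠ c := inversion_ne hy hl
  have hxy : inversion c l (inversion c l y) = y := inversion_inversion c hl.ne' y
  set x := inversion c l y with hxdef
  have hr : 0 < ‖x - c‖ := norm_pos_iff.2 (sub_ne_zero.2 hx)
  have hq' : QF (fun h => q h + (-(ε/2)) * ‖h‖ ^ 2) := hq.add (QF.norm_sq.smul _)
  obtain ⟨P, Q, hJ, hA⟩ := kel_jet hx hl (Kel c l v y) p hq'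
  rw [hxy] at hJ
  have hl1 : LowJet v x P Q := by
    refine LowJet.of_touch hJ ?_ ?_
    · rw [← kel_kel hl v hx]
      simp only [Kel, hxy, sub_self, inner_zero_right]
      have h0 : q 0 = 0 := by obtain ⟨B, hB⟩ := hq; simp [hB]
      rw [h0]; simp
    · have ht := inversion_tendsto (l := l) hx
      rw [hxy] at ht
      filter_upwards [ht.eventually (hj.test (ε/2) (by positivity)), isOpen_ne.mem_nhds hx] with w hw hwc
      rw [← kel_kel hl v hwc]
      simp only [Kel] at hw ⊢
      linarith
  set s := (l / ‖x - c‖) ^ 4 with hs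
  have hspos : 0 < s := by positivity
  have h1 := hv x hΩ P Q hJ.1 hl1 (s * (ε / 2)) (by positivity)
  have h2 := hG.iso _ (Submodule.span ℝ {x - c})ᗮ.reflection (hG.smul _ s⁻¹ (by positivity) h1)
  refine hG.mono _ _ h2 fun h => ?_
  rw [hA, Submodule.reflection_reflection, LinearIsometryEquiv.norm_map]
  have : Aq p (fun h => q h + (-(ε/2)) * ‖h‖ ^ 2) h = Aq p q h + ε / 2 * ‖h‖ ^ 2 := by
    simp only [Aq]; ring
  rw [this]
  apply le_of_eq
  field_simp
  ring

lemma kel_sub {G : (Euc n → ℝ) → Prop} (hG : Ell G) {Ω : Set (Euc n)} {v : Euc n → ℝ}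
    (hv : SubJ G Ω v) (c : Euc n) {l : ℝ} (hl : 0 < l) :
    SubJ G {y | y ≠ c ∧ inversion c l y ∈ Ω} (Kel c l v) := by
  rintro y ⟨hy, hΩ⟩ p q hq hj hGA
  obtain ⟨ε, hε, hGA⟩ := hG.opn _ hGA
  have hx : inversion c l y ≠ c := inversion_ne hy hl
  have hxy : inversion c l (inversion c l y) = y := inversion_inversion c hl.ne' y
  set x := inversion c l y with hxdef
  have hr : 0 < ‖x - c‖ := norm_pos_iff.2 (sub_ne_zero.2 hx)
  have hq' : QF (fun h => q h + ε * ‖h‖ ^ 2) := hq.add (QF.norm_sq.smul _)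
  obtain ⟨P, Q, hJ, hA⟩ := kel_jet hx hl (Kel c l v y) p hq'
  rw [hxy] at hJ
  have hl1 : UpJet v x P Q := by
    refine UpJet.of_touch hJ ?_ ?_
    · rw [← kel_kel hl v hx]
      simp only [Kel, hxy, sub_self, inner_zero_right]
      have h0 : q 0 = 0 := by obtain ⟨B, hB⟩ := hq; simp [hB]
      rw [h0]; simp
    · have ht := inversion_tendsto (l := l) hx
      rw [hxy] at ht
      filter_upwards [ht.eventually (hj.test ε hε), isOpen_ne.mem_nhds hx] with w hw hwc
      rw [← kel_kel hl v hwc]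
      simp only [Kel] at hw ⊢
      linarith
  set s := (l / ‖x - c‖) ^ 4 with hs
  have hspos : 0 < s := by positivity
  refine hv x hΩ P Q hJ.1 hl1 ?_
  have h2 := hG.iso _ (Submodule.span ℝ {x - c})ᗮ.reflection (hG.smul _ s hspos hGA)
  refine hG.mono _ _ h2 fun h => ?_
  rw [hA, LinearIsometryEquiv.norm_map]
  apply le_of_eq
  simp only [Aq, LinearIsometryEquiv.norm_map]; ring

end A6

section A7
variable {n : ℕ}

/-- `n`-dimensional Hausdorff measure on `ℝⁿ` (a Haar measure). -/
def muE (n : ℕ) : Measure (Euc n) := Measure.hausdorffMeasure (n : ℝ)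

instance muE_haar (n : ℕ) : (muE n).IsAddHaarMeasure := by
  unfold muE; infer_instance

lemma lip_null {K : ℝ≥0} {F : Euc n → Euc n} {s : Set (Euc n)} (hF : LipschitzOnWith K F s)
    (hs : muE n s = 0) : muE n (F '' s) = 0 := by
  unfold muE at *
  have := hF.hausdorffMeasure_image_le (d := (n : ℝ)) (Nat.cast_nonneg n)
  rw [hs, mul_zero] at this
  exact le_antisymm this (zero_le)

lemma ray_expansion {f : Euc n → ℝ} {g : Euc n → Euc n} {L : Euc n →L[ℝ] Euc n} {x : Euc n}
    (hf : ∀ y, HasFDerivAt f (innerSL ℝ (g y)) y) (hg : HasFDerivAt g L x) :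
    (fun h => f (x + h) - f x - inner ℝ (g x) h - 1 / 2 * inner ℝ (L h) h) =o[𝓝 0] fun h => ‖h‖ ^ 2 := by
  rw [Asymptotics.isLittleO_iff]
  intro ε hε
  have h3 := Asymptotics.isLittleO_iff.1 (hasFDerivAt_iff_isLittleO_nhds_zero.1 hg) hε
  obtain ⟨r, hr, h5⟩ := Metric.eventually_nhds_iff_ball.1 h3
  filter_upwards [Metric.ball_mem_nhds (0 : Euc n) hr] with h hh
  have key := Convex.norm_image_sub_le_of_norm_hasDerivWithin_le (𝕜 := ℝ) (s := Set.Icc (0:ℝ) 1)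
    (f := fun s => f (x + s • h) - f x - s * inner ℝ (g x) h - s ^ 2 * (1 / 2 * inner ℝ (L h) h))
    (f' := fun s => inner ℝ (g (x + s • h) - g x - L (s • h)) h) (C := ε * ‖h‖ ^ 2) (x := 0) (y := 1)
    (by
      intro s hs
      have h6 : HasDerivAt (fun s : ℝ => x + s • h) h s := by
        simpa using ((hasDerivAt_id s).smul_const h).const_add x
      have h7 := (hf (x + s • h)).comp_hasDerivAt s h6
      have h8 := ((h7.sub_const (f x)).sub ((hasDerivAt_id s).mul_const (inner ℝ (g x) h))).sub
        ((hasDerivAt_pow 2 s).mul_const (1 / 2 * inner ℝ (L h) h))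
      refine (h8.congr_deriv ?_).hasDerivWithinAt
      simp [inner_sub_left, real_inner_smul_left]; ring)
    (by
      intro s hs
      have hsn : ‖s • h‖ ≤ ‖h‖ := by
        rw [norm_smul, Real.norm_eq_abs, abs_of_nonneg hs.1]
        exact mul_le_of_le_one_left (norm_nonneg _) hs.2
      have h9 := h5 (s • h) (by
        rw [mem_ball_zero_iff] at hh ⊢
        exact lt_of_le_of_lt hsn hh)
      calc ‖inner ℝ (g (x + s • h) - g x - L (s • h)) h‖ ≤ ‖g (x + s • h) - g x - L (s • h)‖ * ‖h‖ := norm_inner_le_norm _ _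
        _ ≤ (ε * ‖h‖) * ‖h‖ := by
          gcongr
          exact h9.trans (by gcongr)
        _ = ε * ‖h‖ ^ 2 := by ring)
    (convex_Icc 0 1) (by simp) (by simp)
  simp only [one_smul, zero_smul, add_zero, sub_self, zero_mul, sub_zero, one_mul, one_pow, norm_one, mul_one, zero_pow two_ne_zero] at key
  simpa using key

/-- A subgradient selection. -/
def SubGrad (ψ : Euc n → ℝ) (g : Euc n → Euc n) : Prop :=
  ∀ x y, ψ x + inner ℝ (g x) (y - x) ≤ ψ y

lemma SubGrad.lsc {ψ : Euc n → ℝ} {g : Euc n → Euc n} (h : SubGrad ψ g) : LowerSemicontinuous ψ := by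
  intro x c hc
  have : Continuous (fun y => ψ x + inner ℝ (g x) (y - x)) := by fun_prop
  have h1 : ∀ᶠ y in 𝓝 x, c < ψ x + inner ℝ (g x) (y - x) :=
    continuousAt_const.eventually_lt this.continuousAt (by simpa using hc)
  filter_upwards [h1] with y hy
  exact hy.trans_le (h x y)

lemma prox_exists {ψ : Euc n → ℝ} {g : Euc n → Euc n} (h : SubGrad ψ g) (z : Euc n) :
    ∃ x, (∀ y, ψ x + 1 / 2 * ‖x - z‖ ^ 2 ≤ ψ y + 1 / 2 * ‖y - z‖ ^ 2) ∧
      ∀ y, ψ x + inner ℝ (z - x) (y - x) ≤ ψ y := by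
  have hl : LowerSemicontinuous (fun y => ψ y + 1 / 2 * ‖y - z‖ ^ 2) := by
    apply h.lsc.add
    apply Continuous.lowerSemicontinuous
    fun_prop
  obtain ⟨x, hx, hmin⟩ := LowerSemicontinuousOn.exists_isMinOn (s := closedBall z (2 * ‖g z‖))
    ⟨z, by simp⟩ (isCompact_closedBall _ _) (hl.lowerSemicontinuousOn _)
  have hmin' : ∀ y, ψ x + 1 / 2 * ‖x - z‖ ^ 2 ≤ ψ y + 1 / 2 * ‖y - z‖ ^ 2 := by
    intro y
    by_cases hy : y ∈ closedBall z (2 * ‖g z‖)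
    · exact hmin hy
    · have h1 : ψ x + 1 / 2 * ‖x - z‖ ^ 2 ≤ ψ z + 1 / 2 * ‖z - z‖ ^ 2 := hmin (by simp)
      rw [mem_closedBall, dist_eq_norm, not_le] at hy
      have h2 := h z y
      have h3 := (abs_le.1 (abs_real_inner_le_norm (g z) (y - z))).1
      simp at h1
      nlinarith [norm_nonneg (g z), norm_nonneg (y - z)]
  refine ⟨x, hmin', fun y => ?_⟩
  have key : ∀ t : ℝ, 0 < t → t ≤ 1 → inner ℝ (z - x) (y - x) - t * (1 / 2 * ‖y - x‖ ^ 2) ≤ ψ y - ψ x := by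
    intro t ht ht1
    have h1 := h (x + t • (y - x)) y
    have h2 := h (x + t • (y - x)) x
    have h3 := hmin' (x + t • (y - x))
    rw [show y - (x + t • (y - x)) = (1 - t) • (y - x) by module, inner_smul_right] at h1
    rw [show x - (x + t • (y - x)) = (-t) • (y - x) by module, inner_smul_right] at h2
    rw [show x + t • (y - x) - z = (x - z) + t • (y - x) by abel, norm_add_sq_real, inner_smul_right,
      norm_smul, mul_pow, Real.norm_eq_abs, sq_abs] at h3
    have h4 : ψ (x + t • (y - x)) ≤ t * ψ y + (1 - t) * ψ x := by
      nlinarith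
    have h5 : inner ℝ (z - x) (y - x) = - inner ℝ (x - z) (y - x) := by
      rw [← inner_neg_left]; simp
    rw [h5]
    have h6 : t * (-inner ℝ (x - z) (y - x) - t * (1 / 2 * ‖y - x‖ ^ 2)) ≤ t * (ψ y - ψ x) := by
      nlinarith
    exact le_of_mul_le_mul_left h6 ht
  have ht : Tendsto (fun t : ℝ => inner ℝ (z - x) (y - x) - t * (1 / 2 * ‖y - x‖ ^ 2)) (𝓝[>] 0)
      (𝓝 (inner ℝ (z - x) (y - x))) := by
    have : Continuous (fun t : ℝ => inner ℝ (z - x) (y - x) - t * (1 / 2 * ‖y - x‖ ^ 2)) := by fun_prop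
    have := this.tendsto 0
    simp only [zero_mul, sub_zero] at this
    exact this.mono_left nhdsWithin_le_nhds
  have := le_of_tendsto ht (by
    filter_upwards [Ioc_mem_nhdsGT (zero_lt_one' ℝ)] with t ht
    exact key t ht.1 ht.2)
  linarith

/-- The proximal map data. -/
structure Prox (ψ : Euc n → ℝ) (P : Euc n → Euc n) : Prop where
  min : ∀ z y, ψ (P z) + 1 / 2 * ‖P z - z‖ ^ 2 ≤ ψ y + 1 / 2 * ‖y - z‖ ^ 2
  sub : ∀ z y, ψ (P z) + inner ℝ (z - P z) (y - P z) ≤ ψ y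

lemma Prox.firm {ψ : Euc n → ℝ} {P : Euc n → Euc n} (h : Prox ψ P) (a b : Euc n) :
    ‖P a - P b‖ ^ 2 ≤ inner ℝ (P a - P b) (a - b) := by
  have h1 := h.sub a (P b)
  have h2 := h.sub b (P a)
  have e : inner ℝ (P a - P b) (a - b) - ‖P a - P b‖ ^ 2 =
      - inner ℝ (a - P a) (P b - P a) - inner ℝ (b - P b) (P a - P b) := by
    rw [← real_inner_self_eq_norm_sq]
    simp only [inner_sub_left, inner_sub_right]
    rw [real_inner_comm a (P a), real_inner_comm a (P b), real_inner_comm b (P a), real_inner_comm b (P b), real_inner_comm (P a) (P b)]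
    ring
  linarith

lemma Prox.lip {ψ : Euc n → ℝ} {P : Euc n → Euc n} (h : Prox ψ P) : LipschitzWith 1 P := by
  apply LipschitzWith.of_dist_le_mul
  intro a b
  rw [dist_eq_norm, dist_eq_norm, NNReal.coe_one, one_mul]
  have h1 := h.firm a b
  have h2 := real_inner_le_norm (P a - P b) (a - b)
  by_contra hc
  push Not at hc
  nlinarith [norm_nonneg (a - b), norm_nonneg (P a - P b)]

lemma Prox.fix {ψ : Euc n → ℝ} {P g : Euc n → Euc n} (h : Prox ψ P) (hg : SubGrad ψ g) (x : Euc n) :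
    P (x + g x) = x := by
  have h1 := h.sub (x + g x) x
  have h2 := hg x (P (x + g x))
  set y := P (x + g x)
  have e : inner ℝ (g x) (y - x) + inner ℝ (x + g x - y) (x - y) = ‖y - x‖ ^ 2 := by
    rw [← real_inner_self_eq_norm_sq]
    simp only [inner_sub_left, inner_sub_right, inner_add_left]
    rw [real_inner_comm x y]
    ring
  have h3 : ‖y - x‖ ^ 2 ≤ 0 := by linarith
  have h4 : ‖y - x‖ = 0 := by
    have := norm_nonneg (y - x)
    nlinarith
  exact sub_eq_zero.1 (norm_eq_zero.1 h4)

/-- The Moreau envelope is differentiable. -/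
lemma Prox.grad {ψ : Euc n → ℝ} {P : Euc n → Euc n} (h : Prox ψ P) (a : Euc n) :
    HasFDerivAt (fun z => ψ (P z) + 1 / 2 * ‖P z - z‖ ^ 2) (innerSL ℝ (a - P a)) a := by
  have up : ∀ a b, ψ (P b) + 1 / 2 * ‖P b - b‖ ^ 2 ≤ ψ (P a) + 1 / 2 * ‖P a - a‖ ^ 2 + inner ℝ (a - P a) (b - a) + 1 / 2 * ‖b - a‖ ^ 2 := by
    intro a b
    have h1 := h.min b (P a)
    have : ‖P a - b‖ ^ 2 = ‖P a - a‖ ^ 2 + 2 * inner ℝ (a - P a) (b - a) + ‖b - a‖ ^ 2 := by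
      rw [show P a - b = (P a - a) - (b - a) by abel, norm_sub_sq_real,
        show inner ℝ (a - P a) (b - a) = - inner ℝ (P a - a) (b - a) by rw [← inner_neg_left]; simp]
      ring
    rw [this] at h1
    linarith
  rw [hasFDerivAt_iff_isLittleO]
  have hb : ∀ b, |ψ (P b) + 1 / 2 * ‖P b - b‖ ^ 2 - (ψ (P a) + 1 / 2 * ‖P a - a‖ ^ 2) - inner ℝ (a - P a) (b - a)| ≤ 3 * ‖b - a‖ ^ 2 := by
    intro b
    have h1 := up a b
    have h2 := up b a
    have h3 : inner ℝ (b - P b) (a - b) = - inner ℝ (a - P a) (b - a) - ‖b - a‖ ^ 2 + inner ℝ (P b - P a) (b - a) := by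
      rw [← real_inner_self_eq_norm_sq]
      simp only [inner_sub_left, inner_sub_right]
      rw [real_inner_comm a b]
      ring
    have h4 : inner ℝ (P b - P a) (b - a) ≤ ‖b - a‖ ^ 2 := by
      have h5 := h.lip.dist_le_mul b a
      rw [dist_eq_norm, dist_eq_norm, NNReal.coe_one, one_mul] at h5
      calc inner ℝ (P b - P a) (b - a) ≤ ‖P b - P a‖ * ‖b - a‖ := real_inner_le_norm _ _
        _ ≤ ‖b - a‖ * ‖b - a‖ := by gcongr
        _ = _ := by ring
    rw [norm_sub_rev a b] at h2
    rw [abs_le]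
    constructor <;> nlinarith [sq_nonneg ‖b - a‖]
  have hO : (fun b => ψ (P b) + 1 / 2 * ‖P b - b‖ ^ 2 - (ψ (P a) + 1 / 2 * ‖P a - a‖ ^ 2) - innerSL ℝ (a - P a) (b - a)) =O[𝓝 a] fun b => ‖b - a‖ ^ 2 := by
    refine Asymptotics.IsBigO.of_bound 3 (Eventually.of_forall fun b => ?_)
    rw [Real.norm_eq_abs, norm_pow, norm_norm]
    exact hb b
  refine hO.trans_isLittleO ?_
  have ht : Tendsto (fun b : Euc n => b - a) (𝓝 a) (𝓝 0) := by
    have : Continuous (fun b : Euc n => b - a) := by fun_prop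
    simpa using this.tendsto a
  exact (norm_sq_isLittleO.comp_tendsto ht).of_norm_right

lemma alex_point {ψ : Euc n → ℝ} {P g : Euc n → Euc n} (h : Prox ψ P) (hg : SubGrad ψ g)
    {x : Euc n} (L : Euc n ≃L[ℝ] Euc n) (hL : HasFDerivAt P (L : Euc n →L[ℝ] Euc n) (x + g x)) :
    ∃ q, Jet ψ x (g x) q := by
  set z := x + g x with hz
  have hPz : P z = x := h.fix hg x
  -- the displacement h_k
  set H : Euc n → Euc n := fun k => x + k + g (x + k) - z with hH
  have hPH : ∀ k, P (z + H k) = x + k := by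
    intro k
    rw [hH]
    simp only [add_sub_cancel]
    exact h.fix hg (x + k)
  -- coercivity of `L`
  obtain ⟨c, hc, hLc⟩ : ∃ c > 0, ∀ y, c * ‖y‖ ≤ ‖L y‖ := by
    refine ⟨(‖(L.symm : Euc n →L[ℝ] Euc n)‖ + 1)⁻¹, by positivity, fun y => ?_⟩
    have h1 := (L.symm : Euc n →L[ℝ] Euc n).le_opNorm (L y)
    simp only [ContinuousLinearEquiv.coe_coe, ContinuousLinearEquiv.symm_apply_apply] at h1
    rw [inv_mul_le_iff₀ (by positivity)]
    nlinarith [norm_nonneg (L y)]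
  have hlo := hasFDerivAt_iff_isLittleO_nhds_zero.1 hL
  have hlo2 := Asymptotics.isLittleO_iff.1 hlo (show 0 < c / 2 by positivity)
  obtain ⟨r, hr, h5⟩ := Metric.eventually_nhds_iff_ball.1 hlo2
  have hsmall : ∀ w : Euc n, ‖w‖ < r → c / 2 * ‖w‖ ≤ ‖P (z + w) - x‖ := by
    intro w hw
    have h6 := h5 w (by simpa using hw)
    rw [hPz] at h6
    have h7 := hLc w
    have h8 : ‖L w‖ ≤ ‖P (z + w) - x‖ + ‖P (z + w) - x - L w‖ := by
      have := norm_sub_norm_le (L w) (P (z + w) - x)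
      rw [norm_sub_rev (L w) (P (z + w) - x)] at this
      linarith
    have h6' : ‖P (z + w) - x - L w‖ ≤ c / 2 * ‖w‖ := h6
    linarith
  have hlarge : ∀ w : Euc n, r ≤ ‖w‖ → (c / 2) ^ 2 * (r / 2) ≤ ‖P (z + w) - x‖ := by
    intro w hw
    have hwp : 0 < ‖w‖ := hr.trans_le hw
    set t := r / 2 / ‖w‖ with ht
    have htp : 0 < t := by positivity
    have ht1 : t < 1 := by
      rw [ht, div_lt_one hwp]; linarith
    have hnw : ‖t • w‖ = r / 2 := by
      rw [norm_smul, Real.norm_eq_abs, abs_of_pos htp, ht]; field_simp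
    have h6 := hsmall (t • w) (by rw [hnw]; linarith)
    have h7 := h.firm (z + t • w) z
    have h8 := h.firm (z + w) (z + t • w)
    rw [hPz, add_sub_cancel_left, inner_smul_right] at h7
    rw [show z + w - (z + t • w) = (1 - t) • w by module, inner_smul_right] at h8
    have h9 : inner ℝ (P (z + w) - P (z + t • w)) w = inner ℝ (P (z + w) - x) w - inner ℝ (P (z + t • w) - x) w := by
      rw [← inner_sub_left]; congr 1; abel
    rw [h9] at h8
    have h10 : inner ℝ (P (z + t • w) - x) w ≤ inner ℝ (P (z + w) - x) w := by
      have : 0 ≤ (1 - t) * (inner ℝ (P (z + w) - x) w - inner ℝ (P (z + t • w) - x) w) :=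
        le_trans (sq_nonneg _) h8
      have := nonneg_of_mul_nonneg_right this (by linarith : 0 < 1 - t)
      linarith
    have h11 := real_inner_le_norm (P (z + w) - x) w
    rw [hnw] at h6
    have h12 : (c / 2 * (r / 2)) ^ 2 ≤ ‖P (z + t • w) - x‖ ^ 2 := by gcongr
    have h13 : (c / 2 * (r / 2)) ^ 2 ≤ t * (‖P (z + w) - x‖ * ‖w‖) := by
      calc _ ≤ _ := h12
        _ ≤ _ := h7
        _ ≤ _ := by gcongr; exact h10.trans h11
    have h14 : t * (‖P (z + w) - x‖ * ‖w‖) = r / 2 * ‖P (z + w) - x‖ := by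
      rw [ht]; field_simp
    rw [h14] at h13
    have h15 : r / 2 * ((c / 2) ^ 2 * (r / 2)) ≤ r / 2 * ‖P (z + w) - x‖ := by
      calc _ = _ := by ring
        _ ≤ _ := h13
    exact le_of_mul_le_mul_left h15 (by positivity)
  have hHO : H =O[𝓝 0] fun k => ‖k‖ := by
    refine Asymptotics.IsBigO.of_bound (2 / c) ?_
    filter_upwards [Metric.ball_mem_nhds (0 : Euc n) (show 0 < (c / 2) ^ 2 * (r / 2) by positivity)] with k hk
    rw [mem_ball_zero_iff] at hk
    have h6 : ‖H k‖ < r := by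
      by_contra hcon
      push Not at hcon
      have := hlarge _ hcon
      rw [hPH, add_sub_cancel_left] at this
      linarith
    have := hsmall _ h6
    rw [hPH, add_sub_cancel_left] at this
    rw [norm_norm, div_mul_eq_mul_div, le_div_iff₀ hc]
    linarith
  have hH0 : Tendsto H (𝓝 0) (𝓝 0) := hHO.trans_tendsto tendsto_norm_zero
  -- e = k - L h
  have he : (fun k => k - L (H k)) =o[𝓝 0] fun k => ‖k‖ := by
    have := (hlo.comp_tendsto hH0).trans_isBigO hHO
    refine this.congr_left fun k => ?_
    simp only [Function.comp, hPH, hPz, ContinuousLinearEquiv.coe_coe]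
    abel
  have he2 : (fun k => L.symm (k - L (H k))) =o[𝓝 0] fun k => ‖k‖ :=
    ((L.symm : Euc n →L[ℝ] Euc n).isBigO_comp _ _).trans_isLittleO he
  -- expansion of the envelope
  have hE := ray_expansion (x := z) (f := fun z => ψ (P z) + 1 / 2 * ‖P z - z‖ ^ 2) (g := fun a => a - P a)
    h.grad ((hasFDerivAt_id z).sub hL)
  have hE2 := (hE.comp_tendsto hH0).trans_isBigO (hHO.norm_left.pow 2)
  have hin : ∀ (f g : Euc n → Euc n), f =o[𝓝 0] (fun k => ‖k‖) → g =O[𝓝 0] (fun k => ‖k‖) →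
      (fun k => inner ℝ (f k) (g k)) =o[𝓝 0] fun k => ‖k‖ ^ 2 := by
    intro f g hf hg
    have : (fun h => inner ℝ (f h) (g h)) =O[𝓝 0] fun h => ‖f h‖ * ‖g h‖ := by
      refine Asymptotics.IsBigO.of_bound 1 (Eventually.of_forall fun h => ?_)
      have := abs_real_inner_le_norm (f h) (g h)
      simpa using this
    refine this.trans_isLittleO ?_
    refine (hf.norm_left.mul_isBigO hg.norm_left).congr_right fun h => ?_
    ring
  have hid : (fun k : Euc n => k) =O[𝓝 0] fun k => ‖k‖ := (Asymptotics.isBigO_refl _ _).norm_right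
  refine ⟨fun k => inner ℝ (L.symm k - k) k, ⟨(innerSL ℝ).comp ((L.symm : Euc n →L[ℝ] Euc n) - ContinuousLinearMap.id ℝ (Euc n)), fun k => rfl⟩, ?_⟩
  refine ((hE2.add ((hin _ _ he hHO).const_mul_left (1/2))).sub ((hin _ _ he2 hid).const_mul_left (1/2))).congr_left fun k => ?_
  simp only [Function.comp, hPH, hPz]
  have ez : z = x + g x := hz
  have e1 : x + k - (z + H k) = - g x + (k - H k) := by rw [ez]; abel
  have e2 : x - z = - g x := by rw [ez]; abel
  have e3 : z - x = g x := by rw [ez]; abel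
  have e4 : L.symm (k - L (H k)) = L.symm k - H k := by simp
  rw [e1, e2, e3, e4]
  have e5 : (ContinuousLinearMap.id ℝ (Euc n) - (L : Euc n →L[ℝ] Euc n)) (H k) = H k - L (H k) := by simp
  rw [e5, norm_add_sq_real, ← real_inner_self_eq_norm_sq (k - H k)]
  generalize H k = w
  generalize L w = Lw
  generalize L.symm k = Sk
  simp only [inner_sub_left, inner_sub_right, inner_neg_left]
  rw [real_inner_comm w k]
  ring

/-- Alexandrov's theorem for functions with subgradients everywhere. -/
lemma alexandrov {ψ : Euc n → ℝ} {g : Euc n → Euc n} (hg : SubGrad ψ g) :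
    ∃ N : Set (Euc n), muE n N = 0 ∧ ∀ x ∉ N, ∃ q, Jet ψ x (g x) q := by
  choose P h1 h2 using prox_exists hg
  have hP : Prox ψ P := ⟨h1, h2⟩
  set Z1 := {z | ¬ DifferentiableAt ℝ P z}
  set Z2 := {z | DifferentiableAt ℝ P z ∧ (fderiv ℝ P z).det = 0}
  refine ⟨P '' Z1 ∪ P '' Z2, ?_, ?_⟩
  · refine measure_union_null (lip_null (hP.lip.lipschitzOnWith) ?_) ?_
    · exact hP.lip.ae_differentiableAt
    · exact addHaar_image_eq_zero_of_det_fderivWithin_eq_zero (muE n)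
        (fun z hz => hz.1.hasFDerivAt.hasFDerivWithinAt) (fun z hz => hz.2)
  · intro x hx
    have hd : DifferentiableAt ℝ P (x + g x) := by
      by_contra hc
      exact hx (Or.inl ⟨x + g x, hc, hP.fix hg x⟩)
    have hdet : (fderiv ℝ P (x + g x)).det ≠ 0 := by
      intro hc
      exact hx (Or.inr ⟨x + g x, ⟨hd, hc⟩, hP.fix hg x⟩)
    refine alex_point hP hg ((fderiv ℝ P (x + g x)).toContinuousLinearEquivOfDetNeZero hdet) ?_
    rw [ContinuousLinearMap.coe_toContinuousLinearEquivOfDetNeZero]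
    exact hd.hasFDerivAt

end A7

section A8
variable {n : ℕ}

lemma conj_exists {K : Set (Euc n)} (hK : IsCompact K) (hne : K.Nonempty) {F : Euc n → ℝ}
    (hF : LowerSemicontinuousOn F K) (k : ℝ) :
    ∃ (ψ : Euc n → ℝ) (Y : Euc n → Euc n), ∀ x, Y x ∈ K ∧ ψ x = k * inner ℝ x (Y x) - F (Y x) ∧
      ∀ y ∈ K, k * inner ℝ x y - F y ≤ ψ x := by
  have : ∀ x : Euc n, ∃ y ∈ K, ∀ z ∈ K, k * inner ℝ x z - F z ≤ k * inner ℝ x y - F y := by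
    intro x
    have hl : LowerSemicontinuousOn (fun y => F y + (-(k * inner ℝ x y))) K := by
      apply hF.add
      exact (by fun_prop : Continuous (fun y : Euc n => -(k * inner ℝ x y))).lowerSemicontinuous.lowerSemicontinuousOn K
    obtain ⟨a, ha, hmin⟩ := hl.exists_isMinOn hne hK
    refine ⟨a, ha, fun z hz => ?_⟩
    have : F a + (-(k * inner ℝ x a)) ≤ F z + (-(k * inner ℝ x z)) := hmin hz
    linarith
  choose Y hY1 hY2 using this
  exact ⟨fun x => k * inner ℝ x (Y x) - F (Y x), Y, fun x => ⟨hY1 x, rfl, hY2 x⟩⟩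

lemma SubGrad.lip {ψ : Euc n → ℝ} {g : Euc n → Euc n} (h : SubGrad ψ g) {L : ℝ} (hL : ∀ x, ‖g x‖ ≤ L)
    (x y : Euc n) : ψ y ≤ ψ x + L * ‖y - x‖ := by
  have h1 := h y x
  have h2 : |inner ℝ (g y) (x - y)| ≤ ‖g y‖ * ‖x - y‖ := abs_real_inner_le_norm _ _
  have h3 : ‖g y‖ * ‖x - y‖ ≤ L * ‖x - y‖ := mul_le_mul_of_nonneg_right (hL y) (norm_nonneg _)
  rw [norm_sub_rev y x]
  linarith [neg_abs_le (inner ℝ (g y) (x - y))]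

lemma SubGrad.cont {ψ : Euc n → ℝ} {g : Euc n → Euc n} (h : SubGrad ψ g) {L : ℝ} (hL : ∀ x, ‖g x‖ ≤ L) :
    Continuous ψ := by
  have hL0 : 0 ≤ L := (norm_nonneg _).trans (hL 0)
  have : LipschitzWith (Real.toNNReal L) ψ := by
    apply LipschitzWith.of_dist_le_mul
    intro x y
    have h1 := h.lip hL x y
    have h2 := h.lip hL y x
    rw [norm_sub_rev] at h1
    rw [Real.dist_eq, dist_eq_norm, abs_le]
    rw [Real.coe_toNNReal L hL0]
    constructor <;> linarith
  exact this.continuous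

/-- If a linear form is dominated by a quadratic one it vanishes. -/
lemma lin_eq_zero {a : Euc n} {k : ℝ} (h : ∀ z : Euc n, inner ℝ a z ≤ k * ‖z‖ ^ 2) : a = 0 := by
  by_contra ha
  have hp : 0 < ‖a‖ := norm_pos_iff.2 ha
  have hk : 0 < |k| + 1 := by positivity
  have h1 := h ((1 / (2 * (|k| + 1))) • a)
  rw [real_inner_smul_right, real_inner_self_eq_norm_sq, norm_smul, mul_pow, Real.norm_eq_abs, sq_abs] at h1
  have h2 : k * ((1 / (2 * (|k| + 1))) ^ 2 * ‖a‖ ^ 2) ≤ (|k|+1) * ((1 / (2 * (|k| + 1))) ^ 2 * ‖a‖ ^ 2) := by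
    apply mul_le_mul_of_nonneg_right _ (by positivity)
    linarith [le_abs_self k]
  have h3 : (|k|+1) * ((1 / (2 * (|k| + 1))) ^ 2 * ‖a‖ ^ 2) = 1 / 4 * (1 / (|k| + 1) * ‖a‖ ^ 2) := by
    field_simp; ring
  have h4 : 1 / (2 * (|k| + 1)) * ‖a‖ ^ 2 = 1 / 2 * (1 / (|k| + 1) * ‖a‖ ^ 2) := by
    field_simp
  have h5 : 0 < 1 / (|k| + 1) * ‖a‖ ^ 2 := by positivity
  linarith

lemma exists_good {ψ1 ψ2 : Euc n → ℝ} {g1 g2 : Euc n → Euc n} (h1 : SubGrad ψ1 g1) (h2 : SubGrad ψ2 g2)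
    {L k ρ : ℝ} (hL1 : ∀ x, ‖g1 x‖ ≤ L) (hL2 : ∀ x, ‖g2 x‖ ≤ L) (hk : 0 < k) (hρ : 0 < ρ)
    {N : Set (Euc n)} (hN : muE n N = 0) :
    ∃ p x, ‖p‖ < ρ ∧ x ∉ N ∧ p = g1 x + g2 x - (2 * k) • x ∧
      ∀ z, ψ1 z + ψ2 z - k * ‖z‖ ^ 2 - inner ℝ p z ≤ ψ1 x + ψ2 x - k * ‖x‖ ^ 2 - inner ℝ p x := by
  have hex : ∀ p : Euc n, ∃ x, ∀ z, ψ1 z + ψ2 z - k * ‖z‖ ^ 2 - inner ℝ p z ≤ ψ1 x + ψ2 x - k * ‖x‖ ^ 2 - inner ℝ p x := by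
    intro p
    have hc : Continuous (fun z => ψ1 z + ψ2 z - k * ‖z‖ ^ 2 - inner ℝ p z) := by
      have := h1.cont hL1
      have := h2.cont hL2
      fun_prop
    apply hc.exists_forall_ge
    have ht : Tendsto (fun r : ℝ => (ψ1 0 + ψ2 0) + (r * (2 * L + ‖p‖ - k * r))) atTop atBot := by
      apply tendsto_atBot_add_const_left
      apply Tendsto.atTop_mul_atBot₀ tendsto_id
      apply tendsto_atBot_add_const_left atTop (2 * L + ‖p‖)
      exact (tendsto_id.const_mul_atTop hk |> tendsto_neg_atTop_atBot.comp)
    refine tendsto_atBot_mono (fun z => ?_) (ht.comp (tendsto_norm_cocompact_atTop (E := Euc n)))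
    have e1 := h1.lip hL1 0 z
    have e2 := h2.lip hL2 0 z
    rw [sub_zero] at e1 e2
    have e3 := abs_real_inner_le_norm p z
    simp only [Function.comp]
    nlinarith [neg_abs_le (inner ℝ p z)]
  choose X hX using hex
  set Gr : Euc n → Euc n := fun x => g1 x + g2 x - (2 * k) • x with hGr
  have key : ∀ x z : Euc n, ψ1 x + ψ2 x - k * ‖x‖ ^ 2 + inner ℝ (Gr x) (z - x) - k * ‖z - x‖ ^ 2
      ≤ ψ1 z + ψ2 z - k * ‖z‖ ^ 2 := by
    intro x z
    have a1 := h1 x z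
    have a2 := h2 x z
    have a3 : ‖z - x‖ ^ 2 = ‖z‖ ^ 2 - 2 * inner ℝ z x + ‖x‖ ^ 2 := norm_sub_sq_real z x
    have a4 : inner ℝ (Gr x) (z - x) = inner ℝ (g1 x) (z - x) + inner ℝ (g2 x) (z - x)
       - 2 * k * (inner ℝ z x - ‖x‖ ^ 2) := by
      rw [hGr]
      simp only [inner_sub_left, inner_add_left, real_inner_smul_left]
      rw [inner_sub_right x, real_inner_self_eq_norm_sq, real_inner_comm z x]
    rw [a4, a3]
    linarith
  have hp : ∀ p x : Euc n, (∀ z, ψ1 z + ψ2 z - k * ‖z‖ ^ 2 - inner ℝ p z ≤ ψ1 x + ψ2 x - k * ‖x‖ ^ 2 - inner ℝ p x) →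
      p = Gr x := by
    intro p x hx
    have : Gr x - p = 0 := by
      apply lin_eq_zero (k := k)
      intro z
      have b1 := key x (x + z)
      have b2 := hx (x + z)
      rw [add_sub_cancel_left] at b1
      rw [inner_add_right] at b2
      rw [inner_sub_left]
      linarith
    exact (sub_eq_zero.1 this).symm
  set Kset : Set (Euc n) := X '' (ball 0 ρ) with hKs
  have hlip : LipschitzOnWith (Real.toNNReal (3 * k)) Gr Kset := by
    apply LipschitzOnWith.of_dist_le_mul
    rintro _ ⟨p, hpρ, rfl⟩ _ ⟨p', hp'ρ, rfl⟩
    rw [← hp p _ (hX p), ← hp p' _ (hX p')]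
    set x := X p
    set x' := X p'
    rw [dist_eq_norm, dist_eq_norm]
    rw [Real.coe_toNNReal (3 * k) (by positivity)]
    by_cases hpp : p' - p = 0
    · rw [← norm_sub_rev p' p, hpp]; simp; positivity
    have hpos : 0 < ‖p' - p‖ := norm_pos_iff.2 hpp
    set w := (‖x - x'‖ / ‖p' - p‖) • (p' - p) with hw
    have c1 := hX p (x' + w)
    have c2 := key x' (x' + w)
    have c3 := hX p' x
    rw [← hp p' _ (hX p')] at c2
    rw [add_sub_cancel_left] at c2
    rw [inner_add_right] at c1
    have hwn : ‖w‖ = ‖x - x'‖ := by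
      rw [hw, norm_smul, Real.norm_of_nonneg (by positivity)]; field_simp
    have hwi : inner ℝ p' w - inner ℝ p w = ‖x - x'‖ * ‖p' - p‖ := by
      rw [← inner_sub_left, hw, real_inner_smul_right, real_inner_self_eq_norm_sq]; field_simp
    rw [hwn] at c2
    have c4 : inner ℝ (p' - p) (x' - x) ≤ ‖p' - p‖ * ‖x' - x‖ := real_inner_le_norm _ _
    have hxx := hX p x'
    have c5 : ‖x - x'‖ * ‖p' - p‖ ≤ k * ‖x - x'‖ ^ 2 + inner ℝ (p - p') (x' - x) := by
      simp only [inner_sub_left, inner_sub_right]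
      change _ ≤ ψ1 x + ψ2 x - k * ‖x‖ ^ 2 - inner ℝ p x at c1
      change _ ≤ ψ1 x' + ψ2 x' - k * ‖x'‖ ^ 2 - inner ℝ p' x' at c3
      linarith
    have c6 : inner ℝ (p - p') (x' - x) ≤ 2 * k * ‖x - x'‖ ^ 2 := by
      have := key x' x
      rw [← hp p' _ (hX p')] at this
      have d1 := hX p x'
      have d2 := key x x'
      rw [← hp p _ (hX p)] at d2
      rw [norm_sub_rev x' x] at d2
      simp only [inner_sub_left, inner_sub_right] at *
      change _ ≤ ψ1 x + ψ2 x - k * ‖x‖ ^ 2 - inner ℝ p x at d1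
      change _ ≤ ψ1 x' + ψ2 x' - k * ‖x'‖ ^ 2 - inner ℝ p' x' at c3
      linarith
    rw [norm_sub_rev p p']
    have hx0 : 0 ≤ ‖x - x'‖ := norm_nonneg _
    rcases hx0.eq_or_lt with h0 | h0
    · exfalso
      have : x = x' := by rw [← sub_eq_zero, ← norm_eq_zero, ← h0]
      apply hpp
      rw [hp p _ (hX p), hp p' _ (hX p')]
      change Gr x' - Gr x = 0
      rw [this, sub_self]
    · have : ‖x - x'‖ * ‖p' - p‖ ≤ ‖x - x'‖ * (3 * k * ‖x - x'‖) := by nlinarith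
      exact le_of_mul_le_mul_left this h0
  have : ¬ Kset ⊆ N := by
    intro hsub
    have z1 : muE n Kset = 0 := measure_mono_null hsub hN
    have z2 := lip_null hlip z1
    have z3 : ball (0 : Euc n) ρ ⊆ Gr '' Kset := by
      intro p hpρ
      exact ⟨X p, ⟨p, hpρ, rfl⟩, (hp p _ (hX p)).symm⟩
    have z4 := measure_mono_null z3 z2
    exact (measure_ball_pos (muE n) (0 : Euc n) hρ).ne' z4
  rw [Set.not_subset] at this
  obtain ⟨_, ⟨p, hpρ, rfl⟩, hx⟩ := this
  exact ⟨p, X p, by simpa using hpρ, hx, hp p _ (hX p), hX p⟩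

end A8

section A9
variable {n : ℕ}

/-- No upward cone touches `u` from below at `s`. -/
def NC (u : Euc n → ℝ) (s : Euc n) : Prop :=
  ∀ (P : Euc n) (e C : ℝ), 0 < e →
    ¬ ∀ᶠ z in 𝓝 s, u s + inner ℝ P (z - s) + e * ‖z - s‖ - C * ‖z - s‖ ^ 2 ≤ u z

lemma contact_null {K U : Set (Euc n)} (hU : IsOpen U) (hUK : U ⊆ K) {u : Euc n → ℝ} {s : Euc n}
    (hs : s ∈ U) (hNC : NC u s) {k : ℝ} (hk : 0 < k) :
    muE n {x | ∀ y ∈ K, k * inner ℝ x y - (k / 2 * ‖y‖ ^ 2 + u y) ≤ k * inner ℝ x s - (k / 2 * ‖s‖ ^ 2 + u s)} = 0 := by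
  set C := {x : Euc n | ∀ y ∈ K, k * inner ℝ x y - (k / 2 * ‖y‖ ^ 2 + u y) ≤ k * inner ℝ x s - (k / 2 * ‖s‖ ^ 2 + u s)} with hC
  have hconv : Convex ℝ C := by
    intro x hx y hy a b ha hb hab z hz
    have h1 := mul_le_mul_of_nonneg_left (hx z hz) ha
    have h2 := mul_le_mul_of_nonneg_left (hy z hz) hb
    simp only [inner_add_left, real_inner_smul_left]
    have hb' : b = 1 - a := by linarith
    subst hb'
    linarith
  have hCint : interior C = ∅ := by
    by_contra hne
    obtain ⟨x, hx⟩ := Set.nonempty_iff_ne_empty.2 hne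
    obtain ⟨e, he, hball⟩ := Metric.mem_nhds_iff.1 (mem_interior_iff_mem_nhds.1 hx)
    refine hNC (k • (x - s)) (k * (e / 2)) (k / 2) (by positivity) ?_
    filter_upwards [hU.mem_nhds hs] with y hy
    have hns : ‖y‖ ^ 2 = ‖y - s‖ ^ 2 + 2 * inner ℝ s (y - s) + ‖s‖ ^ 2 := by
      have : y = (y - s) + s := by abel
      conv_lhs => rw [this, norm_add_sq_real]
      rw [real_inner_comm]
    have hgen : ∀ x' ∈ C, u s + k * inner ℝ x' (y - s) - k / 2 * (‖y‖ ^ 2 - ‖s‖ ^ 2) ≤ u y := by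
      intro x' hx'
      have := hx' y (hUK hy)
      rw [inner_sub_right]; linarith
    by_cases hys : y - s = 0
    · rw [sub_eq_zero] at hys
      subst hys; simp
    have hp : 0 < ‖y - s‖ := norm_pos_iff.2 hys
    have hm : x + (e / 2 / ‖y - s‖) • (y - s) ∈ C := by
      apply hball
      rw [mem_ball, dist_eq_norm, add_sub_cancel_left, norm_smul, Real.norm_of_nonneg (by positivity)]
      have : e / 2 / ‖y - s‖ * ‖y - s‖ = e / 2 := by field_simp
      rw [this]; linarith
    have h1 := hgen _ hm
    rw [inner_add_left, real_inner_smul_left, real_inner_self_eq_norm_sq, hns] at h1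
    rw [real_inner_smul_left, inner_sub_left]
    have h2 : e / 2 / ‖y - s‖ * ‖y - s‖ ^ 2 = e / 2 * ‖y - s‖ := by field_simp
    rw [h2] at h1
    linarith
  have : C ⊆ frontier C := by
    rw [frontier, hCint, sdiff_empty]; exact subset_closure
  exact measure_mono_null this (hconv.addHaar_frontier (muE n))

lemma Jet.max_le {f : Euc n → ℝ} {x p : Euc n} {q : Euc n → ℝ} (hf : Jet f x p q) (p' : Euc n)
    (hmax : ∀ z, f z - inner ℝ p' z ≤ f x - inner ℝ p' x) (hp : p = p') (h : Euc n) : q h ≤ 0 := by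
  subst hp
  by_contra hq
  push Not at hq
  have hh : 0 < ‖h‖ := by
    rw [norm_pos_iff]; rintro rfl
    obtain ⟨B, hB⟩ := hf.1
    simp [hB] at hq
  have h1 := (Asymptotics.isLittleO_iff.1 hf.2) (c := q h / (4 * ‖h‖ ^ 2)) (by positivity)
  have ht : Tendsto (fun t : ℝ => t • h) (𝓝[>] 0) (𝓝 0) := by
    have : Tendsto (fun t : ℝ => t • h) (𝓝 0) (𝓝 ((0 : ℝ) • h)) :=
      (continuous_id.smul continuous_const).tendsto 0
    rw [zero_smul] at this
    exact this.mono_left nhdsWithin_le_nhds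
  obtain ⟨t, h2, ht0⟩ := ((ht.eventually h1).and self_mem_nhdsWithin).exists
  have ht0 : 0 < t := ht0
  have h3 := hmax (x + t • h)
  rw [inner_add_right] at h3
  obtain ⟨B, hB⟩ := hf.1
  have h4 : q (t • h) = t ^ 2 * q h := by rw [hB, hB]; simp; ring
  rw [h4, Real.norm_eq_abs, Real.norm_eq_abs, abs_of_nonneg (by positivity : 0 ≤ ‖t • h‖ ^ 2), norm_smul,
    Real.norm_of_nonneg ht0.le] at h2
  have h5 : q h / (4 * ‖h‖ ^ 2) * (t * ‖h‖) ^ 2 = 1 / 4 * (t ^ 2 * q h) := by field_simp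
  rw [h5] at h2
  have := neg_abs_le (f (x + t • h) - f x - inner ℝ p (t • h) - 1 / 2 * (t ^ 2 * q h))
  have h6 : 0 < t ^ 2 * q h := by positivity
  linarith

lemma near_interior {K U : Set (Euc n)} (hK : IsCompact K) (hU : IsOpen U)
    {u w : Euc n → ℝ} (hu : LowerSemicontinuousOn u K) (hw : ContinuousOn w K) {τ σ : ℝ} (hσ : τ < σ)
    (hb : ∀ x ∈ K, x ∉ U → w x - u x ≤ τ) :
    ∃ r > 0, ∀ y ∈ K, ∀ y' ∈ K, ‖y - y'‖ < r → σ ≤ w y' - u y → y ∈ U ∧ y' ∈ U := by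
  set m := (σ + τ) / 2 with hm
  set Z := {y ∈ K | u y + (- w y) ≤ -m} with hZ
  have hZc : IsCompact Z := by
    have hl : LowerSemicontinuousOn (fun y => u y + (- w y)) K :=
      hu.add hw.neg.lowerSemicontinuousOn
    obtain ⟨V, hV, hVe⟩ := lowerSemicontinuousOn_iff_preimage_Iic.1 hl (-m)
    have : Z = K ∩ V := by
      rw [← hVe]; ext y; simp [hZ]
    rw [this]
    exact hK.inter_right hV
  have hZU : Z ⊆ U := by
    intro y hy
    by_contra hyU
    have := hb y hy.1 hyU
    have h2 := hy.2
    linarith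
  obtain ⟨r1, hr1, hth⟩ := hZc.exists_thickening_subset_open hU hZU
  have huc := hK.uniformContinuousOn_of_continuous hw
  rw [Metric.uniformContinuousOn_iff] at huc
  obtain ⟨r2, hr2, huc⟩ := huc ((σ - τ) / 2) (by linarith)
  refine ⟨min r1 r2, lt_min hr1 hr2, fun y hy y' hy' hd hσ' => ?_⟩
  have h1 := huc y hy y' hy' (by rw [dist_eq_norm]; exact hd.trans_le (min_le_right _ _))
  rw [Real.dist_eq, abs_lt] at h1
  have hyZ : y ∈ Z := ⟨hy, by linarith [h1.1]⟩
  refine ⟨hZU hyZ, hth ?_⟩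
  rw [Metric.mem_thickening_iff]
  exact ⟨y, hyZ, by rw [dist_eq_norm, norm_sub_rev]; exact hd.trans_le (min_le_left _ _)⟩

end A9

section A10
variable {n : ℕ}

lemma Aq_perturb {p pu : Euc n} {q q' : Euc n → ℝ} (hq : ∀ h, q h ≤ q' h) {c : ℝ}
    (hc : 3 * ‖p‖ * ‖pu‖ + ‖p‖ ^ 2 ≤ c) (h : Euc n) :
    Aq pu q' h ≤ Aq (pu + p) q h + c * ‖h‖ ^ 2 := by
  have h1 := abs_real_inner_le_norm pu h
  have h2 := abs_real_inner_le_norm p h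
  have h3 := abs_real_inner_le_norm pu p
  have h4 : |inner ℝ pu h * inner ℝ p h| ≤ (‖pu‖ * ‖h‖) * (‖p‖ * ‖h‖) := by
    rw [abs_mul]; gcongr
  have h5 := mul_le_mul_of_nonneg_right hc (sq_nonneg ‖h‖)
  have h6 := neg_abs_le (inner ℝ pu h * inner ℝ p h)
  have h7 : inner ℝ pu p * ‖h‖ ^ 2 ≤ ‖pu‖ * ‖p‖ * ‖h‖ ^ 2 :=
    mul_le_mul_of_nonneg_right ((le_abs_self _).trans h3) (sq_nonneg _)
  have h8 : 0 ≤ (inner ℝ p h) ^ 2 := sq_nonneg _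
  have h9 : 0 ≤ ‖p‖ ^ 2 * ‖h‖ ^ 2 := by positivity
  unfold Aq
  rw [inner_add_left, norm_add_sq_real]
  nlinarith [hq h]

lemma low_of_conj {K U : Set (Euc n)} (hU : IsOpen U) (hUK : U ⊆ K) {u ψ : Euc n → ℝ} {k : ℝ} {x y : Euc n}
    (hy : y ∈ U) (hψ : ∀ z, ∀ a ∈ K, k * inner ℝ z a - (k / 2 * ‖a‖ ^ 2 + u a) ≤ ψ z)
    (hx : ψ x = k * inner ℝ x y - (k / 2 * ‖y‖ ^ 2 + u y)) {q : Euc n → ℝ} (hj : Jet ψ x (k • y) q) :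
    LowJet u y (k • (x - y)) (fun h => k * ‖h‖ ^ 2 - q h) := by
  intro ε hε
  have ht : Tendsto (fun t : Euc n => y + t) (𝓝 0) (𝓝 y) := by
    have : Continuous (fun t : Euc n => y + t) := by fun_prop
    simpa using this.tendsto 0
  filter_upwards [(Asymptotics.isLittleO_iff.1 hj.2) hε, ht.eventually (hU.mem_nhds hy)] with h h1 h2
  have h3 := hψ (x + h) (y + h) (hUK h2)
  rw [Real.norm_eq_abs, Real.norm_eq_abs, abs_of_nonneg (by positivity : 0 ≤ ‖h‖ ^ 2)] at h1
  have h4 := (abs_le.1 h1).2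
  rw [norm_add_sq_real] at h3
  simp only [inner_add_left, inner_add_right, real_inner_smul_left, inner_sub_left, real_inner_self_eq_norm_sq] at *
  rw [real_inner_comm y h] at *
  rw [hx] at h4
  linarith

lemma up_of_conj {K U : Set (Euc n)} (hU : IsOpen U) (hUK : U ⊆ K) {u ψ : Euc n → ℝ} {k : ℝ} {x y : Euc n}
    (hy : y ∈ U) (hψ : ∀ z, ∀ a ∈ K, k * inner ℝ z a - (k / 2 * ‖a‖ ^ 2 + - u a) ≤ ψ z)
    (hx : ψ x = k * inner ℝ x y - (k / 2 * ‖y‖ ^ 2 + - u y)) {q : Euc n → ℝ} (hj : Jet ψ x (k • y) q) :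
    UpJet u y (k • (y - x)) (fun h => q h - k * ‖h‖ ^ 2) := by
  intro ε hε
  have := low_of_conj hU hUK hy hψ hx hj ε hε
  filter_upwards [this] with h hh
  simp only [real_inner_smul_left, inner_sub_left] at *
  linarith

lemma conj_subgrad {K : Set (Euc n)} {F ψ : Euc n → ℝ} {Y : Euc n → Euc n} {k : ℝ}
    (h : ∀ x, Y x ∈ K ∧ ψ x = k * inner ℝ x (Y x) - F (Y x) ∧ ∀ y ∈ K, k * inner ℝ x y - F y ≤ ψ x) :
    SubGrad ψ (fun x => k • Y x) := by
  intro x y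
  have h1 := (h y).2.2 (Y x) (h x).1
  rw [(h x).2.1, real_inner_smul_left, inner_sub_right, real_inner_comm y, real_inner_comm x]
  linarith

set_option maxHeartbeats 2000000 in
theorem doubling {G : (Euc n → ℝ) → Prop} (hG : Ell G) {K U S : Set (Euc n)} (hK : IsCompact K)
    (hU : IsOpen U) (hUK : U ⊆ K) (hS : S.Countable) (hSU : S ⊆ U) {u w : Euc n → ℝ}
    (hu : LowerSemicontinuousOn u K) (hw : ContinuousOn w K) (hsup : SupJ G (U \ S) u)
    (hNC : ∀ s ∈ S, NC u s) {c τ : ℝ} (hc : 0 < c)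
    (hstrict : ∀ x ∈ U, ∀ p q, QF q → UpJet w x p q → ¬ G (fun h => Aq p q h + c * ‖h‖ ^ 2))
    (hb : ∀ x ∈ K, x ∉ U → w x - u x ≤ τ) : ∀ x ∈ K, w x - u x ≤ τ := by
  intro x1 hx1
  by_contra hcon
  push Not at hcon
  set θ := w x1 - u x1 with hθ
  set σ := (θ + τ) / 2 with hσ
  have hne : K.Nonempty := ⟨x1, hx1⟩
  obtain ⟨M0, hM0⟩ := hK.isBounded.exists_norm_le
  set M := max M0 0
  have hM : ∀ y ∈ K, ‖y‖ ≤ M := fun y hy => (hM0 y hy).trans (le_max_left _ _)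
  have hMn : 0 ≤ M := le_max_right _ _
  obtain ⟨ymax, -, hwmax⟩ := hK.exists_isMaxOn hne hw
  obtain ⟨ymin, -, humin⟩ := hu.exists_isMinOn hne hK
  set Wm := w ymax
  set um := u ymin
  have hwmax' : ∀ y ∈ K, w y ≤ Wm := fun y hy => hwmax hy
  have humin' : ∀ y ∈ K, um ≤ u y := fun y hy => humin hy
  obtain ⟨r, hr, hnear⟩ := near_interior hK hU hu hw (show τ < σ by linarith) hb
  set D := Wm - um - σ with hD
  have hDp : 0 < D := by linarith [hwmax' x1 hx1, humin' x1 hx1]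
  set k := 4 * D / r ^ 2 + 1 with hk
  have hkp : 0 < k := by positivity
  have hkD : 4 * D < k * r ^ 2 := by
    have : k * r ^ 2 = 4 * D + r ^ 2 := by rw [hk]; field_simp
    rw [this]; have := sq_pos_of_pos hr; linarith
  obtain ⟨ρ, hρ, hρ1, hρk, hρθ, hρc⟩ : ∃ ρ > 0, ρ ≤ 1 ∧ ρ ≤ k ∧ ρ * (2 * M + 1) ≤ θ - σ ∧
      ρ * (3 * (k * (2 * M + 1)) + 1) ≤ c / 2 := by
    have hd1 : 0 < 2 * M + 1 := by positivity
    have hd2 : 0 < 3 * (k * (2 * M + 1)) + 1 := by positivity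
    refine ⟨min (min 1 k) (min ((θ - σ) / (2 * M + 1)) ((c / 2) / (3 * (k * (2 * M + 1)) + 1))), ?_, ?_, ?_, ?_, ?_⟩
    · refine lt_min (lt_min one_pos hkp) (lt_min (div_pos (by linarith) hd1) (by positivity))
    · exact (min_le_left _ _).trans (min_le_left _ _)
    · exact (min_le_left _ _).trans (min_le_right _ _)
    · rw [← le_div_iff₀ hd1]; exact (min_le_right _ _).trans (min_le_left _ _)
    · rw [← le_div_iff₀ hd2]; exact (min_le_right _ _).trans (min_le_right _ _)
  have hqc : LowerSemicontinuousOn (fun y : Euc n => k / 2 * ‖y‖ ^ 2) K :=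
    (by fun_prop : Continuous (fun y : Euc n => k / 2 * ‖y‖ ^ 2)).lowerSemicontinuous.lowerSemicontinuousOn K
  obtain ⟨ψu, Yu, hYu⟩ := conj_exists hK hne (hqc.add hu) k
  obtain ⟨ψw, Yw, hYw⟩ := conj_exists hK hne (hqc.add hw.neg.lowerSemicontinuousOn) k
  have hgu := conj_subgrad (F := fun y => k / 2 * ‖y‖ ^ 2 + u y) hYu
  have hgw := conj_subgrad (F := fun y => k / 2 * ‖y‖ ^ 2 + - w y) hYw
  obtain ⟨N1, hN1, hA1⟩ := alexandrov hgu
  obtain ⟨N2, hN2, hA2⟩ := alexandrov hgw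
  set N3 := ⋃ s ∈ S, {x | ∀ y ∈ K, k * inner ℝ x y - (k / 2 * ‖y‖ ^ 2 + u y) ≤ k * inner ℝ x s - (k / 2 * ‖s‖ ^ 2 + u s)} with hN3d
  have hN3 : muE n N3 = 0 := by
    rw [hN3d, measure_biUnion_null_iff hS]
    intro s hs
    exact contact_null hU hUK (hSU hs) (hNC s hs) hkp
  have hN : muE n (N1 ∪ N2 ∪ N3) = 0 := measure_union_null (measure_union_null hN1 hN2) hN3
  have hbd : ∀ y ∈ K, ‖k • y‖ ≤ k * M := by
    intro y hy
    rw [norm_smul, Real.norm_of_nonneg hkp.le]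
    exact mul_le_mul_of_nonneg_left (hM y hy) hkp.le
  obtain ⟨p, x, hpρ, hxN, hpe, hmax⟩ := exists_good hgu hgw (fun x => hbd _ (hYu x).1)
    (fun x => hbd _ (hYw x).1) hkp hρ hN
  simp only [mem_union, not_or] at hxN
  obtain ⟨⟨hx1', hx2'⟩, hx3'⟩ := hxN
  obtain ⟨qu, hju⟩ := hA1 x hx1'
  obtain ⟨qw, hjw⟩ := hA2 x hx2'
  set yu := Yu x with hyu
  set yw := Yw x with hyw
  have hyuK : yu ∈ K := (hYu x).1
  have hywK : yw ∈ K := (hYw x).1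
  have ψux : ψu x = k * inner ℝ x yu - (k / 2 * ‖yu‖ ^ 2 + u yu) := (hYu x).2.1
  have ψwx : ψw x = k * inner ℝ x yw - (k / 2 * ‖yw‖ ^ 2 + - w yw) := (hYw x).2.1
  -- bound on x
  have hxn : ‖x‖ ≤ M + 1 := by
    have e1 : (2 * k) • x = k • yu + k • yw - p := by rw [hpe]; abel
    have e2 : ‖(2 * k) • x‖ ≤ k * M + k * M + k := by
      rw [e1]
      refine (norm_sub_le _ _).trans ?_
      refine add_le_add ((norm_add_le _ _).trans (add_le_add (hbd _ hyuK) (hbd _ hywK))) ?_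
      linarith
    rw [norm_smul, Real.norm_of_nonneg (by positivity)] at e2
    have e3 : k * (2 * ‖x‖) ≤ k * (2 * M + 1) := by linarith
    have := le_of_mul_le_mul_left e3 hkp
    linarith
  have fx : ψu x + ψw x - k * ‖x‖ ^ 2 = w yw - u yu - k / 2 * ‖x - yu‖ ^ 2 - k / 2 * ‖x - yw‖ ^ 2 := by
    rw [ψux, ψwx, norm_sub_sq_real, norm_sub_sq_real]; ring
  have fx1 : θ ≤ ψu x1 + ψw x1 - k * ‖x1‖ ^ 2 := by
    have e1 := (hYu x1).2.2 x1 hx1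
    have e2 := (hYw x1).2.2 x1 hx1
    simp only [real_inner_self_eq_norm_sq, Pi.neg_apply] at e1 e2
    linarith
  have fσ : σ ≤ ψu x + ψw x - k * ‖x‖ ^ 2 := by
    have e1 := hmax x1
    have e2 : inner ℝ p x1 - inner ℝ p x ≤ ρ * (2 * M + 1) := by
      rw [← inner_sub_right]
      refine (real_inner_le_norm _ _).trans ?_
      have : ‖x1 - x‖ ≤ 2 * M + 1 := (norm_sub_le _ _).trans (by linarith [hM x1 hx1])
      gcongr
    linarith
  have hdist : ‖yu - yw‖ < r := by
    have e1 : k / 2 * ‖x - yu‖ ^ 2 + k / 2 * ‖x - yw‖ ^ 2 ≤ D := by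
      linarith [hwmax' yw hywK, humin' yu hyuK]
    have e2 : ‖yu - yw‖ ≤ ‖x - yu‖ + ‖x - yw‖ := by
      have : yu - yw = (x - yw) - (x - yu) := by abel
      rw [this, add_comm]; exact norm_sub_le _ _
    have e3 : ‖yu - yw‖ ^ 2 ≤ 2 * (‖x - yu‖ ^ 2 + ‖x - yw‖ ^ 2) := by
      nlinarith [norm_nonneg (yu - yw), sq_nonneg (‖x - yu‖ - ‖x - yw‖), norm_nonneg (x - yu), norm_nonneg (x - yw)]
    have e4 : k * ‖yu - yw‖ ^ 2 < k * r ^ 2 := by nlinarith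
    have e5 : ‖yu - yw‖ ^ 2 < r ^ 2 := lt_of_mul_lt_mul_left e4 hkp.le
    exact lt_of_pow_lt_pow_left₀ 2 hr.le e5
  have hval : σ ≤ w yw - u yu := by
    have e1 : 0 ≤ k / 2 * ‖x - yu‖ ^ 2 := by positivity
    have e2 : 0 ≤ k / 2 * ‖x - yw‖ ^ 2 := by positivity
    linarith
  obtain ⟨hyuU, hywU⟩ := hnear yu hyuK yw hywK hdist hval
  have hyuS : yu ∉ S := by
    intro hs
    apply hx3'
    rw [hN3d, mem_iUnion₂]
    refine ⟨yu, hs, fun y hy => ?_⟩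
    have := (hYu x).2.2 y hy
    rw [ψux] at this
    exact this
  have hlow := low_of_conj hU hUK hyuU (fun z => (hYu z).2.2) ψux hju
  have hup := up_of_conj hU hUK hywU (fun z => (hYw z).2.2) ψwx hjw
  have hqn : ∀ h, qu h + qw h + (-k) * (2 * ‖h‖ ^ 2) ≤ 0 := by
    have hj := (hju.add hjw).add ((Jet.normSq x 0).smul (-k))
    refine hj.max_le p (fun z => ?_) ?_
    · have := hmax z
      simp only [sub_zero]; linarith
    · rw [hpe, sub_zero, smul_smul, sub_eq_add_neg, ← neg_smul]
      congr 2; ring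
  have hQ1 : QF (fun h => k * ‖h‖ ^ 2 - qu h) :=
    ((QF.norm_sq.smul k).add (hju.1.smul (-1))).congr fun h => by ring
  have hQ2 : QF (fun h => qw h - k * ‖h‖ ^ 2) :=
    (hjw.1.add (QF.norm_sq.smul (-k))).congr fun h => by ring
  have hGu := hsup yu ⟨hyuU, hyuS⟩ _ _ hQ1 hlow (c / 2) (by positivity)
  refine hstrict yw hywU _ _ hQ2 hup (hG.mono _ _ hGu fun h => ?_)
  have hpp : k • (yw - x) = k • (x - yu) + p := by
    rw [hpe, smul_sub, smul_sub, mul_smul, two_smul]; abel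
  have hpu : ‖k • (x - yu)‖ ≤ k * (2 * M + 1) := by
    rw [norm_smul, Real.norm_of_nonneg hkp.le]
    have : ‖x - yu‖ ≤ 2 * M + 1 := (norm_sub_le _ _).trans (by linarith [hM yu hyuK])
    gcongr
  rw [hpp]
  have := Aq_perturb (p := p) (pu := k • (x - yu)) (q := fun h => qw h - k * ‖h‖ ^ 2)
    (q' := fun h => k * ‖h‖ ^ 2 - qu h) (fun h => by have := hqn h; linarith) (c := c / 2) ?_ h
  · linarith
  · have e1 : ‖p‖ * ‖k • (x - yu)‖ ≤ ρ * (k * (2 * M + 1)) := by gcongr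
    have e2 : ‖p‖ ^ 2 ≤ ρ := by nlinarith [norm_nonneg p]
    linarith

end A10

section A11
variable {n : ℕ}

lemma strict_alg {k w η ε R a b W : ℝ} (hk0 : 0 < k) (hk1 : k ≤ 1) (hη : 0 < η) (hε : 0 < ε)
    (hw : ε ≤ w) (hW : w ≤ W) (hR : 4 * η * R ^ 2 ≤ ε) {P : ℝ} (hP : 0 ≤ P) (hb0 : 0 ≤ b) (hb : b ≤ R)
    (hke : ε ≤ (1 - k) * w) (ha : -(P * b) ≤ a) :
    k * (η / W) ≤ 1 / 2 * k * (1 - k) * P ^ 2 + 2 * η / w + 2 * k * η * a / w - 2 * η ^ 2 * b ^ 2 / w ^ 2 := by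
  have hwp : 0 < w := hε.trans_le hw
  have h1 : k * (η / W) ≤ η / w := by
    have : η / W ≤ η / w := by gcongr
    have h2 : 0 ≤ η / W := div_nonneg hη.le (hwp.le.trans hW)
    nlinarith
  refine h1.trans ?_
  have hbR : b ^ 2 ≤ R ^ 2 := by gcongr
  have h4 : 2 * η ^ 2 * b ^ 2 / w ^ 2 ≤ (η / 2) / w := by
    rw [div_le_div_iff₀ (by positivity) hwp]
    have : 2 * η ^ 2 * b ^ 2 ≤ η / 2 * ε := by nlinarith
    have h5 : 2 * η ^ 2 * b ^ 2 ≤ η / 2 * w := by nlinarith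
    calc 2 * η ^ 2 * b ^ 2 * w ≤ (η / 2 * w) * w := by gcongr
      _ = η / 2 * w ^ 2 := by ring
  have h6 : 0 ≤ 1 / 2 * k * (1 - k) * P ^ 2 + (η / 2) / w + 2 * k * η * a / w := by
    have e : 1 / 2 * k * (1 - k) * P ^ 2 + (η / 2) / w + 2 * k * η * a / w
      = (1 / 2 * k * ((1 - k) * w) * P ^ 2 + η / 2 + 2 * k * η * a) / w := by field_simp
    rw [e]
    apply div_nonneg _ hwp.le
    have e1 : 1 / 2 * k * ε * P ^ 2 ≤ 1 / 2 * k * ((1 - k) * w) * P ^ 2 := by gcongr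
    have e2 : 2 * k * η * (-(P * b)) ≤ 2 * k * η * a := by gcongr
    have e3 : 0 ≤ ε * P ^ 2 + η - 4 * η * (P * b) := by
      have : 0 ≤ ε * (ε * P ^ 2 + η - 4 * η * (P * b)) := by
        have s1 := sq_nonneg (ε * P - 2 * η * b)
        have s2 : 4 * η ^ 2 * b ^ 2 ≤ η * ε := by nlinarith
        nlinarith
      exact nonneg_of_mul_nonneg_right this hε
    have e4 : 0 ≤ k * (ε * P ^ 2 + η - 4 * η * (P * b)) := by positivity
    have e5 : k * η ≤ η := by nlinarith
    linarith
  have h7 : 2 * η / w = η / w + (η / 2) / w + (η / 2) / w := by ring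
  linarith

lemma strict_sub {G : (Euc n → ℝ) → Prop} (hG : Ell G) {U : Set (Euc n)} (hU : IsOpen U) {v : Euc n → ℝ}
    (hsub : SubJ G U v) {ε η R W : ℝ} (hε : 0 < ε) (hη : 0 < η) (hR : 4 * η * R ^ 2 ≤ ε)
    (hxR : ∀ x ∈ U, ‖x‖ ≤ R) (hlow : ∀ x ∈ U, ε + η * ‖x‖ ^ 2 < Real.exp (- v x))
    (hW : ∀ x ∈ U, Real.exp (- v x) ≤ W) :
    ∀ x ∈ U, ∀ p q, QF q → UpJet (fun y => - Real.log (Real.exp (- v y) - (ε + η * ‖y‖ ^ 2))) x p q →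
      ¬ G (fun h => Aq p q h + (η / W) * ‖h‖ ^ 2) := by
  intro x hx p q hq hup hGc
  obtain ⟨ε0, hε0, hG0⟩ := hG.opn _ hGc
  set vh : Euc n → ℝ := fun y => - Real.log (Real.exp (- v y) - (ε + η * ‖y‖ ^ 2)) with hvh
  have htest := hup.test ε0 hε0
  set φ : Euc n → ℝ := fun y => vh x + inner ℝ p (y - x) + 1 / 2 * (q (y - x) + ε0 * ‖y - x‖ ^ 2) with hφ
  have hjφ : Jet φ x p (fun h => q h + ε0 * ‖h‖ ^ 2) :=
    Jet.qtest (vh x) x p _ (hq.add (QF.norm_sq.smul ε0))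
  have hφx : φ x = vh x := by
    obtain ⟨B, hB⟩ := hq
    simp [hφ, hB]
  have hvhe : ∀ y ∈ U, Real.exp (- vh y) = Real.exp (- v y) - (ε + η * ‖y‖ ^ 2) := by
    intro y hy
    rw [hvh]; simp only [neg_neg]
    exact Real.exp_log (by linarith [hlow y hy])
  set w := Real.exp (- v x) with hw
  set wt := Real.exp (- vh x) with hwt
  have hwp : 0 < w := Real.exp_pos _
  have hwtp : 0 < wt := Real.exp_pos _
  have hww : w = wt + (ε + η * ‖x‖ ^ 2) := by rw [hwt, hvhe x hx]; ring
  -- the composed test function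
  have hj1 : Jet (fun y => Real.exp (-1 * φ y)) x (-(wt) • p)
      (fun h => -(wt) * (q h + ε0 * ‖h‖ ^ 2) + wt * (inner ℝ p h) ^ 2) := by
    refine (hjφ.comp (peano_exp (-1) (φ x))).congr ?_ fun h => ?_
    · rw [hφx, hwt]; simp
    · rw [hφx, hwt]; simp
  have hj2 := (hj1.add (Jet.const ε x)).add ((Jet.normSq x 0).smul η)
  have hval : Real.exp (-1 * φ x) + ε + η * ‖x - 0‖ ^ 2 = w := by
    rw [hφx, sub_zero, hww, hwt, neg_one_mul]; ring
  have hpl : Peano Real.log (Real.exp (-1 * φ x) + ε + η * ‖x - 0‖ ^ 2) w⁻¹ (-(w ^ 2)⁻¹) := by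
    rw [hval]; exact peano_log hwp
  have hj3 := (hj2.comp hpl).smul (-1)
  set Pv := -wt • p + 0 + η • (2 : ℝ) • (x - 0) with hPv
  refine hsub x hx _ _ hj3.1 (UpJet.of_touch hj3 ?_ ?_) ?_
  · rw [hval, hw, Real.log_exp]; ring
  · filter_upwards [htest, hU.mem_nhds hx] with y hy hyU
    have e1 : vh y ≤ φ y := hy
    have e2 : Real.exp (-1 * φ y) ≤ Real.exp (- vh y) := by
      apply Real.exp_le_exp.2; linarith
    rw [hvhe y hyU] at e2
    have e3 : Real.log (Real.exp (-1 * φ y) + ε + η * ‖y - 0‖ ^ 2) ≤ - v y := by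
      rw [Real.log_le_iff_le_exp (by positivity), sub_zero]; linarith
    linarith
  · set k := wt / w with hk
    have hk0 : 0 < k := by positivity
    have hkw : wt = k * w := by rw [hk]; field_simp
    have hηx : 0 ≤ η * ‖x‖ ^ 2 := by positivity
    refine hG.mono _ _ (hG.smul _ k hk0 hG0) fun h => ?_
    have hke : ε ≤ (1 - k) * w := by rw [sub_mul, ← hkw]; linarith
    have hk1 : k ≤ 1 := by rw [hk, div_le_one hwp]; linarith
    have halg := strict_alg (P := ‖p‖) (a := inner ℝ p x) (b := ‖x‖) hk0 hk1 hη hε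
      (by linarith) (hW x hx) hR (norm_nonneg _) (norm_nonneg _) (hxR x hx) hke
      (by linarith [neg_abs_le (inner ℝ p x), abs_real_inner_le_norm p x])
    have hnP : ‖Pv‖ ^ 2 = wt ^ 2 * ‖p‖ ^ 2 - 4 * wt * η * inner ℝ p x + 4 * η ^ 2 * ‖x‖ ^ 2 := by
      rw [hPv, add_zero, sub_zero, norm_add_sq_real]
      simp only [norm_smul, real_inner_smul_left, real_inner_smul_right, mul_pow, Real.norm_eq_abs, sq_abs, neg_sq]
      ring
    have hL : Aq ((-1 : ℝ) • w⁻¹ • Pv) (fun h => -1 * (w⁻¹ * (-wt * (q h + ε0 * ‖h‖ ^ 2) + wt * inner ℝ p h ^ 2 + 0 + η * (2 * ‖h‖ ^ 2)) + -(w ^ 2)⁻¹ * inner ℝ Pv h ^ 2)) h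
        = k * (Aq p q h - ε0 * ‖h‖ ^ 2) + (1 / 2 * k * (1 - k) * ‖p‖ ^ 2 + 2 * η / w + 2 * k * η * inner ℝ p x / w - 2 * η ^ 2 * ‖x‖ ^ 2 / w ^ 2) * ‖h‖ ^ 2 := by
      unfold Aq
      have e1 : ‖(-1 : ℝ) • w⁻¹ • Pv‖ ^ 2 = (w ^ 2)⁻¹ * ‖Pv‖ ^ 2 := by
        simp only [norm_smul, mul_pow, Real.norm_eq_abs, sq_abs]; ring
      rw [e1, hnP, hkw, real_inner_smul_left, real_inner_smul_left]
      field_simp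
      ring
    have := mul_le_mul_of_nonneg_right halg (sq_nonneg ‖h‖)
    refine le_trans ?_ hL.ge
    linarith

theorem compare {G : (Euc n → ℝ) → Prop} (hG : Ell G) {K U S : Set (Euc n)} (hK : IsCompact K)
    (hU : IsOpen U) (hUK : U ⊆ K) (hS : S.Countable) (hSU : S ⊆ U) {u v : Euc n → ℝ}
    (hu : LowerSemicontinuousOn u K) (hv : ContinuousOn v K) (hsup : SupJ G (U \ S) u)
    (hNC : ∀ s ∈ S, NC u s) (hsub : SubJ G U v)
    (hb : ∀ x ∈ K, x ∉ U → v x ≤ u x) : ∀ x ∈ K, v x ≤ u x := by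
  intro x1 hx1
  by_contra hcon
  push Not at hcon
  set θ := v x1 - u x1 with hθ
  have hθp : 0 < θ := by linarith
  have hne : K.Nonempty := ⟨x1, hx1⟩
  obtain ⟨R, hR⟩ := hK.isBounded.exists_norm_le
  have hce : ContinuousOn (fun y => Real.exp (- v y)) K := hv.neg.rexp
  obtain ⟨ya, hya, hmin⟩ := hK.exists_isMinOn hne hce
  obtain ⟨yb, hyb, hmax⟩ := hK.exists_isMaxOn hne hce
  set w0 := Real.exp (- v ya) with hw0
  set W := Real.exp (- v yb) with hW
  have hw0p : 0 < w0 := Real.exp_pos _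
  have hmin' : ∀ y ∈ K, w0 ≤ Real.exp (- v y) := fun y hy => hmin hy
  have hmax' : ∀ y ∈ K, Real.exp (- v y) ≤ W := fun y hy => hmax hy
  have hex : Real.exp (-(θ / 2)) < 1 := by rw [Real.exp_lt_one_iff]; linarith
  set ε := w0 * (1 - Real.exp (-(θ / 2))) / 2 with hε
  have hεp : 0 < ε := by
    have : 0 < 1 - Real.exp (-(θ / 2)) := by linarith
    positivity
  set η := ε / (4 * (R ^ 2 + 1)) with hη
  have hηp : 0 < η := by positivity
  have hηR : 4 * η * R ^ 2 ≤ ε := by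
    have : 4 * η * R ^ 2 = ε * (R ^ 2 / (R ^ 2 + 1)) := by rw [hη]; field_simp
    rw [this]
    have : R ^ 2 / (R ^ 2 + 1) ≤ 1 := by rw [div_le_one (by positivity)]; linarith
    nlinarith
  have hsum : ∀ y ∈ K, ε + η * ‖y‖ ^ 2 ≤ w0 * (1 - Real.exp (-(θ / 2))) := by
    intro y hy
    have h1 : ‖y‖ ^ 2 ≤ R ^ 2 := by have := hR y hy; gcongr
    have h2 : η * ‖y‖ ^ 2 ≤ η * R ^ 2 := by gcongr
    linarith
  have hlow : ∀ y ∈ K, Real.exp (-(θ / 2)) * Real.exp (- v y) ≤ Real.exp (- v y) - (ε + η * ‖y‖ ^ 2) := by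
    intro y hy
    have h1 := hsum y hy
    have h2 := mul_le_mul_of_nonneg_right (hmin' y hy) (show 0 ≤ 1 - Real.exp (-(θ / 2)) by linarith)
    linarith
  set vh : Euc n → ℝ := fun y => - Real.log (Real.exp (- v y) - (ε + η * ‖y‖ ^ 2)) with hvh
  have hpos : ∀ y ∈ K, 0 < Real.exp (- v y) - (ε + η * ‖y‖ ^ 2) := by
    intro y hy
    exact lt_of_lt_of_le (by positivity) (hlow y hy)
  have hvh1 : ∀ y ∈ K, v y ≤ vh y := by
    intro y hy
    have h1 : Real.log (Real.exp (- v y) - (ε + η * ‖y‖ ^ 2)) ≤ - v y := by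
      rw [Real.log_le_iff_le_exp (hpos y hy)]
      have : 0 ≤ η * ‖y‖ ^ 2 := by positivity
      linarith
    simp only [hvh]; linarith
  have hvh2 : ∀ y ∈ K, vh y ≤ v y + θ / 2 := by
    intro y hy
    have h1 : - v y - θ / 2 ≤ Real.log (Real.exp (- v y) - (ε + η * ‖y‖ ^ 2)) := by
      rw [Real.le_log_iff_exp_le (hpos y hy)]
      refine le_trans (le_of_eq ?_) (hlow y hy)
      rw [← Real.exp_add]; congr 1; ring
    simp only [hvh]; linarith
  have hcont : ContinuousOn vh K := by
    apply ContinuousOn.neg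
    apply ContinuousOn.log _ (fun y hy => (hpos y hy).ne')
    apply hce.sub
    exact (by fun_prop : Continuous (fun y : Euc n => ε + η * ‖y‖ ^ 2)).continuousOn
  have hWp : 0 < W := Real.exp_pos _
  have := doubling hG hK hU hUK hS hSU hu hcont hsup hNC (c := η / W) (τ := θ / 2) (by positivity)
    (strict_sub hG hU hsub hεp hηp hηR (fun x hx => hR x (hUK hx))
      (fun x hx => by linarith [hpos x (hUK hx)]) (fun x hx => hmax' x (hUK hx)))
    (fun x hx hxU => by linarith [hvh2 x hx, hb x hx hxU]) x1 hx1
  linarith [hvh1 x1 hx1]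

end A11

section A12
variable {n : ℕ}

lemma LowJet.const_bound {N : ℝ} {x p : Euc n} {q : Euc n → ℝ} (hq : QF q)
    (h : LowJet (fun _ => N) x p q) : p = 0 ∧ ∀ z, q z ≤ 0 := by
  obtain ⟨B, hB⟩ := hq
  have hom : ∀ (t : ℝ) (z : Euc n), q (t • z) = t ^ 2 * q z := by
    intro t z; rw [hB, hB]; simp; ring
  have ht : ∀ z : Euc n, Tendsto (fun t : ℝ => t • z) (𝓝[>] 0) (𝓝 0) := by
    intro z
    have : Tendsto (fun t : ℝ => t • z) (𝓝 0) (𝓝 ((0 : ℝ) • z)) :=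
      (continuous_id.smul continuous_const).tendsto 0
    rw [zero_smul] at this
    exact this.mono_left nhdsWithin_le_nhds
  have h1 : ∀ z : Euc n, inner ℝ p z ≤ 0 := by
    intro z
    by_contra hz
    push Not at hz
    have e1 := (ht z).eventually (h 1 one_pos)
    set a := inner ℝ p z with ha
    set D := |q z| + ‖z‖ ^ 2 + 1 with hD
    have hDp : 0 < D := by positivity
    have e2 : ∀ᶠ t : ℝ in 𝓝[>] 0, t < a / D :=
      nhdsWithin_le_nhds (gt_mem_nhds (by positivity))
    obtain ⟨t, ⟨f1, f2⟩, f3⟩ := ((e1.and e2).and self_mem_nhdsWithin).exists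
    have f3 : 0 < t := f3
    rw [hom, inner_smul_right, norm_smul, mul_pow, Real.norm_eq_abs, sq_abs, ← ha] at f1
    rw [lt_div_iff₀ hDp] at f2
    have f4 : t * a ≤ t * (t * D) := by
      have := neg_abs_le (q z)
      have g1 : t ^ 2 * (-|q z|) ≤ t ^ 2 * q z := by gcongr
      have g2 : 0 ≤ t ^ 2 := sq_nonneg t
      have g3 : 0 ≤ t ^ 2 * |q z| := by positivity
      rw [hD]
      nlinarith
    have := le_of_mul_le_mul_left f4 f3
    linarith
  have hp : p = 0 := by
    have := h1 p
    rw [real_inner_self_eq_norm_sq] at this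
    have h2 : ‖p‖ ^ 2 = 0 := le_antisymm this (sq_nonneg _)
    simpa using h2
  refine ⟨hp, fun z => ?_⟩
  by_contra hz
  push Not at hz
  have hzp : 0 < ‖z‖ ^ 2 + 1 := by positivity
  obtain ⟨t, f1, f3⟩ := (((ht z).eventually (h (q z / (4 * (‖z‖ ^ 2 + 1))) (by positivity))).and self_mem_nhdsWithin).exists
  have f3 : 0 < t := f3
  rw [hom, hp, inner_zero_left, norm_smul, mul_pow, Real.norm_eq_abs, sq_abs] at f1
  have f4 : q z / (4 * (‖z‖ ^ 2 + 1)) * (t ^ 2 * ‖z‖ ^ 2) ≤ 1 / 4 * (t ^ 2 * q z) := by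
    rw [div_mul_eq_mul_div, div_le_iff₀ (by positivity)]
    have : 0 ≤ t ^ 2 * q z := by positivity
    nlinarith
  have : 0 < t ^ 2 * q z := by positivity
  linarith

/-- No upward cone at an isolated singularity. -/
def NCs (u : Euc n → ℝ) (s : Euc n) : Prop :=
  ∀ (m : ℝ) (P : Euc n) (e C : ℝ), 0 < e →
    (∀ᶠ z in 𝓝[≠] s, m + inner ℝ P (z - s) + e * ‖z - s‖ - C * ‖z - s‖ ^ 2 ≤ u z) →
    ∃ m' > m, ∀ᶠ z in 𝓝[≠] s, m' ≤ u z

lemma no_cone_const (hn : 0 < n) {s P : Euc n} {e C : ℝ} (he : 0 < e)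
    (h : ∀ᶠ z in 𝓝[≠] s, inner ℝ P (z - s) + e * ‖z - s‖ - C * ‖z - s‖ ^ 2 ≤ 0) : False := by
  have : Nonempty (Fin n) := ⟨⟨0, hn⟩⟩
  obtain ⟨a, ha⟩ := exists_ne (0 : Euc n)
  rw [eventually_nhdsWithin_iff, Metric.eventually_nhds_iff] at h
  obtain ⟨r, hr, h⟩ := h
  have hap : 0 < ‖a‖ := norm_pos_iff.2 ha
  set t := min (r / 2) (e / (2 * (|C| + 1))) with ht
  have htp : 0 < t := lt_min (by positivity) (by positivity)
  set b := (t / ‖a‖) • a with hb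
  have hbn : ‖b‖ = t := by rw [hb, norm_smul, Real.norm_of_nonneg (by positivity)]; field_simp
  have hb0 : b ≠ 0 := by rw [← norm_pos_iff, hbn]; exact htp
  have htr : t < r := (min_le_left _ _).trans_lt (by linarith)
  have h1 := @h (s + b) (by rw [dist_eq_norm, add_sub_cancel_left, hbn]; exact htr) (by simpa using hb0)
  have h2 := @h (s + -b) (by rw [dist_eq_norm, add_sub_cancel_left, norm_neg, hbn]; exact htr) (by simpa using hb0)
  simp only [add_sub_cancel_left, norm_neg, inner_neg_right, hbn] at h1 h2
  have h3 : t * e ≤ t * (C * t) := by nlinarith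
  have h4 := le_of_mul_le_mul_left h3 htp
  have h5 : t * (2 * (|C| + 1)) ≤ e := by
    rw [← le_div_iff₀ (by positivity)]; exact min_le_right _ _
  have h6 : C * t ≤ |C| * t := by gcongr; exact le_abs_self C
  nlinarith [abs_nonneg C]

theorem compare_sing (hn : 0 < n) {G : (Euc n → ℝ) → Prop} (hG : Ell G)
    (hGp : ∀ ε > 0, G (fun h => ε * ‖h‖ ^ 2)) {K U S : Set (Euc n)} (hK : IsCompact K)
    (hU : IsOpen U) (hUK : U ⊆ K) (hS : S.Finite) (hSU : S ⊆ U) {u v : Euc n → ℝ}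
    (hu : ContinuousOn u (K \ S)) (hv : ContinuousOn v K) (hsup : SupJ G (U \ S) u)
    (hlow : ∀ s ∈ S, ∃ m, ∀ᶠ z in 𝓝[≠] s, m ≤ u z)
    (hNC : ∀ s ∈ S, NCs u s) (hsub : SubJ G U v)
    (hb : ∀ x ∈ K, x ∉ U → v x ≤ u x) : ∀ x ∈ K \ S, v x ≤ u x := by
  classical
  have : Nonempty (Fin n) := ⟨⟨0, hn⟩⟩
  intro x1 hx1
  obtain ⟨y0, hy0, hmax⟩ := hK.exists_isMaxOn ⟨x1, hx1.1⟩ hv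
  set N := v y0 with hN
  have hNm : ∀ y ∈ K, v y ≤ N := fun y hy => hmax hy
  set w : Euc n → ℝ := fun y => min (u y) N with hw
  set L : Euc n → Set ℝ := fun s => {m | ∀ᶠ z in 𝓝[≠] s, m ≤ w z} with hL
  set ut : Euc n → ℝ := fun y => if y ∈ S then sSup (L y) else w y with hut
  have hutS : ∀ y ∉ S, ut y = w y := fun y hy => by simp [hut, hy]
  have hutS' : ∀ y ∈ S, ut y = sSup (L y) := fun y hy => by simp [hut, hy]
  have hbdd : ∀ s, BddAbove (L s) := by
    intro s
    refine ⟨N, fun m hm => ?_⟩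
    obtain ⟨z, hz⟩ := (show ∀ᶠ z in 𝓝[≠] s, m ≤ w z from hm).exists
    exact hz.trans (min_le_right _ _)
  have hnonempty : ∀ s ∈ S, (L s).Nonempty := by
    intro s hs
    obtain ⟨m, hm⟩ := hlow s hs
    refine ⟨min m N, ?_⟩
    change ∀ᶠ z in 𝓝[≠] s, min m N ≤ w z
    filter_upwards [hm] with z hz
    exact min_le_min_right _ hz
  have hLlt : ∀ s ∈ S, ∀ m < sSup (L s), ∀ᶠ z in 𝓝[≠] s, m < w z := by
    intro s hs m hm
    obtain ⟨m', hm', hlt⟩ := exists_lt_of_lt_csSup (hnonempty s hs) hm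
    filter_upwards [show ∀ᶠ z in 𝓝[≠] s, m' ≤ w z from hm'] with z hz
    exact hlt.trans_le hz
  have hLle : ∀ s, ∀ m, (∀ᶠ z in 𝓝[≠] s, m ≤ w z) → m ≤ sSup (L s) :=
    fun s m hm => le_csSup (hbdd s) hm
  have hLN : ∀ s ∈ S, sSup (L s) ≤ N := by
    intro s hs
    refine csSup_le (hnonempty s hs) fun m hm => ?_
    obtain ⟨z, hz⟩ := (show ∀ᶠ z in 𝓝[≠] s, m ≤ w z from hm).exists
    exact hz.trans (min_le_right _ _)
  -- near any point, punctured neighbourhoods avoid S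
  have hSc : ∀ x, ∀ᶠ z in 𝓝[≠] x, z ∉ S := by
    intro x
    have : (S \ {x})ᶜ ∈ 𝓝 x := (hS.sdiff).isClosed.isOpen_compl.mem_nhds (by simp)
    rw [eventually_nhdsWithin_iff]
    filter_upwards [this] with z hz hzx hzS
    exact hz ⟨hzS, hzx⟩
  have hSn : ∀ x ∉ S, Sᶜ ∈ 𝓝 x := fun x hx => hS.isClosed.isOpen_compl.mem_nhds hx
  have hwc : ContinuousOn w (K \ S) := ContinuousOn.inf hu continuousOn_const
  have hlsc : LowerSemicontinuousOn ut K := by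
    intro x hx m hm
    by_cases hxS : x ∈ S
    · rw [hutS' x hxS] at hm
      have h1 := hLlt x hxS m hm
      have h2 : ∀ᶠ z in 𝓝 x, m < ut z := by
        have h3 := h1.and (hSc x)
        rw [eventually_nhdsWithin_iff] at h3
        filter_upwards [h3] with z hz
        by_cases hzx : z = x
        · rw [hzx, hutS' x hxS]; exact hm
        · have := hz hzx
          rw [hutS z this.2]; exact this.1
      exact nhdsWithin_le_nhds h2
    · rw [hutS x hxS] at hm
      have h1 := (hwc x ⟨hx, hxS⟩).eventually (lt_mem_nhds hm)
      rw [eventually_nhdsWithin_iff] at h1 ⊢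
      filter_upwards [h1, hSn x hxS] with z hz hzS hzK
      rw [hutS z hzS]
      exact hz ⟨hzK, hzS⟩
  have hsupt : SupJ G (U \ S) ut := by
    intro x hx p q hq hj ε hε
    by_cases hle : u x ≤ N
    · refine hsup x hx p q hq ?_ ε hε
      intro ε' hε'
      have ht : Tendsto (fun t : Euc n => x + t) (𝓝 0) (𝓝 x) := by
        have : Continuous (fun t : Euc n => x + t) := by fun_prop
        simpa using this.tendsto 0
      filter_upwards [hj ε' hε', ht.eventually (hSn x hx.2)] with h h1 h2
      rw [hutS x hx.2, hutS _ h2] at h1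
      have h3 : w x = u x := min_eq_left hle
      rw [h3] at h1
      exact h1.trans (min_le_left _ _)
    · have hjN : LowJet (fun _ => N) x p q := by
        intro ε' hε'
        have ht : Tendsto (fun t : Euc n => x + t) (𝓝 0) (𝓝 x) := by
          have : Continuous (fun t : Euc n => x + t) := by fun_prop
          simpa using this.tendsto 0
        filter_upwards [hj ε' hε', ht.eventually (hSn x hx.2)] with h h1 h2
        rw [hutS x hx.2, hutS _ h2] at h1
        have h3 : w x = N := min_eq_right (not_le.1 hle).le
        rw [h3] at h1
        exact h1.trans (min_le_right _ _)
      obtain ⟨hp, hq0⟩ := hjN.const_bound hq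
      refine hG.mono _ _ (hGp ε hε) fun h => ?_
      rw [hp]
      unfold Aq
      simp only [inner_zero_left, norm_zero]
      linarith [hq0 h]
  have hNCt : ∀ s ∈ S, NC ut s := by
    intro s hs P e C he hcone
    set μ := sSup (L s) with hμ
    rw [hutS' s hs, ← hμ] at hcone
    have hc2 : ∀ᶠ z in 𝓝[≠] s, μ + inner ℝ P (z - s) + e * ‖z - s‖ - C * ‖z - s‖ ^ 2 ≤ w z := by
      filter_upwards [nhdsWithin_le_nhds hcone, hSc s] with z hz hzS
      rwa [hutS z hzS] at hz
    rcases (hLN s hs).lt_or_eq with hlt | heq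
    · obtain ⟨m', hm', hev⟩ := hNC s hs μ P e C he (hc2.mono fun z hz => hz.trans (min_le_left _ _))
      have h1 : min m' N ≤ μ := by
        apply hLle
        filter_upwards [hev] with z hz
        exact min_le_min_right _ hz
      have : μ < min m' N := lt_min hm' hlt
      linarith
    · refine no_cone_const hn (s := s) (P := P) (C := C) he ?_
      filter_upwards [hc2] with z hz
      have : w z ≤ N := min_le_right _ _
      rw [← hμ] at heq
      linarith
  have hfin := compare hG hK hU hUK hS.countable hSU hlsc hv hsupt hNCt hsub
    (fun x hx hxU => by
      rw [hutS x (fun h => hxU (hSU h))]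
      exact le_min (hb x hx hxU) (hNm x hx)) x1 hx1.1
  rw [hutS x1 hx1.2] at hfin
  exact hfin.trans (min_le_left _ _)

end A12

section A13
variable {n : ℕ}
open EuclideanGeometry

lemma kel_cont {v : Euc n → ℝ} {Ω : Set (Euc n)} (hv : ContinuousOn v Ω) (c : Euc n) (l : ℝ) :
    ContinuousOn (Kel c l v) {y | y ≠ c ∧ inversion c l y ∈ Ω} := by
  unfold Kel
  have h1 : ContinuousOn (inversion c l) {y | y ≠ c ∧ inversion c l y ∈ Ω} := fun y hy =>
    ContinuousAt.continuousWithinAt (inversion_tendsto hy.1)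
  refine (hv.comp h1 fun y hy => hy.2).add ?_
  refine (continuousOn_const.sub ?_).const_smul (2 : ℝ)
  refine ContinuousOn.log (by fun_prop) fun y hy => ?_
  exact norm_ne_zero_iff.2 (sub_ne_zero.2 hy.1)

lemma SupJ.mono {G : (Euc n → ℝ) → Prop} {Ω Ω' : Set (Euc n)} {v : Euc n → ℝ} (h : SupJ G Ω v) (hs : Ω' ⊆ Ω) :
    SupJ G Ω' v := fun x hx => h x (hs hx)

lemma SubJ.mono {G : (Euc n → ℝ) → Prop} {Ω Ω' : Set (Euc n)} {v : Euc n → ℝ} (h : SubJ G Ω v) (hs : Ω' ⊆ Ω) :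
    SubJ G Ω' v := fun x hx => h x (hs hx)

lemma kel_dom {c y : Euc n} {l : ℝ} (hl : 0 < l) (hy : y ∉ ({c, inversion c l 0} : Set (Euc n))) :
    y ∈ {y | y ≠ c ∧ inversion c l y ∈ ({(0 : Euc n)}ᶜ : Set (Euc n))} := by
  simp only [mem_insert_iff, mem_singleton_iff, not_or] at hy
  refine ⟨hy.1, fun h0 => hy.2 ?_⟩
  rw [mem_singleton_iff] at h0
  rw [← h0, inversion_inversion c hl.ne']

theorem reduction (hn : 0 < n) {G : (Euc n → ℝ) → Prop} (hG : Ell G)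
    (hGp : ∀ ε > 0, G (fun h => ε * ‖h‖ ^ 2)) {v : Euc n → ℝ} (hv : ContinuousOn v {(0 : Euc n)}ᶜ)
    (hsup : SupJ G {(0 : Euc n)}ᶜ v) (hsub : SubJ G {(0 : Euc n)}ᶜ v)
    (hsing : ∀ (c : Euc n) (l : ℝ), 0 < l → l < ‖c‖ → ∀ s ∈ ({c, inversion c l 0} : Set (Euc n)),
      (∃ m, ∀ᶠ z in 𝓝[≠] s, m ≤ Kel c l v z) ∧ NCs (Kel c l v) s) :
    ∀ x y : Euc n, x ≠ 0 → y ≠ 0 → ‖x‖ ≤ ‖y‖ → v y ≤ v x := by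
  intro x y hx hy hxy
  by_cases hne : y = x
  · rw [hne]
  set d := y - x with hd
  have hdp : 0 < ‖d‖ := norm_pos_iff.2 (sub_ne_zero.2 hne)
  have main : ∀ s : ℝ, 0 < s → v y ≤ v x + Real.log ((s + 1) / s) := by
    intro s hs
    set c := y + s • d with hc
    set l := Real.sqrt (s * (s + 1)) * ‖d‖ with hl
    have hlp : 0 < l := by positivity
    have hl2 : l ^ 2 = s * (s + 1) * ‖d‖ ^ 2 := by
      rw [hl, mul_pow, Real.sq_sqrt (by positivity)]
    have hc2 : ‖c‖ ^ 2 = ‖y‖ ^ 2 + s * (‖y‖ ^ 2 - ‖x‖ ^ 2) + l ^ 2 := by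
      have e1 : ‖x‖ ^ 2 = ‖y‖ ^ 2 - 2 * inner ℝ y d + ‖d‖ ^ 2 := by
        rw [← norm_sub_sq_real, hd]; congr 2; abel
      rw [hl2, hc, norm_add_sq_real, inner_smul_right, norm_smul, mul_pow, Real.norm_eq_abs, sq_abs, e1]
      ring
    have hyp : 0 < ‖y‖ := norm_pos_iff.2 hy
    have hxy2 : ‖x‖ ^ 2 ≤ ‖y‖ ^ 2 := by gcongr
    have hlc : l < ‖c‖ := by
      apply lt_of_pow_lt_pow_left₀ 2 (norm_nonneg _)
      rw [hc2]
      have : 0 ≤ s * (‖y‖ ^ 2 - ‖x‖ ^ 2) := mul_nonneg hs.le (by linarith)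
      have : 0 < ‖y‖ ^ 2 := by positivity
      linarith
    have hyc : y - c = -(s • d) := by rw [hc]; abel
    have hycn : ‖y - c‖ = s * ‖d‖ := by rw [hyc, norm_neg, norm_smul, Real.norm_of_nonneg hs.le]
    have hycp : 0 < ‖y - c‖ := by rw [hycn]; positivity
    have hync : y ≠ c := fun h => by rw [h, sub_self, norm_zero] at hycp; exact lt_irrefl _ hycp
    have hinv : inversion c l y = x := by
      have e1 : inversion c l y = (l / dist y c) ^ 2 • (y - c) + c := rfl
      rw [e1, dist_eq_norm, div_pow, hl2, hycn, hyc]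
      have e2 : s * (s + 1) * ‖d‖ ^ 2 / (s * ‖d‖) ^ 2 = (s + 1) / s := by field_simp
      rw [e2]
      have e4 : x = y - d := by rw [hd]; abel
      have e5 : (s + 1) / s * s = s + 1 := by field_simp
      rw [smul_neg, smul_smul, e5, add_smul, one_smul, e4, hc]
      abel
    have hval : Kel c l v y = v x + Real.log ((s + 1) / s) := by
      unfold Kel
      rw [hinv]
      congr 1
      have e1 : (s + 1) / s = l ^ 2 / ‖y - c‖ ^ 2 := by
        rw [hl2, hycn]; field_simp
      rw [e1, Real.log_div (by positivity) (by positivity), Real.log_pow, Real.log_pow]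
      push_cast; ring
    rw [← hval]
    set S : Set (Euc n) := {c, inversion c l 0} with hS
    have hcp : 0 < ‖c‖ := hlp.trans hlc
    have h0K : ∀ z ∈ closedBall c l, z ≠ 0 := by
      rintro z hz rfl
      rw [mem_closedBall, dist_zero_left] at hz
      linarith
    have hnS : ∀ z, z ∉ S → z ∈ {y | y ≠ c ∧ inversion c l y ∈ ({(0 : Euc n)}ᶜ : Set (Euc n))} :=
      fun z hz => kel_dom hlp hz
    refine compare_sing hn hG hGp (K := closedBall c l) (U := ball c l) (S := S) (isCompact_closedBall c l)
      isOpen_ball ball_subset_closedBall (by simp [hS]) ?_ ?_ ?_ ?_ (fun s hs => (hsing c l hlp hlc s hs).1)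
      (fun s hs => (hsing c l hlp hlc s hs).2) ?_ ?_ y ⟨?_, ?_⟩
    · intro z hz
      simp only [hS, mem_insert_iff, mem_singleton_iff] at hz
      rcases hz with rfl | rfl
      · exact mem_ball_self hlp
      · rw [mem_ball, dist_inversion_center, dist_zero_left, div_lt_iff₀ hcp, sq]
        exact mul_lt_mul_of_pos_left hlc hlp
    · exact (kel_cont hv c l).mono fun z hz => hnS z hz.2
    · exact hv.mono fun z hz => h0K z hz
    · exact (kel_sup hG hsup c hlp).mono fun z hz => hnS z hz.2
    · exact hsub.mono fun z hz => h0K z (ball_subset_closedBall hz)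
    · intro z hz hzU
      have hzs : dist z c = l := le_antisymm hz (not_lt.1 hzU)
      unfold Kel
      rw [inversion_of_mem_sphere (mem_sphere.2 hzs), ← dist_eq_norm, hzs]; simp
    · rw [mem_closedBall, dist_eq_norm]
      apply le_of_sq_le_sq _ hlp.le
      rw [hl2, hycn, mul_pow]
      have : s ^ 2 ≤ s * (s + 1) := by nlinarith
      gcongr
    · intro hyS
      simp only [hS, mem_insert_iff, mem_singleton_iff] at hyS
      rcases hyS with h | h
      · exact hync h
      · rw [h, inversion_inversion c hlp.ne'] at hinv
        exact hx hinv.symm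
  apply le_of_forall_pos_le_add
  intro ε hε
  have h1 := main (1 / ε) (by positivity)
  have h2 : (1 / ε + 1) / (1 / ε) = ε + 1 := by field_simp; ring
  rw [h2] at h1
  have h3 : Real.log (ε + 1) ≤ ε := by
    have := Real.log_le_sub_one_of_pos (show 0 < ε + 1 by linarith)
    linarith
  linarith

end A13

section A14
variable {n : ℕ}

/-- Closed annulus. -/
def Ann (s : Euc n) (r R : ℝ) : Set (Euc n) := {y | r ≤ ‖y - s‖ ∧ ‖y - s‖ ≤ R}

lemma Ann.compact (s : Euc n) (r R : ℝ) : IsCompact (Ann s r R) := by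
  have h : Ann s r R = closedBall s R ∩ {y | r ≤ ‖y - s‖} := by
    ext y; simp only [Ann, mem_setOf_eq, mem_inter_iff, mem_closedBall, dist_eq_norm]; tauto
  rw [h]
  exact (isCompact_closedBall s R).inter_right (isClosed_le continuous_const (by fun_prop))

lemma Ann.nhds {s y : Euc n} {r R : ℝ} (h1 : r < ‖y - s‖) (h2 : ‖y - s‖ < R) : Ann s r R ∈ 𝓝 y := by
  have hc : ContinuousAt (fun y : Euc n => ‖y - s‖) y := by fun_prop
  filter_upwards [hc.eventually (lt_mem_nhds h1), hc.eventually (gt_mem_nhds h2)] with z a b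
  exact ⟨a.le, b.le⟩

lemma Ann.ne {s y : Euc n} {r R : ℝ} (hr : 0 < r) (h : y ∈ Ann s r R) : y ≠ s := by
  rintro rfl
  have := h.1
  rw [sub_self, norm_zero] at this
  linarith

lemma Ann.log_cont {s : Euc n} {r R : ℝ} (hr : 0 < r) :
    ContinuousOn (fun y => Real.log ‖y - s‖) (Ann s r R) :=
  ContinuousOn.log (by fun_prop) fun _ hy => norm_ne_zero_iff.2 (sub_ne_zero.2 (Ann.ne hr hy))

lemma punct_ball {Ω : Set (Euc n)} {s : Euc n} (hΩ : Ω ∈ 𝓝[≠] s) :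
    ∃ R > 0, ∀ y, y ≠ s → ‖y - s‖ ≤ R → y ∈ Ω := by
  have h : ∀ᶠ y in 𝓝[≠] s, y ∈ Ω := hΩ
  rw [eventually_nhdsWithin_iff, Metric.eventually_nhds_iff] at h
  obtain ⟨R, hR, h⟩ := h
  refine ⟨R / 2, by positivity, fun y hy hyR => h ?_ hy⟩
  rw [dist_eq_norm]; linarith

/-- The logarithmic barrier blows up. -/
lemma logbar_atBot {a : ℝ} (ha : 0 < a) (l : ℝ) :
    Tendsto (fun t => 2 / a * Real.log (1 - Real.exp (a * l) * Real.exp (-a * t))) (𝓝[>] l) atBot := by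
  refine Tendsto.const_mul_atBot (by positivity) (Real.tendsto_log_nhdsGT_zero.comp ?_)
  refine tendsto_nhdsWithin_iff.2 ⟨?_, ?_⟩
  · have hc : Continuous fun t => 1 - Real.exp (a * l) * Real.exp (-a * t) := by fun_prop
    have := hc.tendsto l
    rw [← Real.exp_add] at this
    simp only [neg_mul, add_neg_cancel, Real.exp_zero, sub_self] at this
    simp only [neg_mul]
    exact this.mono_left nhdsWithin_le_nhds
  · filter_upwards [self_mem_nhdsWithin] with t ht
    have ht : l < t := ht
    rw [mem_Ioi, ← Real.exp_add, sub_pos, Real.exp_lt_one_iff]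
    nlinarith

lemma case2_low_aux {G : (Euc n → ℝ) → Prop} (hG : Ell G) {δ : ℝ} (hc : Case2 G δ) {u : Euc n → ℝ}
    {s : Euc n} {R M : ℝ} (hR : 0 < R)
    (hu : ContinuousOn u {y | y ≠ s ∧ ‖y - s‖ ≤ R}) (hsup : SupJ G {y | y ≠ s ∧ ‖y - s‖ ≤ R} u)
    (hM : ∀ y, ‖y - s‖ = R → M ≤ u y) (x : Euc n) (hx : x ≠ s) (hxR : ‖x - s‖ ≤ R) :
    ∀ l < Real.log ‖x - s‖, M + 2 / (δ / 2) * Real.log (1 - Real.exp (δ / 2 * l) *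
      Real.exp (-(δ / 2) * Real.log ‖x - s‖)) ≤ u x := by
  intro l hl
  have hδ := hc.1
  set a := δ / 2 with ha
  have hap : 0 < a := by positivity
  obtain ⟨L, hL⟩ : ∃ L, ∀ y ∈ Ann s (Real.exp l) R, L ≤ u y := by
    have hA : Ann s (Real.exp l) R ⊆ {y | y ≠ s ∧ ‖y - s‖ ≤ R} := fun y hy =>
      ⟨Ann.ne (Real.exp_pos l) hy, hy.2⟩
    obtain ⟨L, hL⟩ := (Ann.compact s (Real.exp l) R).bddBelow_image (hu.mono hA)
    exact ⟨L, fun y hy => hL ⟨y, hy, rfl⟩⟩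
  obtain ⟨t, ⟨h1, h2⟩, h3⟩ := (((logbar_atBot hap l).eventually (eventually_le_atBot (L - M))).and
    (nhdsWithin_le_nhds (gt_mem_nhds hl))).and self_mem_nhdsWithin |>.exists
  have h3 : l < t := h3
  have h2 : t < Real.log ‖x - s‖ := h2
  have hep := Real.exp_pos t
  have hlt : ∀ y ∈ Ann s (Real.exp t) R, t ≤ Real.log ‖y - s‖ := fun y hy => by
    have := Real.log_le_log hep hy.1
    rwa [Real.log_exp] at this
  have hS : ∀ y ∈ Ann s (Real.exp t) R, Real.exp (a * l) * Real.exp (-a * Real.log ‖y - s‖) < 1 := by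
    intro y hy
    rw [← Real.exp_add, Real.exp_lt_one_iff]
    have := hlt y hy
    nlinarith
  refine cmp_super (K := Ann s (Real.exp t) R) (φ := fun y => M + 2 / a * Real.log (1 - Real.exp (a * l) *
      Real.exp (-a * Real.log ‖y - s‖))) (Ann.compact s _ R) (hu.mono fun y hy => ⟨Ann.ne hep hy, hy.2⟩) ?_ hsup ?_ x ⟨?_, hxR⟩
  · refine continuousOn_const.add (continuousOn_const.mul (ContinuousOn.log ?_ fun y hy => ?_))
    · have := Ann.log_cont (s := s) (R := R) hep
      fun_prop
    · linarith [hS y hy]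
  · intro y hy
    have hyS := hS y hy
    have hyne := Ann.ne hep hy
    by_cases hy1 : ‖y - s‖ = R
    · left
      have : Real.log (1 - Real.exp (a * l) * Real.exp (-a * Real.log ‖y - s‖)) ≤ 0 := by
        apply Real.log_nonpos
        · linarith
        · have : 0 < Real.exp (a * l) * Real.exp (-a * Real.log ‖y - s‖) := by positivity
          linarith
      have h5 : 2 / a * Real.log (1 - Real.exp (a * l) * Real.exp (-a * Real.log ‖y - s‖)) ≤ 0 :=
        mul_nonpos_of_nonneg_of_nonpos (by positivity) this
      linarith [hM y hy1]
    by_cases hy2 : ‖y - s‖ = Real.exp t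
    · left
      rw [hy2, Real.log_exp]
      have := hL y ⟨hy2 ▸ (Real.exp_le_exp.2 h3.le), hy.2⟩
      linarith
    right
    refine ⟨Ann.nhds (lt_of_le_of_ne hy.1 (Ne.symm hy2)) (lt_of_le_of_ne hy.2 hy1), ⟨hyne, hy.2⟩, ?_⟩
    have hp := peano_logbar (2 / a) (Real.exp (a * l)) (-a) (Real.log ‖y - s‖) hyS
    obtain ⟨p, q, hj, hA⟩ := radial_Aq hyne hp
    have hj2 := (Jet.const M y).add hj
    refine ⟨p, q, hj2.congr (zero_add p).symm (fun h => (zero_add _).symm), ?_⟩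
    simp only [hA]
    set S := Real.exp (a * l) * Real.exp (-a * Real.log ‖y - s‖) with hSd
    have hSp : 0 < S := by positivity
    have hS1 : 0 < 1 - S := by linarith
    have e1 : -(2 / a * -a) * S / (1 - S) + (-(2 / a * -a) * S / (1 - S)) ^ 2 / 2 = 2 * S / (1 - S) ^ 2 := by
      field_simp; ring
    have e2 : -(2 / a * (-a) ^ 2) * S / (1 - S) ^ 2 = - (δ / 2 * (2 * S / (1 - S) ^ 2)) := by
      rw [← ha]; field_simp
    rw [e1, e2]
    have hrp : 0 < ‖y - s‖ := norm_pos_iff.2 (sub_ne_zero.2 hyne)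
    exact case2_strict hG hc (by positivity) le_rfl (by positivity) (unit_dir hyne)
  · rw [← Real.le_log_iff_exp_le (norm_pos_iff.2 (sub_ne_zero.2 hx))]; exact h2.le

lemma case2_low {G : (Euc n → ℝ) → Prop} (hG : Ell G) {δ : ℝ} (hc : Case2 G δ) {u : Euc n → ℝ}
    {s : Euc n} {Ω : Set (Euc n)} (hΩ : Ω ∈ 𝓝[≠] s) (hu : ContinuousOn u Ω) (hsup : SupJ G Ω u) :
    ∃ m, ∀ᶠ z in 𝓝[≠] s, m ≤ u z := by
  obtain ⟨R, hR, hΩ⟩ := punct_ball hΩ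
  have hsb : {y | y ≠ s ∧ ‖y - s‖ ≤ R} ⊆ Ω := fun y hy => hΩ y hy.1 hy.2
  have hδ := hc.1
  obtain ⟨M, hM⟩ : ∃ L, ∀ y ∈ Ann s R R, L ≤ u y := by
    obtain ⟨L, hL⟩ := (Ann.compact s R R).bddBelow_image (hu.mono fun y hy => hΩ y (Ann.ne hR hy) hy.2)
    exact ⟨L, fun y hy => hL ⟨y, hy, rfl⟩⟩
  refine ⟨M, ?_⟩
  have hb : ball s R ∈ 𝓝[≠] s := nhdsWithin_le_nhds (ball_mem_nhds s hR)
  filter_upwards [self_mem_nhdsWithin, hb] with x hx hxR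
  have hxR : ‖x - s‖ ≤ R := by rw [← dist_eq_norm]; exact (mem_ball.1 hxR).le
  have key := case2_low_aux hG hc hR (hu.mono hsb) (hsup.mono hsb)
    (fun y hy => hM y ⟨hy.ge, hy.le⟩) x hx hxR
  set E := Real.exp (-(δ / 2) * Real.log ‖x - s‖) with hE
  have h1 : Tendsto (fun l => M + 2 / (δ / 2) * Real.log (1 - Real.exp (δ / 2 * l) * E)) atBot
      (𝓝 (M + 2 / (δ / 2) * Real.log (1 - 0 * E))) := by
    have e1 : Tendsto (fun l => Real.exp (δ / 2 * l)) atBot (𝓝 0) :=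
      Real.tendsto_exp_atBot.comp (tendsto_id.const_mul_atBot (by positivity))
    have e2 : Tendsto (fun l => 1 - Real.exp (δ / 2 * l) * E) atBot (𝓝 (1 - 0 * E)) :=
      tendsto_const_nhds.sub (e1.mul_const E)
    have e3 := e2.log (by simp)
    exact tendsto_const_nhds.add (e3.const_mul _)
  rw [zero_mul, sub_zero, Real.log_one, mul_zero, add_zero] at h1
  exact le_of_tendsto h1 ((eventually_lt_atBot _).mono key)

lemma case2_alg {G : (Euc n → ℝ) → Prop} (hG : Ell G) {δ : ℝ} (hc : Case2 G δ) {y s P : Euc n} (hyne : y ≠ s)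
    {κ W N : ℝ} (hκ : 0 < κ) (hWp : 0 < W) (hN : N = 4 * ‖P‖ ^ 2 + 4) (hNr : 2 * N * ‖y - s‖ ≤ 1)
    (hw : κ * W ≤ 2)
    (hGc : G (fun h => Aq (0 + P + N • ((2 : ℝ) • (y - s)) + 0 + -κ • ((-(δ / 5) * W) • ((‖y - s‖ ^ 2)⁻¹ • (y - s))))
        (fun h => 0 + 0 + N * (2 * ‖h‖ ^ 2) + 0 + -κ *
              (-(δ / 5) * W * ((‖y - s‖ ^ 2)⁻¹ * ‖h‖ ^ 2 - 2 * (‖y - s‖ ^ 4)⁻¹ * inner ℝ (y - s) h ^ 2) +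
                (-(δ / 5)) ^ 2 * W * inner ℝ ((‖y - s‖ ^ 2)⁻¹ • (y - s)) h ^ 2)) h + 2 * ‖h‖ ^ 2)) : False := by
  have hδ := hc.1
  obtain ⟨a, ha⟩ : ∃ a, a = δ / 5 := ⟨_, rfl⟩
  have hap : 0 < a := by rw [ha]; positivity
  have hrp : 0 < ‖y - s‖ := norm_pos_iff.2 (sub_ne_zero.2 hyne)
  obtain ⟨r, hr⟩ : ∃ r, r = ‖y - s‖ := ⟨_, rfl⟩
  rw [← hr] at hrp hNr
  obtain ⟨e, he⟩ : ∃ e, e = r⁻¹ • (y - s) := ⟨_, rfl⟩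
  have hen : ‖e‖ = 1 := by rw [he, hr]; exact unit_dir hyne
  have hys : y - s = r • e := by rw [he, smul_smul, mul_inv_cancel₀ hrp.ne', one_smul]
  rw [← hr, ← ha, hys] at hGc
  obtain ⟨w, hwd⟩ : ∃ w, w = a * (κ * W) := ⟨_, rfl⟩
  have hwp : 0 < w := by rw [hwd]; positivity
  have hw2 : w ≤ 2 * a := by rw [hwd]; nlinarith
  refine hc.2.2 e hen (hG.mono _ _ (hG.smul _ ((w * (r ^ 2)⁻¹)⁻¹) (by positivity) hGc) fun h => ?_)
  rw [inv_mul_le_iff₀ (by positivity)]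
  obtain ⟨B, hB⟩ : ∃ B, B = P + (2 * N * r) • e := ⟨_, rfl⟩
  have hN0 : 0 < N := by rw [hN]; positivity
  have hBn : ‖B‖ ^ 2 ≤ 2 * ‖P‖ ^ 2 + 2 := by
    have h1 : ‖B‖ ≤ ‖P‖ + 1 := by
      rw [hB]
      refine (norm_add_le _ _).trans ?_
      rw [norm_smul, Real.norm_of_nonneg (by positivity), hen]
      linarith
    have h2 : ‖B‖ ^ 2 ≤ (‖P‖ + 1) ^ 2 := by gcongr
    nlinarith [sq_nonneg (‖P‖ - 1)]
  have hBh : (inner ℝ B h) ^ 2 ≤ ‖B‖ ^ 2 * ‖h‖ ^ 2 := by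
    rw [← mul_pow]; apply sq_le_sq'
    · linarith [neg_abs_le (inner ℝ B h), abs_real_inner_le_norm B h]
    · exact real_inner_le_norm B h
  have heh : (inner ℝ e h) ^ 2 ≤ ‖h‖ ^ 2 := by
    have := abs_real_inner_le_norm e h
    rw [hen, one_mul] at this
    exact sq_le_sq' (by linarith [neg_abs_le (inner ℝ e h)]) ((le_abs_self _).trans this)
  have hpe : (0 + P + N • ((2 : ℝ) • (r • e)) + 0 + -κ • ((-a * W) • ((r ^ 2)⁻¹ • (r • e)))) = B + (w * r⁻¹) • e := by
    have e1 : -κ * (-a * W * ((r ^ 2)⁻¹ * r)) = w * r⁻¹ := by rw [hwd]; field_simp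
    have e2 : N * (2 * r) = 2 * N * r := by ring
    have e3 : -κ • ((-a * W) • ((r ^ 2)⁻¹ • (r • e))) = (w * r⁻¹) • e := by
      rw [smul_smul, smul_smul, smul_smul, ← e1]
      congr 1; ring
    rw [e3, smul_smul, smul_smul, mul_assoc, e2, hB, zero_add, add_zero]
  rw [hpe]
  have hph : (inner ℝ (B + (w * r⁻¹) • e) h) ^ 2 ≤ 2 * (inner ℝ B h) ^ 2 + 2 * (w ^ 2 * (r ^ 2)⁻¹ * (inner ℝ e h) ^ 2) := by
    rw [inner_add_left, real_inner_smul_left]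
    have : w ^ 2 * (r ^ 2)⁻¹ * (inner ℝ e h) ^ 2 = (w * r⁻¹ * inner ℝ e h) ^ 2 := by
      rw [mul_pow, mul_pow, inv_pow]
    rw [this]
    nlinarith [sq_nonneg (inner ℝ B h - w * r⁻¹ * inner ℝ e h)]
  have hpp : 0 ≤ 1 / 2 * ‖B + (w * r⁻¹) • e‖ ^ 2 * ‖h‖ ^ 2 := by positivity
  have hdev : w * (r ^ 2)⁻¹ * (-‖h‖ ^ 2 + (2 + a + 2 * w) * inner ℝ e h ^ 2) ≤
      w * (r ^ 2)⁻¹ * (-‖h‖ ^ 2 + 2 * inner ℝ e h ^ 2 + δ * ‖h‖ ^ 2) := by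
    have h5 : a + 2 * w ≤ δ := by linarith
    have : (a + 2 * w) * inner ℝ e h ^ 2 ≤ δ * ‖h‖ ^ 2 := by gcongr
    have h6 : 0 < w * (r ^ 2)⁻¹ := by positivity
    apply mul_le_mul_of_nonneg_left _ h6.le
    linarith
  refine le_trans ?_ hdev
  have hq : 0 + 0 + N * (2 * ‖h‖ ^ 2) + 0 + -κ *
              (-a * W * ((r ^ 2)⁻¹ * ‖h‖ ^ 2 - 2 * (r ^ 4)⁻¹ * inner ℝ (r • e) h ^ 2) +
                (-a) ^ 2 * W * inner ℝ ((r ^ 2)⁻¹ • (r • e)) h ^ 2) = 2 * N * ‖h‖ ^ 2 +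
       w * (r ^ 2)⁻¹ * (‖h‖ ^ 2 - (2 + a) * inner ℝ e h ^ 2) := by
    simp only [real_inner_smul_left]
    rw [hwd]
    field_simp
    ring
  simp only [Aq]
  rw [hq]
  have hBB : ‖B‖ ^ 2 * ‖h‖ ^ 2 ≤ (N - 1) * ‖h‖ ^ 2 := by
    gcongr; rw [hN]; nlinarith [sq_nonneg ‖P‖]
  linarith

lemma case2_NC {G : (Euc n → ℝ) → Prop} (hG : Ell G) {δ : ℝ} (hc : Case2 G δ) {u : Euc n → ℝ}
    {s : Euc n} {Ω : Set (Euc n)} (hΩ : Ω ∈ 𝓝[≠] s) (hu : ContinuousOn u Ω) (hsup : SupJ G Ω u) :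
    NCs u s := by
  intro m P e C he hcone
  have hδ := hc.1
  obtain ⟨R, hR, hΩ⟩ := punct_ball (inter_mem hΩ hcone)
  set N := 4 * ‖P‖ ^ 2 + 4 with hN
  have hNp : 4 ≤ N := by rw [hN]; nlinarith [sq_nonneg ‖P‖]
  obtain ⟨r0, hr0, hr0R, hr1, hr2, hr3⟩ : ∃ r0 > 0, r0 ≤ R ∧ (N + |C|) * r0 ≤ e / 2 ∧ e * r0 ≤ 2 ∧ 2 * N * r0 ≤ 1 := by
    have hC := abs_nonneg C
    refine ⟨min R (min (e / 2 / (N + |C|)) (min (2 / e) (1 / (2 * N)))), ?_, min_le_left _ _, ?_, ?_, ?_⟩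
    · exact lt_min hR (lt_min (by positivity) (lt_min (by positivity) (by positivity)))
    · rw [mul_comm, ← le_div_iff₀ (by positivity)]
      exact (min_le_right _ _).trans (min_le_left _ _)
    · rw [mul_comm, ← le_div_iff₀ (by positivity)]
      exact (min_le_right _ _).trans ((min_le_right _ _).trans (min_le_left _ _))
    · rw [mul_comm, ← le_div_iff₀ (by positivity)]
      exact (min_le_right _ _).trans ((min_le_right _ _).trans (min_le_right _ _))
  set b := e * r0 / 2 with hb
  have hbp : 0 < b := by positivity
  have hb1 : b ≤ 1 := by rw [hb]; linarith
  set a := δ / 5 with ha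
  have hap : 0 < a := by positivity
  have hlow : ∀ y, y ≠ s → ‖y - s‖ ≤ r0 → m + inner ℝ P (y - s) + e * ‖y - s‖ - C * ‖y - s‖ ^ 2 ≤ u y :=
    fun y h1 h2 => (hΩ y h1 (h2.trans hr0R)).2
  have key : ∀ x, x ≠ s → ‖x - s‖ ≤ r0 → ∀ κ > 0,
      m + inner ℝ P (x - s) + N * ‖x - s‖ ^ 2 + b + -κ * Real.exp (-a * Real.log ‖x - s‖) ≤ u x := by
    intro x hx hxr κ hκ
    have hxp : 0 < ‖x - s‖ := norm_pos_iff.2 (sub_ne_zero.2 hx)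
    set t := min (Real.log ‖x - s‖) (-(Real.log (2 / κ)) / a) with ht
    have ht1 : Real.exp t ≤ ‖x - s‖ := by
      rw [← Real.le_log_iff_exp_le hxp]; exact min_le_left _ _
    have ht2 : 2 ≤ κ * Real.exp (-a * t) := by
      have h1 : a * t ≤ -(Real.log (2 / κ)) := by
        rw [mul_comm, ← le_div_iff₀ hap]; exact min_le_right _ _
      have h2 : 2 / κ ≤ Real.exp (-a * t) := by
        rw [← Real.log_le_iff_le_exp (by positivity)]; linarith
      rw [div_le_iff₀ hκ] at h2
      linarith
    have hep := Real.exp_pos t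
    refine cmp_super (K := Ann s (Real.exp t) r0) (φ := fun y => m + inner ℝ P (y - s) + N * ‖y - s‖ ^ 2 + b +
      -κ * Real.exp (-a * Real.log ‖y - s‖)) (Ann.compact s _ r0)
      (hu.mono fun y hy => (hΩ y (Ann.ne hep hy) (hy.2.trans hr0R)).1) ?_ hsup ?_ x ⟨ht1, hxr⟩
    · have := Ann.log_cont (s := s) (R := r0) hep
      fun_prop
    · intro y hy
      have hyne := Ann.ne hep hy
      have hrp : 0 < ‖y - s‖ := norm_pos_iff.2 (sub_ne_zero.2 hyne)
      set r := ‖y - s‖ with hr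
      have hlo := hlow y hyne hy.2
      rw [← hr] at hlo
      have hCr : C * r ^ 2 ≤ |C| * r ^ 2 := by gcongr; exact le_abs_self C
      have hrr : r ^ 2 ≤ r0 ^ 2 := by gcongr; exact hy.2
      have hNC : (N + |C|) * r ^ 2 ≤ b := by
        have h1 : (N + |C|) * r ^ 2 ≤ (N + |C|) * r0 ^ 2 := by gcongr
        have h2 : (N + |C|) * r0 * r0 ≤ e / 2 * r0 := by gcongr
        rw [hb]; nlinarith
      by_cases hw : 2 ≤ κ * Real.exp (-a * Real.log r)
      · left
        have : 0 < e * r := by positivity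
        nlinarith
      push Not at hw
      by_cases hy1 : r = r0
      · left
        have : 0 < κ * Real.exp (-a * Real.log r) := by positivity
        have h4 : e * r = 2 * b := by rw [hb, hy1]; ring
        nlinarith
      by_cases hy2 : r = Real.exp t
      · exfalso
        rw [hy2, Real.log_exp] at hw; linarith
      right
      refine ⟨Ann.nhds (lt_of_le_of_ne hy.1 (Ne.symm hy2)) (lt_of_le_of_ne hy.2 hy1),
        (hΩ y hyne (hy.2.trans hr0R)).1, ?_⟩
      have hj := ((((Jet.const m y).add (Jet.affine P s y)).add ((Jet.normSq y s).smul N)).add (Jet.const b y)).add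
        ((radial_jet hyne (peano_exp (-a) (Real.log ‖y - s‖))).smul (-κ))
      refine ⟨_, _, hj, 2, two_pos, fun hGc => ?_⟩
      refine case2_alg hG hc hyne hκ (Real.exp_pos _) hN (le_trans ?_ hr3) hw.le hGc
      have := hy.2
      gcongr
  refine ⟨m + b / 2, by linarith, ?_⟩
  have hsm : ∀ᶠ z in 𝓝[≠] s, - (b / 2) ≤ inner ℝ P (z - s) := by
    have hc : ContinuousAt (fun z : Euc n => inner ℝ P (z - s)) s := by fun_prop
    have h1 : -(b / 2) < inner ℝ P (s - s) := by simp; positivity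
    exact nhdsWithin_le_nhds ((hc.eventually (lt_mem_nhds h1)).mono fun z hz => hz.le)
  have hbb : ball s r0 ∈ 𝓝[≠] s := nhdsWithin_le_nhds (ball_mem_nhds s hr0)
  filter_upwards [self_mem_nhdsWithin, hbb, hsm] with x hx hxR hxm
  have hxR : ‖x - s‖ ≤ r0 := by rw [← dist_eq_norm]; exact (mem_ball.1 hxR).le
  have k := key x hx hxR
  have hT : Tendsto (fun κ : ℝ => m + inner ℝ P (x - s) + N * ‖x - s‖ ^ 2 + b + -κ * Real.exp (-a * Real.log ‖x - s‖))
      (𝓝[>] 0) (𝓝 (m + inner ℝ P (x - s) + N * ‖x - s‖ ^ 2 + b + -0 * Real.exp (-a * Real.log ‖x - s‖))) := by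
    have hc : Continuous (fun κ : ℝ => m + inner ℝ P (x - s) + N * ‖x - s‖ ^ 2 + b + -κ * Real.exp (-a * Real.log ‖x - s‖)) := by
      fun_prop
    exact (hc.tendsto 0).mono_left nhdsWithin_le_nhds
  have hle := le_of_tendsto hT (eventually_nhdsWithin_of_forall fun κ hκ => k κ hκ)
  have : 0 ≤ N * ‖x - s‖ ^ 2 := by positivity
  linarith

end A14

section A15
variable {n : ℕ}
open EuclideanGeometry

lemma logbar_atTop {a : ℝ} (ha : 0 < a) (l : ℝ) :
    Tendsto (fun t => -(2 / a) * Real.log (1 - Real.exp (-a * l) * Real.exp (a * t))) (𝓝[<] l) atTop := by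
  refine Tendsto.const_mul_atBot_of_neg (by simp; positivity) (Real.tendsto_log_nhdsGT_zero.comp ?_)
  refine tendsto_nhdsWithin_iff.2 ⟨?_, ?_⟩
  · have hc : Continuous fun t => 1 - Real.exp (-a * l) * Real.exp (a * t) := by fun_prop
    have := hc.tendsto l
    rw [← Real.exp_add] at this
    simp only [neg_mul, neg_add_cancel, Real.exp_zero, sub_self] at this
    simp only [neg_mul]
    exact this.mono_left nhdsWithin_le_nhds
  · filter_upwards [self_mem_nhdsWithin] with t ht
    have ht : t < l := ht
    rw [mem_Ioi, ← Real.exp_add, sub_pos, Real.exp_lt_one_iff]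
    nlinarith

lemma case1_up_aux {G : (Euc n → ℝ) → Prop} (hG : Ell G) {δ : ℝ} (hc : Case1 G δ) {v : Euc n → ℝ}
    (hv : ContinuousOn v {(0 : Euc n)}ᶜ) (hsub : SubJ G {(0 : Euc n)}ᶜ v) {R M : ℝ} (hR : 0 < R)
    (hM : ∀ y, ‖y‖ = R → v y ≤ M) (x : Euc n) (hxR : R ≤ ‖x‖) :
    ∀ l > Real.log ‖x‖, v x ≤ M + -(2 / δ) * Real.log (1 - Real.exp (-δ * l) *
      Real.exp (δ * Real.log ‖x - 0‖)) := by
  intro l hl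
  have hδ := hc.1
  have hx0 : 0 < ‖x‖ := hR.trans_le hxR
  have hne : ∀ b, Ann (0 : Euc n) R b ⊆ {(0 : Euc n)}ᶜ := fun b y hy => Ann.ne hR hy
  obtain ⟨L, hL⟩ : ∃ L, ∀ y ∈ Ann (0 : Euc n) R (Real.exp l), v y ≤ L := by
    obtain ⟨L, hL⟩ := (Ann.compact 0 R (Real.exp l)).bddAbove_image (hv.mono (hne _))
    exact ⟨L, fun y hy => hL ⟨y, hy, rfl⟩⟩
  obtain ⟨t, ⟨h1, h2⟩, h3⟩ := (((logbar_atTop hδ l).eventually (eventually_ge_atTop (L - M))).and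
    (nhdsWithin_le_nhds (lt_mem_nhds hl))).and self_mem_nhdsWithin |>.exists
  have h3 : t < l := h3
  have h2 : Real.log ‖x‖ < t := h2
  have hlt : ∀ y ∈ Ann (0 : Euc n) R (Real.exp t), Real.log ‖y - 0‖ ≤ t := fun y hy => by
    have := Real.log_le_log (hR.trans_le hy.1) hy.2
    rwa [Real.log_exp] at this
  have hS : ∀ y ∈ Ann (0 : Euc n) R (Real.exp t), Real.exp (-δ * l) * Real.exp (δ * Real.log ‖y - 0‖) < 1 := by
    intro y hy
    rw [← Real.exp_add, Real.exp_lt_one_iff]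
    have := hlt y hy
    nlinarith
  refine cmp_sub (K := Ann 0 R (Real.exp t)) (φ := fun y => M + -(2 / δ) * Real.log (1 - Real.exp (-δ * l) *
      Real.exp (δ * Real.log ‖y - 0‖))) (Ann.compact 0 R _) (hv.mono (hne _)) ?_ hsub ?_ x ⟨?_, ?_⟩
  · refine continuousOn_const.add (continuousOn_const.mul (ContinuousOn.log ?_ fun y hy => ?_))
    · have := Ann.log_cont (s := (0 : Euc n)) (R := Real.exp t) hR
      fun_prop
    · linarith [hS y hy]
  · intro y hy
    have hyS := hS y hy
    have hyne := Ann.ne hR hy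
    by_cases hy1 : ‖y - 0‖ = R
    · left
      have : Real.log (1 - Real.exp (-δ * l) * Real.exp (δ * Real.log ‖y - 0‖)) ≤ 0 := by
        apply Real.log_nonpos
        · linarith
        · have : 0 < Real.exp (-δ * l) * Real.exp (δ * Real.log ‖y - 0‖) := by positivity
          linarith
      have h5 : 0 ≤ -(2 / δ) * Real.log (1 - Real.exp (-δ * l) * Real.exp (δ * Real.log ‖y - 0‖)) :=
        mul_nonneg_of_nonpos_of_nonpos (by simp; positivity) this
      rw [sub_zero] at hy1
      linarith [hM y hy1]
    by_cases hy2 : ‖y - 0‖ = Real.exp t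
    · left
      simp only [hy2, Real.log_exp]
      have := hL y ⟨hy.1, hy2 ▸ (Real.exp_le_exp.2 h3.le)⟩
      linarith
    right
    refine ⟨Ann.nhds (lt_of_le_of_ne hy.1 (Ne.symm hy1)) (lt_of_le_of_ne hy.2 hy2), hyne, ?_⟩
    have hp := peano_logbar (-(2 / δ)) (Real.exp (-δ * l)) δ (Real.log ‖y - 0‖) hyS
    obtain ⟨p, q, hj, hA⟩ := radial_Aq hyne hp
    have hj2 := (Jet.const M y).add hj
    refine ⟨p, q, hj2.congr (zero_add p).symm (fun h => (zero_add _).symm), ?_⟩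
    have hA' := funext hA
    rw [hA']
    set S := Real.exp (-δ * l) * Real.exp (δ * Real.log ‖y - 0‖) with hSd
    have hSp : 0 < S := by positivity
    have hS1 : 0 < 1 - S := by linarith
    have e1 : -(-(2 / δ) * δ) * S / (1 - S) + (-(-(2 / δ) * δ) * S / (1 - S)) ^ 2 / 2 = 2 * S / (1 - S) ^ 2 := by
      field_simp; ring
    have e2 : -(-(2 / δ) * δ ^ 2) * S / (1 - S) ^ 2 = δ * (2 * S / (1 - S) ^ 2) := by
      field_simp
    rw [e1, e2]
    have hrp : 0 < ‖y - 0‖ := norm_pos_iff.2 (sub_ne_zero.2 hyne)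
    exact case1_strict hG hc (by positivity) le_rfl (by positivity) (unit_dir hyne)
  · rwa [sub_zero]
  · rw [sub_zero, ← Real.log_le_iff_le_exp hx0]; exact h2.le

lemma case1_up {G : (Euc n → ℝ) → Prop} (hG : Ell G) {δ : ℝ} (hc : Case1 G δ) {v : Euc n → ℝ}
    (hv : ContinuousOn v {(0 : Euc n)}ᶜ) (hsub : SubJ G {(0 : Euc n)}ᶜ v) {R M : ℝ} (hR : 0 < R)
    (hM : ∀ y, ‖y‖ = R → v y ≤ M) (x : Euc n) (hxR : R ≤ ‖x‖) : v x ≤ M := by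
  have key := case1_up_aux hG hc hv hsub hR hM x hxR
  have hδ := hc.1
  set E := Real.exp (δ * Real.log ‖x - 0‖) with hE
  have h1 : Tendsto (fun l => M + -(2 / δ) * Real.log (1 - Real.exp (-δ * l) * E)) atTop
      (𝓝 (M + -(2 / δ) * Real.log (1 - 0 * E))) := by
    have e1 : Tendsto (fun l => Real.exp (-δ * l)) atTop (𝓝 0) :=
      Real.tendsto_exp_atBot.comp (tendsto_id.const_mul_atTop_of_neg (by simpa using hδ))
    have e2 : Tendsto (fun l => 1 - Real.exp (-δ * l) * E) atTop (𝓝 (1 - 0 * E)) :=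
      tendsto_const_nhds.sub (e1.mul_const E)
    have e3 := e2.log (by simp)
    exact tendsto_const_nhds.add (e3.const_mul _)
  rw [zero_mul, sub_zero, Real.log_one, mul_zero, add_zero] at h1
  exact ge_of_tendsto h1 ((eventually_gt_atTop _).mono key)

lemma kel0_dom : {y : Euc n | y ≠ 0 ∧ inversion (0 : Euc n) 1 y ∈ ({(0 : Euc n)}ᶜ : Set (Euc n))} = {(0 : Euc n)}ᶜ := by
  ext y
  refine ⟨fun h => h.1, fun h => ⟨h, inversion_ne h one_pos⟩⟩

lemma inv0_norm (x : Euc n) : ‖inversion (0 : Euc n) 1 x‖ = ‖x‖⁻¹ := by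
  have := dist_inversion_center (0 : Euc n) x 1
  simpa [dist_zero_right] using this

lemma kel0_val {v : Euc n → ℝ} {x : Euc n} (hx : x ≠ 0) :
    Kel 0 1 v (inversion (0 : Euc n) 1 x) = v x + 2 * Real.log ‖x‖ := by
  unfold Kel
  rw [inversion_inversion _ one_ne_zero, sub_zero, inv0_norm, Real.log_one, Real.log_inv]
  ring

lemma case1_down {G : (Euc n → ℝ) → Prop} (hG : Ell G) {δ : ℝ} (hc : Case1 G δ) {v : Euc n → ℝ}
    (hv : ContinuousOn v {(0 : Euc n)}ᶜ) (hsub : SubJ G {(0 : Euc n)}ᶜ v) {R M : ℝ} (hR : 0 < R)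
    (hM : ∀ y, ‖y‖ = R → v y + 2 * Real.log ‖y‖ ≤ M) (x : Euc n) (hx : x ≠ 0) (hxR : ‖x‖ ≤ R) :
    v x + 2 * Real.log ‖x‖ ≤ M := by
  have h1 := kel_cont hv 0 1
  have h2 := kel_sub hG hsub 0 one_pos
  rw [kel0_dom] at h1 h2
  rw [← kel0_val hx]
  refine case1_up hG hc h1 h2 (R := R⁻¹) (by positivity) (fun y hy => ?_) _ ?_
  · have hy0 : y ≠ 0 := by rw [← norm_pos_iff, hy]; positivity
    have := kel0_val (v := v) (inversion_ne hy0 one_pos)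
    rw [inversion_inversion _ one_ne_zero] at this
    rw [this]
    apply hM
    rw [inv0_norm, hy, inv_inv]
  · rw [inv0_norm]
    have : 0 < ‖x‖ := norm_pos_iff.2 hx
    gcongr

lemma case1_growth {G : (Euc n → ℝ) → Prop} (hG : Ell G) {δ : ℝ} (hc : Case1 G δ) {v : Euc n → ℝ}
    {Ω : Set (Euc n)} (hv : ContinuousOn v Ω) (hsub : SubJ G Ω v) {x0 : Euc n} {R κ : ℝ} (hR : 0 < R)
    (hB : closedBall x0 R ⊆ Ω) (hκ : 0 < κ) (hb : ∀ y ∈ closedBall x0 R, v y ≤ v x0 + κ) (x : Euc n) (hx : x ∈ closedBall x0 R) :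
    v x ≤ v x0 + κ * (‖x - x0‖ / R) ^ δ := by
  have hδ := hc.1
  refine cmp_sub (K := closedBall x0 R) (φ := fun y => v x0 + κ * (‖y - x0‖ / R) ^ δ) (isCompact_closedBall x0 R)
    (hv.mono hB) ?_ hsub ?_ x hx
  · refine Continuous.continuousOn ?_
    refine continuous_const.add (continuous_const.mul (Continuous.rpow_const (by fun_prop) fun y => Or.inr hδ.le))
  · intro y hy
    by_cases hy0 : y = x0
    · left; rw [hy0, sub_self, norm_zero, zero_div, Real.zero_rpow hδ.ne']; simp
    by_cases hy1 : ‖y - x0‖ = R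
    · left; rw [hy1, div_self hR.ne', Real.one_rpow, mul_one]; exact hb y hy
    right
    have hyR : ‖y - x0‖ < R := lt_of_le_of_ne (by rw [← dist_eq_norm]; exact hy) hy1
    have hyp : 0 < ‖y - x0‖ := norm_pos_iff.2 (sub_ne_zero.2 hy0)
    refine ⟨mem_of_superset (isOpen_ball.mem_nhds (by rw [mem_ball, dist_eq_norm]; exact hyR)) ball_subset_closedBall, hB hy, ?_⟩
    set k := κ * Real.exp (-δ * Real.log R) with hk
    have hkp : 0 < k := by positivity
    have hj := (Jet.const (v x0) y).add ((radial_jet hy0 (peano_exp δ (Real.log ‖y - x0‖))).smul k)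
    set E := Real.exp (δ * Real.log ‖y - x0‖) with hE
    have hEp : 0 < E := Real.exp_pos _
    refine ⟨_, _, hj.congr_fun ?_, ?_⟩
    · filter_upwards [isOpen_compl_singleton.mem_nhds (show y ∈ ({x0}ᶜ : Set (Euc n)) from hy0)] with z hz
      have hzp : 0 < ‖z - x0‖ := norm_pos_iff.2 (sub_ne_zero.2 hz)
      rw [Real.rpow_def_of_pos (by positivity), hk, mul_assoc, ← Real.exp_add, Real.log_div hzp.ne' hR.ne']
      congr 3; ring
    · have key := case1_strict hG hc (Q := k * δ * E + (k * δ * E) ^ 2 / 2) (f2 := k * δ ^ 2 * E) (c := (‖y - x0‖ ^ 2)⁻¹)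
        (by positivity) (by have : 0 < δ * (k * δ * E) ^ 2 / 2 := by positivity
                            nlinarith) (by positivity) (unit_dir hy0)
      refine hG.mono _ _ key fun h => le_of_eq ?_
      simp only [Aq, zero_add, real_inner_smul_left, norm_smul, Real.norm_eq_abs, mul_pow, sq_abs]
      field_simp
      ring

end A15

section A16
variable {n : ℕ}
open EuclideanGeometry

lemma exists_orth (hn : 2 ≤ n) (x y : Euc n) {r : ℝ} (hr : 0 < r) :
    ∃ z : Euc n, ‖z‖ = r ∧ inner ℝ x z = 0 ∧ 0 ≤ inner ℝ z y := by
  obtain ⟨w, hw, hw0⟩ : ∃ w : Euc n, inner ℝ x w = 0 ∧ w ≠ 0 := by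
    by_contra hcon
    push Not at hcon
    have hinj : Function.Injective (innerSL ℝ x : Euc n →L[ℝ] ℝ).toLinearMap := by
      rw [← LinearMap.ker_eq_bot, LinearMap.ker_eq_bot']
      intro w hw
      exact hcon w hw
    have := LinearMap.finrank_le_finrank_of_injective hinj
    simp at this
    omega
  have hwp : 0 < ‖w‖ := norm_pos_iff.2 hw0
  have hzn : ‖(r / ‖w‖) • w‖ = r := by
    rw [norm_smul, Real.norm_of_nonneg (by positivity)]; field_simp
  have hzo : inner ℝ x ((r / ‖w‖) • w) = 0 := by rw [inner_smul_right, hw, mul_zero]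
  rcases le_total 0 (inner ℝ ((r / ‖w‖) • w) y) with h | h
  · exact ⟨_, hzn, hzo, h⟩
  · refine ⟨-((r / ‖w‖) • w), by rw [norm_neg, hzn], by rw [inner_neg_right, hzo, neg_zero], ?_⟩
    rw [inner_neg_left]; linarith

/-- Harnack type step. -/
lemma harnack_step {G : (Euc n → ℝ) → Prop} (hG : Ell G) {δ : ℝ} (hc : Case1 G δ) {v : Euc n → ℝ}
    (hv : ContinuousOn v {(0 : Euc n)}ᶜ) (hsub : SubJ G {(0 : Euc n)}ᶜ v) {r b : ℝ} (hr : 0 < r)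
    (hb : ∀ y, r / 2 ≤ ‖y‖ → v y ≤ b) {x x' : Euc n} (hx : 5 / 8 * r ≤ ‖x‖) (hx' : ‖x' - x‖ ≤ r / 16) :
    (1 - (1 / 2 : ℝ) ^ δ) * (b - v x) ≤ b - v x' := by
  have hδ := hc.1
  have hn : ∀ y ∈ closedBall x (r / 8), r / 2 ≤ ‖y‖ := by
    intro y hy
    rw [mem_closedBall, dist_eq_norm] at hy
    have := norm_sub_norm_le x y
    rw [norm_sub_rev] at this
    linarith
  have hx'B : x' ∈ closedBall x (r / 8) := by rw [mem_closedBall, dist_eq_norm]; linarith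
  have hbx : v x ≤ b := hb x (by linarith)
  have key : ∀ κ > 0, b - v x ≤ κ → v x' ≤ v x + κ * (1 / 2 : ℝ) ^ δ := by
    intro κ hκ hle
    have h1 := case1_growth hG hc hv hsub (x0 := x) (R := r / 8) (κ := κ) (by positivity)
      (fun y hy h0 => by
        have := hn y hy
        rw [mem_singleton_iff] at h0
        rw [h0, norm_zero] at this; linarith) hκ (fun y hy => by linarith [hb y (hn y hy)]) x' hx'B
    refine h1.trans ?_
    have h2 : ‖x' - x‖ / (r / 8) ≤ 1 / 2 := by rw [div_le_iff₀ (by positivity)]; linarith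
    gcongr
  have hlim : v x' ≤ v x + (b - v x) * (1 / 2 : ℝ) ^ δ := by
    have hT : Tendsto (fun η : ℝ => v x + (b - v x + η) * (1 / 2 : ℝ) ^ δ) (𝓝[>] 0)
        (𝓝 (v x + (b - v x + 0) * (1 / 2 : ℝ) ^ δ)) := by
      have hcc : Continuous (fun η : ℝ => v x + (b - v x + η) * (1 / 2 : ℝ) ^ δ) := by fun_prop
      exact (hcc.tendsto 0).mono_left nhdsWithin_le_nhds
    rw [add_zero] at hT
    refine ge_of_tendsto hT (eventually_nhdsWithin_of_forall fun η hη => ?_)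
    have hη : 0 < η := hη
    exact key _ (by linarith) (by linarith)
  linarith

lemma harnack_seg {G : (Euc n → ℝ) → Prop} (hG : Ell G) {δ : ℝ} (hc : Case1 G δ) {v : Euc n → ℝ}
    (hv : ContinuousOn v {(0 : Euc n)}ᶜ) (hsub : SubJ G {(0 : Euc n)}ᶜ v) {r b : ℝ} (hr : 0 < r)
    (hb : ∀ y, r / 2 ≤ ‖y‖ → v y ≤ b) {x z : Euc n} (hx : ‖x‖ = r) (hz : ‖z‖ = r) (hxz : 0 ≤ inner ℝ x z) :
    (1 - (1 / 2 : ℝ) ^ δ) ^ 32 * (b - v x) ≤ b - v z := by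
  have hδ := hc.1
  set θ := 1 - (1 / 2 : ℝ) ^ δ with hθ
  have hθ0 : 0 < θ := by
    have := Real.rpow_lt_one (show (0 : ℝ) ≤ 1 / 2 by norm_num) (by norm_num) hδ
    linarith
  have hd : ‖z - x‖ ≤ 2 * r := (norm_sub_le _ _).trans (by linarith)
  set X : ℕ → Euc n := fun k => x + ((k : ℝ) / 32) • (z - x) with hX
  have hXn : ∀ k ≤ 32, 5 / 8 * r ≤ ‖X k‖ := by
    intro k hk
    have hk' : (k : ℝ) ≤ 32 := by exact_mod_cast hk
    set s : ℝ := (k : ℝ) / 32 with hs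
    have hs0 : 0 ≤ s := by positivity
    have hs1 : s ≤ 1 := by rw [hs, div_le_one (by norm_num)]; exact hk'
    apply le_of_sq_le_sq _ (norm_nonneg _)
    have e : ‖X k‖ ^ 2 = (1 - s) ^ 2 * r ^ 2 + 2 * (s * (1 - s)) * inner ℝ x z + s ^ 2 * r ^ 2 := by
      have : X k = (1 - s) • x + s • z := by rw [hX]; simp only [← hs]; module
      rw [this, norm_add_sq_real, norm_smul, norm_smul, mul_pow, mul_pow, hx, hz, Real.norm_eq_abs, Real.norm_eq_abs,
        sq_abs, sq_abs, real_inner_smul_left, inner_smul_right]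
      ring
    rw [e]
    have h1 : 0 ≤ s * (1 - s) * inner ℝ x z := by
      have : 0 ≤ 1 - s := by linarith
      positivity
    have h2 : 1 / 2 * r ^ 2 ≤ ((1 - s) ^ 2 + s ^ 2) * r ^ 2 := by
      gcongr; nlinarith [sq_nonneg (2 * s - 1)]
    nlinarith [sq_nonneg r]
  have hstep : ∀ k ≤ 32, θ ^ k * (b - v x) ≤ b - v (X k) := by
    intro k
    induction k with
    | zero => intro _; simp [hX]
    | succ k ih =>
      intro hk
      have h1 := ih (by omega)
      have h2 := harnack_step hG hc hv hsub hr hb (hXn k (by omega)) (x' := X (k + 1)) (by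
        have : X (k + 1) - X k = (1 / 32 : ℝ) • (z - x) := by
          simp only [hX]; push_cast; module
        rw [this, norm_smul, Real.norm_of_nonneg (by norm_num)]
        linarith)
      rw [← hθ] at h2
      have h3 : θ * (θ ^ k * (b - v x)) ≤ θ * (b - v (X k)) := by gcongr
      calc θ ^ (k + 1) * (b - v x) = θ * (θ ^ k * (b - v x)) := by ring
        _ ≤ _ := h3.trans h2
  have := hstep 32 le_rfl
  have hX32 : X 32 = z := by rw [hX]; simp
  rwa [hX32] at this

lemma harnack (hn : 2 ≤ n) {G : (Euc n → ℝ) → Prop} (hG : Ell G) {δ : ℝ} (hc : Case1 G δ) {v : Euc n → ℝ}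
    (hv : ContinuousOn v {(0 : Euc n)}ᶜ) (hsub : SubJ G {(0 : Euc n)}ᶜ v) :
    ∃ γ > 0, ∀ r > 0, ∀ b, (∀ y, ‖y‖ = r / 2 → v y ≤ b) → ∀ x x' : Euc n, ‖x‖ = r → ‖x'‖ = r →
      γ * (b - v x) ≤ b - v x' := by
  have hδ := hc.1
  set θ := 1 - (1 / 2 : ℝ) ^ δ with hθ
  have hθ0 : 0 < θ := by
    have := Real.rpow_lt_one (show (0 : ℝ) ≤ 1 / 2 by norm_num) (by norm_num) hδ
    linarith
  refine ⟨θ ^ 32 * θ ^ 32, by positivity, fun r hr b hb x x' hx hx' => ?_⟩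
  have hb' : ∀ y, r / 2 ≤ ‖y‖ → v y ≤ b := fun y hy => case1_up hG hc hv hsub (by positivity) hb y hy
  obtain ⟨z, hz, h1, h2⟩ := exists_orth hn x x' hr
  have a1 := harnack_seg hG hc hv hsub hr hb' hx hz h1.ge
  have a2 := harnack_seg hG hc hv hsub hr hb' hz hx' h2
  rw [← hθ] at a1 a2
  calc θ ^ 32 * θ ^ 32 * (b - v x) = θ ^ 32 * (θ ^ 32 * (b - v x)) := by ring
    _ ≤ θ ^ 32 * (b - v z) := by gcongr
    _ ≤ _ := a2

lemma dich (hn : 2 ≤ n) {G : (Euc n → ℝ) → Prop} (hG : Ell G) {δ : ℝ} (hc : Case1 G δ) {v : Euc n → ℝ}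
    (hv : ContinuousOn v {(0 : Euc n)}ᶜ) (hsub : SubJ G {(0 : Euc n)}ᶜ v) :
    Tendsto v (𝓝[≠] 0) atTop ∨ ∃ M0, Tendsto v (𝓝[≠] 0) (𝓝 M0) ∧ ∀ x ≠ 0, v x ≤ M0 := by
  obtain ⟨γ, hγ, hH⟩ := harnack hn hG hc hv hsub
  have hmax : ∀ r : ℝ, 0 < r → ∃ x : Euc n, ‖x‖ = r ∧ ∀ y, ‖y‖ = r → v y ≤ v x := by
    intro r hr
    obtain ⟨x1, hx1, -⟩ := exists_orth hn (0 : Euc n) 0 hr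
    have hne : (sphere (0 : Euc n) r).Nonempty := ⟨x1, by simpa using hx1⟩
    have hsub : sphere (0 : Euc n) r ⊆ {(0 : Euc n)}ᶜ := by
      intro y hy h0
      rw [mem_singleton_iff] at h0
      rw [h0, Metric.mem_sphere, dist_self] at hy
      linarith
    obtain ⟨x, hx, h⟩ := (isCompact_sphere (0 : Euc n) r).exists_isMaxOn hne (hv.mono hsub)
    exact ⟨x, by simpa using hx, fun y hy => h (by simpa using hy : y ∈ sphere (0 : Euc n) r)⟩
  choose! X hXn hX using hmax
  set M : ℝ → ℝ := fun r => v (X r) with hM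
  have hMX : ∀ r, 0 < r → ∀ y, ‖y‖ = r → v y ≤ M r := fun r hr => hX r hr
  have hanti : ∀ r r', 0 < r → r ≤ r' → M r' ≤ M r := by
    intro r r' hr hrr
    exact case1_up hG hc hv hsub hr (hMX r hr) (X r') (by rw [hXn r' (hr.trans_le hrr)]; exact hrr)
  have hup : ∀ r, 0 < r → ∀ y, r ≤ ‖y‖ → v y ≤ M r := fun r hr y hy =>
    case1_up hG hc hv hsub hr (hMX r hr) y hy
  have hhalf : ∀ r, 0 < r → M (r / 2) - M r ≤ 2 * Real.log 2 := by
    intro r hr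
    have hX2 := hXn (r / 2) (by positivity)
    have h1 := case1_down hG hc hv hsub (R := r) (M := M r + 2 * Real.log r) hr (fun y hy => by
      have := hMX r hr y hy
      rw [hy]; linarith) (X (r / 2)) (by rw [← norm_pos_iff, hX2]; positivity) (by rw [hX2]; linarith)
    rw [hX2, Real.log_div hr.ne' two_ne_zero] at h1
    simp only [hM] at h1 ⊢
    linarith
  have hlow : ∀ x, x ≠ 0 → M (‖x‖ / 2) - (M (‖x‖ / 2) - M ‖x‖) / γ ≤ v x := by
    intro x hx
    have hxp : 0 < ‖x‖ := norm_pos_iff.2 hx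
    have := hH ‖x‖ hxp (M (‖x‖ / 2)) (hMX _ (by positivity)) x (X ‖x‖) rfl (hXn _ hxp)
    have h2 : M (‖x‖ / 2) - v x ≤ (M (‖x‖ / 2) - M ‖x‖) / γ := by
      rw [le_div_iff₀ hγ]; linarith
    linarith
  have hT0 : Tendsto (fun x : Euc n => ‖x‖) (𝓝[≠] 0) (𝓝[>] 0) := tendsto_norm_nhdsNE_zero
  have hT1 : Tendsto (fun x : Euc n => ‖x‖ / 2) (𝓝[≠] 0) (𝓝[>] 0) := by
    refine tendsto_nhdsWithin_iff.2 ⟨?_, ?_⟩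
    · have : Tendsto (fun x : Euc n => ‖x‖ / 2) (𝓝[≠] 0) (𝓝 (0 / 2)) :=
        (hT0.mono_right nhdsWithin_le_nhds).div_const 2
      simpa using this
    · filter_upwards [self_mem_nhdsWithin] with x hx
      have : 0 < ‖x‖ := norm_pos_iff.2 hx
      simp only [mem_Ioi]; positivity
  by_cases hbd : ∃ B, ∀ r, 0 < r → M r ≤ B
  · right
    obtain ⟨B, hB⟩ := hbd
    set M0 := sSup (M '' Ioi 0) with hM0
    have hbdd : BddAbove (M '' Ioi 0) := ⟨B, by rintro _ ⟨r, hr, rfl⟩; exact hB r hr⟩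
    have hle : ∀ r, 0 < r → M r ≤ M0 := fun r hr => le_csSup hbdd ⟨r, hr, rfl⟩
    have hMt : Tendsto M (𝓝[>] 0) (𝓝 M0) := by
      rw [tendsto_order]
      refine ⟨fun a ha => ?_, fun a ha => ?_⟩
      · obtain ⟨_, ⟨r, hr, rfl⟩, hra⟩ := exists_lt_of_lt_csSup (s := M '' Ioi 0) ⟨_, 1, by simp, rfl⟩ ha
        have hr : 0 < r := hr
        filter_upwards [self_mem_nhdsWithin, nhdsWithin_le_nhds (gt_mem_nhds hr)] with t ht htr
        exact hra.trans_le (hanti t r ht htr.le)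
      · filter_upwards [self_mem_nhdsWithin] with t ht
        exact (hle t ht).trans_lt ha
    have hvle : ∀ x ≠ 0, v x ≤ M0 := fun x hx =>
      (hMX ‖x‖ (norm_pos_iff.2 hx) x rfl).trans (hle _ (norm_pos_iff.2 hx))
    refine ⟨M0, ?_, hvle⟩
    have hlo : Tendsto (fun x : Euc n => M (‖x‖ / 2) - (M (‖x‖ / 2) - M ‖x‖) / γ) (𝓝[≠] 0) (𝓝 (M0 - (M0 - M0) / γ)) :=
      (hMt.comp hT1).sub (((hMt.comp hT1).sub (hMt.comp hT0)).div_const γ)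
    rw [sub_self, zero_div, sub_zero] at hlo
    refine tendsto_of_tendsto_of_tendsto_of_le_of_le' hlo tendsto_const_nhds ?_ ?_
    · filter_upwards [self_mem_nhdsWithin] with x hx using hlow x hx
    · filter_upwards [self_mem_nhdsWithin] with x hx using hvle x hx
  · left
    push Not at hbd
    have hMt : Tendsto M (𝓝[>] 0) atTop := by
      rw [Filter.tendsto_atTop]
      intro B
      obtain ⟨r, hr, hrB⟩ := hbd B
      filter_upwards [self_mem_nhdsWithin, nhdsWithin_le_nhds (gt_mem_nhds hr)] with t ht htr
      exact hrB.le.trans (hanti t r ht htr.le)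
    have hlo : Tendsto (fun x : Euc n => M (‖x‖ / 2) + -(2 * Real.log 2 / γ)) (𝓝[≠] 0) atTop :=
      tendsto_atTop_add_const_right _ _ (hMt.comp hT1)
    refine tendsto_atTop_mono' _ ?_ hlo
    filter_upwards [self_mem_nhdsWithin] with x hx
    have h1 := hlow x hx
    have h2 : (M (‖x‖ / 2) - M ‖x‖) / γ ≤ 2 * Real.log 2 / γ := by
      have := hhalf ‖x‖ (norm_pos_iff.2 hx)
      gcongr
    linarith

/-- The dichotomy gives the needed behaviour at an isolated singularity. -/
lemma sing_of_dich (hn : 0 < n) {u w h : Euc n → ℝ} {s p : Euc n} {q : Euc n → ℝ} {τ : Euc n → Euc n}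
    (hτ : Tendsto τ (𝓝[≠] s) (𝓝[≠] 0)) (hu : ∀ᶠ z in 𝓝[≠] s, u z = w (τ z) + h z) (hj : Jet h s p q)
    (hh : ContinuousAt h s)
    (hw : Tendsto w (𝓝[≠] 0) atTop ∨ ∃ M0, Tendsto w (𝓝[≠] 0) (𝓝 M0) ∧ ∀ x ≠ 0, w x ≤ M0) :
    (∃ m, ∀ᶠ z in 𝓝[≠] s, m ≤ u z) ∧ NCs u s := by
  have : Nonempty (Fin n) := ⟨⟨0, hn⟩⟩
  have hh' : Tendsto h (𝓝[≠] s) (𝓝 (h s)) := hh.mono_left nhdsWithin_le_nhds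
  rcases hw with hw | ⟨M0, hw, hle⟩
  · have hT : Tendsto u (𝓝[≠] s) atTop := by
      have : Tendsto (fun z => w (τ z) + h z) (𝓝[≠] s) atTop := (hw.comp hτ).atTop_add hh'
      exact this.congr' (hu.mono fun z hz => hz.symm)
    refine ⟨⟨0, hT.eventually (eventually_ge_atTop 0)⟩, fun m P e C he hcone => ⟨m + 1, by linarith, hT.eventually (eventually_ge_atTop _)⟩⟩
  · have hT : Tendsto u (𝓝[≠] s) (𝓝 (M0 + h s)) :=
      ((hw.comp hτ).add hh').congr' (hu.mono fun z hz => hz.symm)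
    refine ⟨⟨M0 + h s - 1, hT.eventually (le_mem_nhds (by linarith))⟩, fun m P e C he hcone => ?_⟩
    have hcT : Tendsto (fun z => m + inner ℝ P (z - s) + e * ‖z - s‖ - C * ‖z - s‖ ^ 2) (𝓝[≠] s) (𝓝 m) := by
      have hcc : Continuous (fun z => m + inner ℝ P (z - s) + e * ‖z - s‖ - C * ‖z - s‖ ^ 2) := by fun_prop
      have := hcc.tendsto s
      simp only [sub_self, inner_zero_right, norm_zero, mul_zero, add_zero, ne_eq, OfNat.ofNat_ne_zero, not_false_eq_true, zero_pow, sub_zero] at this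
      exact this.mono_left nhdsWithin_le_nhds
    have hm : m ≤ M0 + h s := le_of_tendsto_of_tendsto hcT hT hcone
    rcases hm.lt_or_eq with hlt | heq
    · exact ⟨(m + (M0 + h s)) / 2, by linarith, hT.eventually (le_mem_nhds (by linarith))⟩
    · exfalso
      obtain ⟨B, hB0, hB⟩ := hj.1.bound
      have hup : UpJet h s p q := UpJet.of_touch hj rfl (Eventually.of_forall fun _ => le_rfl)
      have h1 := hup 1 one_pos
      have ht : Tendsto (fun z => z - s) (𝓝 s) (𝓝 0) := by
        have hcc : Continuous (fun z : Euc n => z - s) := by fun_prop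
        have := hcc.tendsto s
        rwa [sub_self] at this
      have h2 := (ht.eventually h1).filter_mono (nhdsWithin_le_nhds (s := {s}ᶜ))
      refine no_cone_const hn (s := s) (P := P - p) (C := C + B / 2 + 1) he ?_
      have h3 : ∀ᶠ z in 𝓝[≠] s, τ z ≠ 0 := hτ.eventually self_mem_nhdsWithin
      filter_upwards [hcone, hu, h2, h3] with z a1 a2 a3 a4
      rw [add_sub_cancel] at a3
      have a5 := hle _ a4
      have a6 := (le_abs_self _).trans (hB (z - s))
      rw [inner_sub_left]
      nlinarith

end A16

section A17
variable {n : ℕ}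
open EuclideanGeometry

lemma kel_jet_log {x z : Euc n} (hx : x ≠ z) (a : ℝ) :
    (∃ p q, Jet (fun y => a + -2 * Real.log ‖y - z‖) x p q) ∧
      ContinuousAt (fun y => a + -2 * Real.log ‖y - z‖) x := by
  refine ⟨⟨_, _, (Jet.const a x).add ((Jet.log_norm hx).smul (-2))⟩, ?_⟩
  refine continuousAt_const.add (continuousAt_const.mul (ContinuousAt.log (by fun_prop) ?_))
  exact norm_ne_zero_iff.2 (sub_ne_zero.2 hx)

lemma case1_hsing (hn : 2 ≤ n) {G : (Euc n → ℝ) → Prop} (hG : Ell G) {δ : ℝ} (hc : Case1 G δ) {v : Euc n → ℝ}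
    (hv : ContinuousOn v {(0 : Euc n)}ᶜ) (hsub : SubJ G {(0 : Euc n)}ᶜ v) (c : Euc n) (l : ℝ) (hl : 0 < l)
    (hlc : l < ‖c‖) (s : Euc n) (hs : s ∈ ({c, inversion c l 0} : Set (Euc n))) :
    (∃ m, ∀ᶠ z in 𝓝[≠] s, m ≤ Kel c l v z) ∧ NCs (Kel c l v) s := by
  have hc0 : (0 : Euc n) ≠ c := by
    rintro rfl; rw [norm_zero] at hlc; linarith
  have hcp : 0 < ‖c‖ := hl.trans hlc
  set o := inversion c l 0 with ho
  have hoc : o ≠ c := inversion_ne hc0 hl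
  have hTo : inversion c l o = 0 := inversion_inversion c hl.ne' 0
  have hT0 : ∀ z, z ≠ o → inversion c l z ≠ 0 := by
    intro z hz h0
    apply hz
    rw [ho, ← h0, inversion_inversion c hl.ne']
  simp only [mem_insert_iff, mem_singleton_iff] at hs
  rcases hs with rfl | rfl
  · -- the center
    obtain ⟨⟨p, q, hj⟩, hcont⟩ := kel_jet_log hoc.symm (2 * Real.log l - 2 * Real.log ‖s‖)
    have hw1 := kel_cont hv 0 1
    have hw2 := kel_sub hG hsub 0 one_pos
    rw [kel0_dom] at hw1 hw2
    have hno : ∀ᶠ z in 𝓝[≠] s, z ≠ o :=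
      nhdsWithin_le_nhds (isOpen_compl_singleton.mem_nhds (show s ∈ ({o}ᶜ : Set (Euc n)) from hoc.symm))
    have hnorm : ∀ z, z ≠ s → z ≠ o → ‖inversion s l z‖ * ‖z - s‖ = ‖s‖ * ‖z - o‖ := by
      intro z hz hzo
      have h1 := dist_inversion_inversion hz hoc l
      rw [hTo, dist_zero_right] at h1
      have h2 : dist o s = l ^ 2 / ‖s‖ := by
        rw [ho, dist_inversion_center, dist_zero_left]
      have hzp : 0 < dist z s := dist_pos.2 hz
      rw [h1, h2, ← dist_eq_norm, ← dist_eq_norm]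
      field_simp
    refine sing_of_dich (by omega) (τ := fun z => inversion (0 : Euc n) 1 (inversion s l z)) (w := Kel 0 1 v) ?_ ?_ hj hcont
      (dich hn hG hc hw1 hw2)
    · refine tendsto_nhdsWithin_iff.2 ⟨?_, ?_⟩
      · rw [tendsto_zero_iff_norm_tendsto_zero]
        have hlim : Tendsto (fun z => ‖z - s‖ / (‖s‖ * ‖z - o‖)) (𝓝[≠] s) (𝓝 (‖s - s‖ / (‖s‖ * ‖s - o‖))) := by
          have : ContinuousAt (fun z => ‖z - s‖ / (‖s‖ * ‖z - o‖)) s := by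
            refine ContinuousAt.div (by fun_prop) (by fun_prop) ?_
            exact mul_ne_zero hcp.ne' (norm_ne_zero_iff.2 (sub_ne_zero.2 hoc.symm))
          exact this.tendsto.mono_left nhdsWithin_le_nhds
        rw [sub_self, norm_zero, zero_div] at hlim
        refine hlim.congr' ?_
        filter_upwards [self_mem_nhdsWithin, hno] with z hz hzo
        have hzp : 0 < ‖z - s‖ := norm_pos_iff.2 (sub_ne_zero.2 hz)
        have hip : 0 < ‖inversion s l z‖ := norm_pos_iff.2 (hT0 z hzo)
        rw [inv0_norm, ← hnorm z hz hzo]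
        field_simp
      · filter_upwards [hno] with z hzo
        exact inversion_ne (hT0 z hzo) one_pos
    · filter_upwards [self_mem_nhdsWithin, hno] with z hz hzo
      have hzp : 0 < ‖z - s‖ := norm_pos_iff.2 (sub_ne_zero.2 hz)
      have hzop : 0 < ‖z - o‖ := norm_pos_iff.2 (sub_ne_zero.2 hzo)
      have hip : 0 < ‖inversion s l z‖ := norm_pos_iff.2 (hT0 z hzo)
      have hlog := congrArg Real.log (hnorm z hz hzo)
      rw [Real.log_mul hip.ne' hzp.ne', Real.log_mul hcp.ne' hzop.ne'] at hlog
      rw [kel0_val (hT0 z hzo)]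
      simp only [Kel]
      linarith
  · obtain ⟨⟨p, q, hj⟩, hcont⟩ := kel_jet_log hoc (2 * Real.log l)
    refine sing_of_dich (by omega) (τ := inversion c l) (w := v) ?_ ?_ hj hcont (dich hn hG hc hv hsub)
    · refine tendsto_nhdsWithin_iff.2 ⟨?_, ?_⟩
      · have := inversion_tendsto hoc (l := l)
        rw [hTo] at this
        exact this.mono_left nhdsWithin_le_nhds
      · filter_upwards [self_mem_nhdsWithin] with z hz using hT0 z hz
    · refine Eventually.of_forall fun z => ?_
      simp only [Kel]; ring

lemma case2_hsing {G : (Euc n → ℝ) → Prop} (hG : Ell G) {δ : ℝ} (hc : Case2 G δ) {v : Euc n → ℝ}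
    (hv : ContinuousOn v {(0 : Euc n)}ᶜ) (hsup : SupJ G {(0 : Euc n)}ᶜ v) (c : Euc n) (l : ℝ) (hl : 0 < l)
    (s : Euc n) :
    (∃ m, ∀ᶠ z in 𝓝[≠] s, m ≤ Kel c l v z) ∧ NCs (Kel c l v) s := by
  have hΩ : {y | y ≠ c ∧ inversion c l y ∈ ({(0 : Euc n)}ᶜ : Set (Euc n))} ∈ 𝓝[≠] s := by
    have hne : ∀ a : Euc n, ∀ᶠ z in 𝓝[≠] s, z ≠ a := by
      intro a
      by_cases h : s = a
      · rw [← h]; exact self_mem_nhdsWithin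
      · exact nhdsWithin_le_nhds (isOpen_compl_singleton.mem_nhds (show s ∈ ({a}ᶜ : Set (Euc n)) from h))
    filter_upwards [hne c, hne (inversion c l 0)] with z h1 h2
    exact kel_dom hl (by simp [h1, h2])
  exact ⟨case2_low hG hc hΩ (kel_cont hv c l) (kel_sup hG hsup c hl),
    case2_NC hG hc hΩ (kel_cont hv c l) (kel_sup hG hsup c hl)⟩

end A17

/-- **Radial symmetry of entire solutions away from a point** (Theorem 1.4):
if `Γ` satisfies condition (C) and `λ* ∉ ∂Γ`, then every continuous viscosity solution
of `λ(A[v]) ∈ ∂Γ` in `ℝⁿ ∖ {0}` is radially symmetric and non-increasing in the radial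
direction: `v x ≥ v y` whenever `0 < |x| ≤ |y|`. -/
theorem radial_symmetry_punctured
    {n : ℕ} (hn : 2 ≤ n) (Γ : Set (Fin n → ℝ)) (hΓ : CondC Γ)
    (hstar : lamStar n ∉ frontier Γ)
    (v : Euc n → ℝ) (hv : ContinuousOn v {(0 : Euc n)}ᶜ)
    (hsup : Supersol Γ {(0 : Euc n)}ᶜ v) (hsub : Subsol Γ {(0 : Euc n)}ᶜ v) :
    ∀ x y : Euc n, x ≠ 0 → y ≠ 0 → ‖x‖ ≤ ‖y‖ → v y ≤ v x := by
  have hG := GG_ell hΓ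
  have h1 := supJ_of_supersol hΓ hsup
  have h2 := subJ_of_subsol hΓ hsub
  refine reduction (by omega) hG (GG_pos hΓ) hv h1 h2 ?_
  rcases star_cases hn hΓ hstar with ⟨δ, hc⟩ | ⟨δ, hc⟩
  · exact fun c l hl hlc s hs => case1_hsing hn hG hc hv h2 c l hl hlc s hs
  · exact fun c l hl _ s _ => case2_hsing hG hc hv h1 c l hl s
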